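/- Let Γ be a piecewise Dini-smooth Jordan curve with l ≥ 1 corners z_1,…,z_l and associated exterior angles λ_1π,…,λ_lπ, and set Λ_k := max{λ_k, 2−λ_k} for k = 1,…,l. Then limsup_{n→∞} ‖F_n‖_Γ ≤ max_{1≤k≤l} Λ_k, where F_n is the n-th Faber polynomial of Γ. -/

import Mathlib

open Filter Topology MeasureTheory Set

noncomputable section

/-- The supremum norm of `f` over the set `Γ`. -/
def supNorm (Γ : Set ℂ) (f : ℂ → ℂ) : ℝ := sSup ((fun z => ‖f z‖) '' Γ)

/-- `Γ` is a Jordan curve: the image of a continuous `2π`-periodic map `ℝ → ℂ` that is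
injective modulo the period. -/
def IsJordanCurve (Γ : Set ℂ) : Prop :=
  ∃ f : ℝ → ℂ, Continuous f ∧ Function.Periodic f (2 * Real.pi) ∧
    (∀ s t : ℝ, f s = f t → ∃ n : ℤ, t - s = n * (2 * Real.pi)) ∧
    Γ = Set.range f

/-- The modulus of continuity of `g` on the interval `[a, b]`, evaluated at `t`. -/
def modCont (g : ℝ → ℂ) (a b t : ℝ) : ℝ :=
  sSup {d : ℝ | ∃ s₁ ∈ Set.Icc a b, ∃ s₂ ∈ Set.Icc a b, |s₁ - s₂| ≤ t ∧ d = ‖g s₁ - g s₂‖}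

/-- `γ`, with derivative `γ'`, parametrizes a Dini-smooth Jordan arc on `[a, b]`:
`γ'` is continuous and nonvanishing on `[a, b]` and its modulus of continuity `ω`
satisfies `∫₀¹ ω(t)/t dt < ∞`. -/
structure IsDiniSmoothArc (γ γ' : ℝ → ℂ) (a b : ℝ) : Prop where
  lt : a < b
  inj : Set.InjOn γ (Set.Icc a b)
  deriv : ∀ s ∈ Set.Icc a b, HasDerivWithinAt γ (γ' s) (Set.Icc a b) s
  cont : ContinuousOn γ' (Set.Icc a b)
  nonzero : ∀ s ∈ Set.Icc a b, γ' s ≠ 0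
  dini : MeasureTheory.IntegrableOn (fun t => modCont γ' a b t / t) (Set.Ioc (0 : ℝ) 1)

/-- A piecewise Dini-smooth Jordan curve: a Jordan curve which is the union of finitely many
Dini-smooth arcs. -/
def IsPiecewiseDiniSmoothJordanCurve (Γ : Set ℂ) : Prop :=
  IsJordanCurve Γ ∧
    ∃ (N : ℕ) (γ γ' : Fin N → ℝ → ℂ) (a b : Fin N → ℝ),
      (∀ i, IsDiniSmoothArc (γ i) (γ' i) (a i) (b i)) ∧
      Γ = ⋃ i, γ i '' Set.Icc (a i) (b i)

/-- The unbounded connected component `Ω` of the complement of `Γ` (in the finite plane). -/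
def exteriorDomain (Γ : Set ℂ) : Set ℂ :=
  {z | z ∈ Γᶜ ∧ ¬ Bornology.IsBounded (connectedComponentIn Γᶜ z)}

/-- `φ` is the canonical exterior conformal map of `Γ` onto `{|w| > 1}` with `φ(∞) = ∞` and
`φ(z)/z → c⁻¹` as `z → ∞`; the constant `c` is then the logarithmic capacity of `Γ`. -/
structure IsExteriorMap (Γ : Set ℂ) (φ : ℂ → ℂ) (c : ℝ) : Prop where
  cpos : 0 < c
  diff : DifferentiableOn ℂ φ (exteriorDomain Γ)
  bij : Set.BijOn φ (exteriorDomain Γ) {w : ℂ | 1 < ‖w‖}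
  tendsto : Filter.Tendsto (fun z => φ z / z)
    (Bornology.cobounded ℂ ⊓ Filter.principal (exteriorDomain Γ)) (nhds ((c : ℂ)⁻¹))

/-- `F` is the `n`-th Faber polynomial of `Γ`: the unique polynomial with
`φ(z)^n − F(z) → 0` as `z → ∞` in the exterior domain. -/
def IsFaberPoly (Γ : Set ℂ) (φ : ℂ → ℂ) (n : ℕ) (F : Polynomial ℂ) : Prop :=
  Filter.Tendsto (fun z => φ z ^ n - F.eval z)
    (Bornology.cobounded ℂ ⊓ Filter.principal (exteriorDomain Γ)) (nhds 0)

/-- `ψ` is the inverse of `φ`, extended to a homeomorphism of `{|w| ≥ 1}` onto the closure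
of the exterior domain; on the unit circle it parametrizes `Γ`. -/
structure IsExteriorParam (Γ : Set ℂ) (φ ψ : ℂ → ℂ) : Prop where
  cont : ContinuousOn ψ {w : ℂ | 1 ≤ ‖w‖}
  inj : Set.InjOn ψ {w : ℂ | 1 ≤ ‖w‖}
  inv : ∀ w : ℂ, 1 < ‖w‖ → ψ w ∈ exteriorDomain Γ ∧ φ (ψ w) = w
  boundary : ∀ w : ℂ, ‖w‖ = 1 → ψ w ∈ Γ
  boundary_surj : ∀ z ∈ Γ, ∃ w : ℂ, ‖w‖ = 1 ∧ ψ w = z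

/-- `T` is the `n`-th Chebyshev polynomial of `Γ`: the monic polynomial of degree `n`
minimizing the supremum norm over `Γ`. -/
def IsChebyshevPoly (Γ : Set ℂ) (n : ℕ) (T : Polynomial ℂ) : Prop :=
  T.Monic ∧ T.natDegree = n ∧
    ∀ P : Polynomial ℂ, P.Monic → P.natDegree = n →
      supNorm Γ (fun z => T.eval z) ≤ supNorm Γ (fun z => P.eval z)

/-- `v` is a secant-argument function of `Γ = ψ(unit circle)` at `θ` (relative to `α` with
`α < θ < α + 2π`): a bounded-variation branch of `t ↦ arg (ψ(e^{it}) − ψ(e^{iθ}))` on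
`[α, α + 2π]`, continuous on `[α, θ)` and on `(θ, α + 2π]`, normalized by `v θ = v(θ+)`
and by requiring the jump `v(θ+) − v(θ−)` to lie in `[0, 2π]`. -/
structure IsSecantArg (ψ : ℂ → ℂ) (θ α : ℝ) (v : ℝ → ℝ) : Prop where
  hα : α < θ
  hθ : θ < α + 2 * Real.pi
  bv : BoundedVariationOn v (Set.Icc α (α + 2 * Real.pi))
  contBefore : ContinuousOn v (Set.Ico α θ)
  contAfter : ContinuousOn v (Set.Ioc θ (α + 2 * Real.pi))
  rightCont : ContinuousWithinAt v (Set.Ici θ) θ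
  jump_mem : ∃ L : ℝ, Filter.Tendsto v (nhdsWithin θ (Set.Iio θ)) (nhds L) ∧
    v θ - L ∈ Set.Icc 0 (2 * Real.pi)
  branch : ∀ t ∈ Set.Icc α (α + 2 * Real.pi), t ≠ θ →
    Complex.exp (Complex.I * (v t : ℂ))
      = (ψ (Complex.exp (Complex.I * (t : ℂ))) - ψ (Complex.exp (Complex.I * (θ : ℂ))))
        / ((‖ψ (Complex.exp (Complex.I * (t : ℂ))) - ψ (Complex.exp (Complex.I * (θ : ℂ)))‖ : ℂ))

/-- The exterior angle of `Γ = ψ(unit circle)` at the boundary point `ψ(e^{iθ})` equals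
`lam * π`, expressed through the jump `v(θ+) − v(θ−) = lam * π` of a secant-argument
function at `θ`. -/
def HasExteriorAngleAt (ψ : ℂ → ℂ) (θ lam : ℝ) : Prop :=
  ∃ (α : ℝ) (v : ℝ → ℝ), IsSecantArg ψ θ α v ∧
    Filter.Tendsto v (nhdsWithin θ (Set.Iio θ)) (nhds (v θ - lam * Real.pi))

/-- The set `Θ_Γ = {θ_k + 2πj}` of corner parameters modulo `2π`. -/
def cornerSet {l : ℕ} (θk : Fin l → ℝ) : Set ℝ :=
  {x | ∃ (k : Fin l) (j : ℤ), x = θk k + j * (2 * Real.pi)}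

/-- `(μp, μn)` realizes the Lebesgue–Stieltjes (signed) measure `dv` of `v` on `(α, β]`:
both are finite measures and `μp − μn` has the increments of `v`. -/
structure IsLSPair (v : ℝ → ℝ) (α β : ℝ) (μp μn : MeasureTheory.Measure ℝ) : Prop where
  finp : MeasureTheory.IsFiniteMeasure μp
  finn : MeasureTheory.IsFiniteMeasure μn
  incr : ∀ s t : ℝ, α ≤ s → s ≤ t → t ≤ β →
    (μp (Set.Ioc s t)).toReal - (μn (Set.Ioc s t)).toReal = v t - v s

/-!
Let `E(t) = ψ(e^{it})` be the boundary curve. For `z` inside `Γ`, Cauchy's theorem in the exterior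
domain gives `2πi F_n(z) = ∫ e^{int} dE/(E - z)` and `0 = ∫ e^{-int} dE/(E - z)` for `n ≥ 1`.
Subtracting the complex conjugate of the second identity from the first turns the integrand into
`2i e^{int} Im (dE/(E - z))`, so any part of the curve contributes at most twice the variation of
`arg (E - z)` on it. This is applied to two short arcs of `Γ` meeting at a point `z₀` near `z`; the
remaining arc stays away from `z`, and its contribution vanishes as `n → ∞` by a Riemann–Lebesgue
argument that needs no smoothness of `ψ` on the circle.

A short Dini-smooth arc is so close to a segment that, seen from any point `z` off the arc,
`arg (E - z)` is almost monotone along it and varies by at most about `π`. If the two arcs are seen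
from `z` under the signed angles `K₀` and `K₁`, then `K₀ + K₁` is close to the exterior angle `λπ`
at `z₀`, so `|K₀| + |K₁|` is at most about `π + |λπ - π| = π max {λ, 2 - λ}`, which bounds
`π |F_n(z)|`. The bound passes to `Γ`, every point of which is a limit of interior points, and
compactness of `Γ` makes it uniform.
-/

open scoped ComplexConjugate

/-! ### Dini-smooth arcs seen from a point -/

lemma norm_sub_sub_smul_le {F : Type*} [NormedAddCommGroup F] [NormedSpace ℝ F]
    {γ γ' : ℝ → F} {S : Set ℝ} {s₀ s C : ℝ} (hS : uIcc s₀ s ⊆ S)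
    (hd : ∀ t ∈ S, HasDerivWithinAt γ (γ' t) S t)
    (hC : ∀ t ∈ uIcc s₀ s, ‖γ' t - γ' s₀‖ ≤ C) :
    ‖γ s - γ s₀ - (s - s₀) • γ' s₀‖ ≤ C * |s - s₀| := by
  have hderiv : ∀ t ∈ uIcc s₀ s, HasDerivWithinAt (fun t => γ t - t • γ' s₀) (γ' t - γ' s₀)
      (uIcc s₀ s) t := fun t ht => by
    have h := ((hasDerivWithinAt_id t (uIcc s₀ s)).smul_const (γ' s₀))
    rw [one_smul] at h
    exact ((hd t (hS ht)).mono hS).sub h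
  have h := (convex_uIcc s₀ s).norm_image_sub_le_of_norm_hasDerivWithin_le hderiv hC
    left_mem_uIcc right_mem_uIcc
  rw [Real.norm_eq_abs] at h
  convert h using 2
  rw [sub_smul]
  abel

lemma norm_add_smul_of_re_nonneg {y p : ℂ} {x : ℝ} (h : 0 ≤ x * (y * conj p).re) :
    ‖y‖ ≤ ‖y + x • p‖ ∧ ‖p‖ * |x| ≤ ‖y + x • p‖ := by
  have key : ‖y + x • p‖ ^ 2 = ‖y‖ ^ 2 + (‖p‖ * |x|) ^ 2 + 2 * (x * (y * conj p).re) := by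
    rw [mul_pow, sq_abs]
    simp only [← Complex.normSq_eq_norm_sq, Complex.normSq_apply, Complex.real_smul,
      Complex.add_re, Complex.add_im, Complex.mul_re, Complex.mul_im, Complex.ofReal_re,
      Complex.ofReal_im, Complex.conj_re, Complex.conj_im]
    ring
  constructor <;> refine le_of_sq_le_sq ?_ (norm_nonneg _) <;> nlinarith [sq_nonneg (‖p‖ * |x|)]

lemma norm_add_div_add_sub_div_le {p e v r : ℂ} {x W : ℝ} (hp : p ≠ 0) (hx : x ≠ 0)
    (hv : ‖p‖ * |x| ≤ ‖v‖) (hr : ‖r‖ ≤ ‖v‖ / 2) (hrW : ‖r‖ ≤ W * |x|) (he : ‖e‖ ≤ W) :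
    ‖(p + e) / (v + r) - p / v‖ ≤ 4 / ‖p‖ * (W / |x|) := by
  have hpx : 0 < ‖p‖ * |x| := mul_pos (norm_pos_iff.2 hp) (abs_pos.2 hx)
  have hv0 : 0 < ‖v‖ := hpx.trans_le hv
  have hW : 0 ≤ W := (norm_nonneg e).trans he
  have hvr : ‖v‖ / 2 ≤ ‖v + r‖ := by linarith [norm_sub_le_norm_add v r]
  have hvr0 : v + r ≠ 0 := norm_pos_iff.1 ((half_pos hv0).trans_le hvr)
  have hnum : ‖e * v - p * r‖ ≤ 2 * W * ‖v‖ := calc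
    _ ≤ ‖e‖ * ‖v‖ + ‖p‖ * ‖r‖ := by simpa only [norm_mul] using norm_sub_le (e * v) (p * r)
    _ ≤ W * ‖v‖ + ‖p‖ * (W * |x|) := by gcongr
    _ = W * ‖v‖ + W * (‖p‖ * |x|) := by ring
    _ ≤ W * ‖v‖ + W * ‖v‖ := by gcongr
    _ = 2 * W * ‖v‖ := by ring
  rw [div_sub_div _ _ hvr0 (norm_pos_iff.1 hv0), norm_div, norm_mul]
  calc _ = ‖e * v - p * r‖ / (‖v + r‖ * ‖v‖) := by ring_nf
    _ ≤ 2 * W * ‖v‖ / (‖v‖ / 2 * ‖v‖) := by gcongr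
    _ = 4 * W / ‖v‖ := by field_simp; ring
    _ ≤ 4 * W / (‖p‖ * |x|) := by gcongr
    _ = 4 / ‖p‖ * (W / |x|) := by field_simp

lemma im_div_add_smul (y p : ℂ) (s : ℝ) :
    (p / (y + s • p)).im = (p * conj y).im * (‖y + s • p‖ ^ 2)⁻¹ := by
  rw [div_eq_mul_inv, Complex.inv_def, ← mul_assoc, Complex.im_mul_ofReal,
    Complex.normSq_eq_norm_sq]
  congr 1
  simp only [Complex.real_smul, map_add, map_mul, Complex.conj_ofReal, Complex.mul_im,
    Complex.add_re, Complex.add_im, Complex.conj_re, Complex.conj_im, Complex.mul_re,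
    Complex.ofReal_re, Complex.ofReal_im]
  ring

lemma hasDerivAt_arctan_line {y p : ℂ} (h : (p * conj y).im ≠ 0) (s : ℝ) :
    HasDerivAt (fun s : ℝ => Real.arctan ((‖p‖ ^ 2 * s + (p * conj y).re) / (p * conj y).im))
      (p / (y + s • p)).im s := by
  set c := (p * conj y).im with hc
  have hp : ‖p‖ ≠ 0 := norm_ne_zero_iff.2 fun hp => h <| by
    simp only [hc, hp, zero_mul, Complex.zero_im]
  have hsq : ‖p‖ ^ 2 * ‖y + s • p‖ ^ 2 = c ^ 2 + (‖p‖ ^ 2 * s + (p * conj y).re) ^ 2 := by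
    simp only [hc, ← Complex.normSq_eq_norm_sq, Complex.normSq_apply, Complex.real_smul,
      Complex.mul_im, Complex.add_re, Complex.add_im, Complex.conj_re, Complex.conj_im,
      Complex.mul_re, Complex.ofReal_re, Complex.ofReal_im]
    ring
  have hne : 0 < ‖p‖ ^ 2 * ‖y + s • p‖ ^ 2 := hsq ▸ by positivity
  have hd := ((((hasDerivAt_id s).const_mul (‖p‖ ^ 2)).add_const (p * conj y).re).div_const
    c).arctan
  refine hd.congr_deriv ?_
  have hy : ‖y + s • p‖ ^ 2 ≠ 0 := fun h0 => by simp only [h0, mul_zero, lt_self_iff_false] at hne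
  have hden : 1 + ((‖p‖ ^ 2 * s + (p * conj y).re) / c) ^ 2 =
      ‖p‖ ^ 2 * ‖y + s • p‖ ^ 2 / c ^ 2 := by
    rw [hsq]
    field_simp
  simp only [id_eq, hden, im_div_add_smul, ← hc]
  field_simp [hy]

lemma abs_integral_im_div_line_le (y p : ℂ) (a b : ℝ) :
    |∫ s in a..b, (p / (y + s • p)).im| ≤ Real.pi := by
  rcases eq_or_ne (p * conj y).im 0 with h | h
  · simp only [im_div_add_smul, h, zero_mul, intervalIntegral.integral_zero, abs_zero,
      Real.pi_nonneg]
  have hne : ∀ s : ℝ, y + s • p ≠ 0 := fun s hs => h <| by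
    rw [eq_neg_of_add_eq_zero_left hs]
    simp only [Complex.real_smul, map_neg, map_mul, Complex.conj_ofReal, mul_neg,
      mul_left_comm p, Complex.mul_conj, Complex.neg_im, ← Complex.ofReal_mul, Complex.ofReal_im,
      neg_zero]
  have hcont : Continuous fun s : ℝ => (p / (y + s • p)).im :=
    Complex.continuous_im.comp (continuous_const.div (by fun_prop) hne)
  rw [intervalIntegral.integral_eq_sub_of_hasDerivAt (fun s _ => hasDerivAt_arctan_line h s)
    (hcont.intervalIntegrable _ _), abs_le]
  constructor <;>
    linarith [Real.arctan_lt_pi_div_two ((‖p‖ ^ 2 * a + (p * conj y).re) / (p * conj y).im),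
      Real.neg_pi_div_two_lt_arctan ((‖p‖ ^ 2 * a + (p * conj y).re) / (p * conj y).im),
      Real.arctan_lt_pi_div_two ((‖p‖ ^ 2 * b + (p * conj y).re) / (p * conj y).im),
      Real.neg_pi_div_two_lt_arctan ((‖p‖ ^ 2 * b + (p * conj y).re) / (p * conj y).im)]

lemma integral_abs_im_div_line (y p : ℂ) {a b : ℝ} (hab : a ≤ b) :
    ∫ s in a..b, |(p / (y + s • p)).im| = |∫ s in a..b, (p / (y + s • p)).im| := by
  simp only [im_div_add_smul, abs_mul, abs_inv, abs_pow, abs_norm,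
    intervalIntegral.integral_const_mul]
  rw [abs_of_nonneg (intervalIntegral.integral_nonneg hab fun s _ => by positivity)]

lemma integral_abs_le_of_integral_abs_sub_le {f g : ℝ → ℝ} {a b ε : ℝ} (hab : a ≤ b)
    (hf : IntervalIntegrable f volume a b) (hg : IntervalIntegrable g volume a b)
    (h : ∫ s in a..b, |f s - g s| ≤ ε) (hsign : ∫ s in a..b, |g s| = |∫ s in a..b, g s|) :
    (∫ s in a..b, |f s|) ≤ |∫ s in a..b, f s| + 2 * ε ∧
      (∫ s in a..b, |f s|) ≤ |∫ s in a..b, g s| + ε := by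
  have hfg : (∫ s in a..b, |f s|) ≤ |∫ s in a..b, g s| + ε := calc
    _ ≤ ∫ s in a..b, (|g s| + |f s - g s|) :=
        intervalIntegral.integral_mono_on hab hf.abs (hg.abs.add (hf.sub hg).abs) fun s _ => by
          simpa only [add_sub_cancel] using abs_add_le (g s) (f s - g s)
    _ = (∫ s in a..b, |g s|) + ∫ s in a..b, |f s - g s| :=
        intervalIntegral.integral_add hg.abs (hf.sub hg).abs
    _ ≤ _ := by rw [hsign]; gcongr
  have hgf : |∫ s in a..b, g s| ≤ |∫ s in a..b, f s| + ε := by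
    have hsub := (intervalIntegral.abs_integral_le_integral_abs (μ := volume)
      (f := fun s => f s - g s) hab).trans h
    rw [intervalIntegral.integral_sub hf hg, abs_sub_comm] at hsub
    linarith [abs_sub_abs_le_abs_sub (∫ s in a..b, g s) (∫ s in a..b, f s)]
  exact ⟨by linarith, hfg⟩

/-- `ω` is a Dini modulus of continuity of `f` on `[a, b]`. It need not be the optimal modulus
`modCont f a b`, so that the notion passes to subintervals. -/
structure IsDiniModulus (ω : ℝ → ℝ) (f : ℝ → ℂ) (a b : ℝ) : Prop where
  mono : MonotoneOn ω (Ici 0)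
  integrable : IntegrableOn (fun t => ω t / t) (Ioc (0 : ℝ) 1)
  bound : ∀ s ∈ Icc a b, ∀ t ∈ Icc a b, ‖f s - f t‖ ≤ ω |s - t|

/-- A regular arc on `[a, b]` whose velocity `γ'` is Dini-continuous. Unlike for
`IsDiniSmoothArc`, self-intersections are allowed. -/
structure IsDiniArc (γ γ' : ℝ → ℂ) (a b : ℝ) : Prop where
  lt : a < b
  deriv : ∀ s ∈ Icc a b, HasDerivWithinAt γ (γ' s) (Icc a b) s
  cont : ContinuousOn γ' (Icc a b)
  nonzero : ∀ s ∈ Icc a b, γ' s ≠ 0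
  dini : ∃ ω, IsDiniModulus ω γ' a b

lemma IsDiniSmoothArc.isDiniModulus {γ γ' : ℝ → ℂ} {a b : ℝ} (h : IsDiniSmoothArc γ γ' a b) :
    IsDiniModulus (modCont γ' a b) γ' a b := by
  obtain ⟨C, hC⟩ := isCompact_Icc.exists_bound_of_continuousOn h.cont
  have hbdd : ∀ t, BddAbove {d : ℝ | ∃ s₁ ∈ Icc a b, ∃ s₂ ∈ Icc a b, |s₁ - s₂| ≤ t ∧
      d = ‖γ' s₁ - γ' s₂‖} := fun t => by
    refine ⟨C + C, ?_⟩
    rintro _ ⟨s₁, h1, s₂, h2, -, rfl⟩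
    exact (norm_sub_le _ _).trans (add_le_add (hC _ h1) (hC _ h2))
  refine ⟨fun t ht u _ htu => ?_, h.dini,
    fun s hs t ht => le_csSup (hbdd _) ⟨s, hs, t, ht, le_rfl, rfl⟩⟩
  have ha : a ∈ Icc a b := left_mem_Icc.2 h.lt.le
  refine csSup_le_csSup (hbdd u) ⟨_, a, ha, a, ha, ?_, rfl⟩ ?_
  · simpa only [sub_self, abs_zero, mem_Ici] using ht
  · rintro _ ⟨s₁, h1, s₂, h2, h3, rfl⟩
    exact ⟨s₁, h1, s₂, h2, h3.trans htu, rfl⟩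

lemma IsDiniSmoothArc.isDiniArc {γ γ' : ℝ → ℂ} {a b : ℝ} (h : IsDiniSmoothArc γ γ' a b) :
    IsDiniArc γ γ' a b :=
  ⟨h.lt, h.deriv, h.cont, h.nonzero, _, h.isDiniModulus⟩

namespace IsDiniModulus

variable {ω : ℝ → ℝ} {f : ℝ → ℂ} {a b : ℝ}

lemma sub (h : IsDiniModulus ω f a b) {a' b' : ℝ} (hsub : Icc a' b' ⊆ Icc a b) :
    IsDiniModulus ω f a' b' :=
  ⟨h.mono, h.integrable, fun s hs t ht => h.bound s (hsub hs) t (hsub ht)⟩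

lemma div_nonneg (h : IsDiniModulus ω f a b) (hab : a ≤ b) {t : ℝ} (ht : 0 ≤ t) :
    0 ≤ ω t / t := by
  have h0 := h.bound a (left_mem_Icc.2 hab) a (left_mem_Icc.2 hab)
  rw [sub_self, norm_zero, sub_self, abs_zero] at h0
  exact _root_.div_nonneg (h0.trans (h.mono self_mem_Ici ht ht)) ht

lemma intervalIntegrable (h : IsDiniModulus ω f a b) {x : ℝ} (hx : 0 ≤ x) (hx1 : x ≤ 1) :
    IntervalIntegrable (fun t => ω t / t) volume 0 x :=
  (intervalIntegrable_iff_integrableOn_Ioc_of_le hx).2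
    (h.integrable.mono_set (Ioc_subset_Ioc_right hx1))

lemma eventually_integral_lt (h : IsDiniModulus ω f a b) {ε : ℝ} (hε : 0 < ε) :
    ∀ᶠ x in 𝓝[>] (0 : ℝ), ∫ t in (0 : ℝ)..x, ω t / t < ε := by
  have hcont : ContinuousOn (fun x => ∫ t in (0 : ℝ)..x, ω t / t) (uIcc 0 1) :=
    intervalIntegral.continuousOn_primitive_interval' (h.intervalIntegrable zero_le_one le_rfl)
      left_mem_uIcc
  have hlim := hcont 0 left_mem_uIcc
  rw [ContinuousWithinAt, intervalIntegral.integral_same, uIcc_of_le zero_le_one] at hlim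
  exact (hlim.mono_left (nhdsWithin_le_of_mem (Icc_mem_nhdsGT zero_lt_one))).eventually_lt_const hε

end IsDiniModulus

namespace IsDiniArc

variable {γ γ' : ℝ → ℂ} {a b : ℝ}

lemma continuousOn (h : IsDiniArc γ γ' a b) : ContinuousOn γ (Icc a b) :=
  fun s hs => (h.deriv s hs).continuousWithinAt

lemma sub (h : IsDiniArc γ γ' a b) {a' b' : ℝ} (hab : a' < b') (hsub : Icc a' b' ⊆ Icc a b) :
    IsDiniArc γ γ' a' b' := by
  obtain ⟨ω, hω⟩ := h.dini
  exact ⟨hab, fun s hs => (h.deriv s (hsub hs)).mono hsub, h.cont.mono hsub,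
    fun s hs => h.nonzero s (hsub hs), ω, hω.sub hsub⟩

lemma congr {γ₁ : ℝ → ℂ} (h : IsDiniArc γ γ' a b) (h₁ : EqOn γ₁ γ (Icc a b)) :
    IsDiniArc γ₁ γ' a b :=
  ⟨h.lt, fun s hs => (h.deriv s hs).congr h₁ (h₁ hs), h.cont, h.nonzero, h.dini⟩

lemma reverse (h : IsDiniArc γ γ' a b) :
    IsDiniArc (fun s => γ (-s)) (fun s => -γ' (-s)) (-b) (-a) := by
  have hneg : ∀ s ∈ Icc (-b) (-a), -s ∈ Icc a b := fun s hs => neg_mem_Icc_iff.2 hs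
  obtain ⟨ω, hω⟩ := h.dini
  refine ⟨neg_lt_neg h.lt, fun s hs => ?_, (h.cont.comp continuous_neg.continuousOn hneg).neg,
    fun s hs => neg_ne_zero.2 (h.nonzero _ (hneg s hs)), ω, hω.mono, hω.integrable,
    fun s hs t ht => ?_⟩
  · exact ((h.deriv _ (hneg s hs)).scomp s (hasDerivAt_neg s).hasDerivWithinAt hneg).congr_deriv
      (neg_one_smul ℝ _)
  · simpa only [neg_sub_neg, norm_sub_rev, abs_sub_comm]
      using hω.bound _ (hneg s hs) _ (hneg t ht)

lemma exists_nearest (h : IsDiniArc γ γ' a b) (z : ℂ) :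
    ∃ s₀ ∈ Icc a b, ∀ s ∈ Icc a b, 0 ≤ (s - s₀) * ((γ s₀ - z) * conj (γ' s₀)).re := by
  have hcont : ContinuousOn (fun s => ‖γ s - z‖ ^ 2) (Icc a b) :=
    (h.continuousOn.sub continuousOn_const).norm.pow 2
  obtain ⟨s₀, h0, hmin⟩ := isCompact_Icc.exists_isMinOn (nonempty_Icc.2 h.lt.le) hcont
  refine ⟨s₀, h0, fun s hs => ?_⟩
  have hd := ((h.deriv s₀ h0).sub_const z).norm_sq.hasFDerivWithinAt
  have hnonneg := hmin.localize.hasFDerivWithinAt_nonneg hd (y := s - s₀)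
    (sub_mem_posTangentConeAt_of_segment_subset ((convex_Icc _ _).segment_subset h0 hs))
  simp only [ContinuousLinearMap.toSpanSingleton_apply, Complex.inner, smul_eq_mul] at hnonneg
  rw [← Complex.conj_re, map_mul, Complex.conj_conj, mul_comm (conj (γ s₀ - z))]
  linarith

end IsDiniArc

lemma intervalIntegrable_comp_abs {g : ℝ → ℝ} {r : ℝ} (hr : 0 ≤ r)
    (hg : IntervalIntegrable g volume 0 r) :
    IntervalIntegrable (fun t => g |t|) volume (-r) 0 ∧
      IntervalIntegrable (fun t => g |t|) volume 0 r := by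
  have hpos : IntervalIntegrable (fun t => g |t|) volume 0 r := hg.congr fun t ht => by
    rw [uIoc_of_le hr] at ht
    simp only [abs_of_pos ht.1]
  refine ⟨?_, hpos⟩
  have hneg := hpos.comp_sub_left 0
  simp only [zero_sub, abs_neg, sub_zero] at hneg
  exact hneg.symm

lemma integral_comp_abs_symm {g : ℝ → ℝ} {r : ℝ} (hr : 0 ≤ r)
    (hg : IntervalIntegrable g volume 0 r) :
    ∫ t in (-r)..r, g |t| = 2 * ∫ t in (0 : ℝ)..r, g t := by
  obtain ⟨hleft, hright⟩ := intervalIntegrable_comp_abs hr hg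
  have hpos : ∫ t in (0 : ℝ)..r, g |t| = ∫ t in (0 : ℝ)..r, g t :=
    intervalIntegral.integral_congr fun t ht => by
      rw [uIcc_of_le hr] at ht
      simp only [abs_of_nonneg ht.1]
  have hneg : ∫ t in (-r)..0, g |t| = ∫ t in (0 : ℝ)..r, g |t| := by
    simpa only [abs_neg, neg_zero, neg_neg] using
      intervalIntegral.integral_comp_neg (fun t => g |t|) (a := -r) (b := 0)
  rw [← intervalIntegral.integral_add_adjacent_intervals hleft hright, hneg, hpos, two_mul]

lemma integral_comp_abs_sub_le {g : ℝ → ℝ} {a b s₀ : ℝ} (h0 : s₀ ∈ Icc a b)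
    (hnonneg : ∀ t, 0 ≤ t → 0 ≤ g t) (hg : IntervalIntegrable g volume 0 (b - a)) :
    IntervalIntegrable (fun s => g |s - s₀|) volume a b ∧
      ∫ s in a..b, g |s - s₀| ≤ 2 * ∫ t in (0 : ℝ)..(b - a), g t := by
  have hab : 0 ≤ b - a := sub_nonneg.2 (h0.1.trans h0.2)
  have hint : IntervalIntegrable (fun t => g |t|) volume (-(b - a)) (b - a) :=
    (intervalIntegrable_comp_abs hab hg).1.trans (intervalIntegrable_comp_abs hab hg).2
  have hl : -(b - a) ≤ a - s₀ := by linarith [h0.2]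
  have hr : b - s₀ ≤ b - a := by linarith [h0.1]
  have hlr : a - s₀ ≤ b - s₀ := by linarith
  constructor
  · have hsub : uIcc (a - s₀) (b - s₀) ⊆ uIcc (-(b - a)) (b - a) := by
      rw [uIcc_of_le hlr, uIcc_of_le (by linarith)]
      exact Icc_subset_Icc hl hr
    simpa only [sub_add_cancel] using (hint.mono_set hsub).comp_sub_right s₀
  · rw [intervalIntegral.integral_comp_sub_right (fun t => g |t|), ← integral_comp_abs_symm hab hg]
    exact intervalIntegral.integral_mono_interval hl hlr hr
      (Eventually.of_forall fun t => hnonneg _ (abs_nonneg t)) hint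

namespace IsDiniArc

variable {γ γ' : ℝ → ℂ} {a b : ℝ}

lemma continuousOn_im_div (h : IsDiniArc γ γ' a b) {z : ℂ} (hz : ∀ s ∈ Icc a b, γ s ≠ z) :
    ContinuousOn (fun s => (γ' s / (γ s - z)).im) (Icc a b) :=
  Complex.continuous_im.comp_continuousOn
    (h.cont.div (h.continuousOn.sub continuousOn_const) fun s hs => sub_ne_zero.2 (hz s hs))

variable {ω : ℝ → ℝ} {s₀ : ℝ} {z : ℂ}

lemma norm_div_sub_tangent_le (h : IsDiniArc γ γ' a b) (hω : IsDiniModulus ω γ' a b)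
    (h0 : s₀ ∈ Icc a b) (hclose : ∀ t ∈ Icc a b, ‖γ' t - γ' s₀‖ ≤ ‖γ' s₀‖ / 2) {s : ℝ}
    (hs : s ∈ Icc a b) (hnear : 0 ≤ (s - s₀) * ((γ s₀ - z) * conj (γ' s₀)).re) :
    ‖γ' s / (γ s - z) - γ' s₀ / (γ s₀ - z + (s - s₀) • γ' s₀)‖ ≤
      4 / ‖γ' s₀‖ * (ω |s - s₀| / |s - s₀|) := by
  rcases eq_or_ne s s₀ with rfl | hne
  · simp only [sub_self, zero_smul, add_zero, norm_zero, abs_zero, div_zero, mul_zero, le_refl]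
  have hsub : uIcc s₀ s ⊆ Icc a b := uIcc_subset_Icc h0 hs
  obtain ⟨-, hdist⟩ := norm_add_smul_of_re_nonneg hnear
  have htaylor := norm_sub_sub_smul_le hsub h.deriv fun t ht => hclose t (hsub ht)
  have htaylor' : ‖γ s - γ s₀ - (s - s₀) • γ' s₀‖ ≤ ω |s - s₀| * |s - s₀| :=
    norm_sub_sub_smul_le hsub h.deriv fun t ht => (hω.bound t (hsub ht) s₀ h0).trans
      (hω.mono (mem_Ici.2 (abs_nonneg _)) (mem_Ici.2 (abs_nonneg _))
        (abs_sub_left_of_mem_uIcc ht))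
  have key := norm_add_div_add_sub_div_le (h.nonzero s₀ h0) (sub_ne_zero.2 hne) hdist
    (htaylor.trans (by linarith)) htaylor' (hω.bound s hs s₀ h0)
  rwa [add_sub_cancel, show γ s₀ - z + (s - s₀) • γ' s₀ +
    (γ s - γ s₀ - (s - s₀) • γ' s₀) = γ s - z by ring] at key

lemma continuousOn_im_div_tangent (hz : γ s₀ ≠ z)
    (hnear : ∀ s ∈ Icc a b, 0 ≤ (s - s₀) * ((γ s₀ - z) * conj (γ' s₀)).re) :
    ContinuousOn (fun s => (γ' s₀ / (γ s₀ - z + (s - s₀) • γ' s₀)).im) (Icc a b) :=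
  Complex.continuous_im.comp_continuousOn (continuousOn_const.div (by fun_prop) fun s hs =>
    norm_pos_iff.1 ((norm_pos_iff.2 (sub_ne_zero.2 hz)).trans_le
      (norm_add_smul_of_re_nonneg (hnear s hs)).1))

lemma integral_abs_sub_tangent_le (h : IsDiniArc γ γ' a b) (hω : IsDiniModulus ω γ' a b)
    (hlen : b - a ≤ 1) (h0 : s₀ ∈ Icc a b)
    (hclose : ∀ t ∈ Icc a b, ‖γ' t - γ' s₀‖ ≤ ‖γ' s₀‖ / 2) (hz : ∀ s ∈ Icc a b, γ s ≠ z)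
    (hnear : ∀ s ∈ Icc a b, 0 ≤ (s - s₀) * ((γ s₀ - z) * conj (γ' s₀)).re) :
    ∫ s in a..b, |(γ' s / (γ s - z)).im - (γ' s₀ / (γ s₀ - z + (s - s₀) • γ' s₀)).im| ≤
      8 / ‖γ' s₀‖ * ∫ t in (0 : ℝ)..(b - a), ω t / t := by
  obtain ⟨hint, hle⟩ := integral_comp_abs_sub_le h0 (fun t => hω.div_nonneg h.lt.le)
    (hω.intervalIntegrable (sub_nonneg.2 h.lt.le) hlen)
  calc _ ≤ ∫ s in a..b, 4 / ‖γ' s₀‖ * (ω |s - s₀| / |s - s₀|) := by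
        refine intervalIntegral.integral_mono_on h.lt.le (((h.continuousOn_im_div hz).sub
          (continuousOn_im_div_tangent (hz s₀ h0) hnear)).abs.intervalIntegrable_of_Icc h.lt.le)
          (hint.const_mul _) fun s hs => ?_
        rw [← Complex.sub_im]
        exact (Complex.abs_im_le_norm _).trans
          (h.norm_div_sub_tangent_le hω h0 hclose hs (hnear s hs))
    _ ≤ 4 / ‖γ' s₀‖ * (2 * ∫ t in (0 : ℝ)..(b - a), ω t / t) := by
        rw [intervalIntegral.integral_const_mul]
        gcongr
    _ = _ := by ring

-- The arc is compared with its tangent line at the point nearest to `z`, for which the angular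
-- velocity has constant sign and total mass at most `π`.
lemma integral_abs_im_div_le (h : IsDiniArc γ γ' a b) (hω : IsDiniModulus ω γ' a b)
    (hlen : b - a ≤ 1) (hz : ∀ s ∈ Icc a b, γ s ≠ z) {κ ε : ℝ} (hκ : 0 < κ)
    (hκγ : ∀ s ∈ Icc a b, κ ≤ ‖γ' s‖)
    (hclose : ∀ s ∈ Icc a b, ∀ t ∈ Icc a b, ‖γ' s - γ' t‖ ≤ κ / 2)
    (hε : 8 / κ * ∫ t in (0 : ℝ)..(b - a), ω t / t ≤ ε) :
    (∫ s in a..b, |(γ' s / (γ s - z)).im|) ≤ |∫ s in a..b, (γ' s / (γ s - z)).im| + 2 * ε ∧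
      (∫ s in a..b, |(γ' s / (γ s - z)).im|) ≤ Real.pi + ε := by
  obtain ⟨s₀, h0, hnear⟩ := h.exists_nearest z
  have hI : 0 ≤ ∫ t in (0 : ℝ)..(b - a), ω t / t :=
    intervalIntegral.integral_nonneg (sub_nonneg.2 h.lt.le) fun t ht => hω.div_nonneg h.lt.le ht.1
  have hdiff := (h.integral_abs_sub_tangent_le hω hlen h0
    (fun t ht => (hclose t ht s₀ h0).trans (by linarith [hκγ s₀ h0])) hz hnear).trans
    (le_trans (by gcongr; exact hκγ s₀ h0) hε)
  have hline := (continuousOn_im_div_tangent (hz s₀ h0) hnear).intervalIntegrable_of_Icc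
    (μ := volume) h.lt.le
  have hshift : ∀ s, γ s₀ - z + (s - s₀) • γ' s₀ = γ s₀ - z - s₀ • γ' s₀ + s • γ' s₀ :=
    fun s => by rw [sub_smul]; ring
  simp only [hshift] at hline hdiff
  obtain ⟨hsign, hmass⟩ := integral_abs_le_of_integral_abs_sub_le h.lt.le
    ((h.continuousOn_im_div hz).intervalIntegrable_of_Icc h.lt.le) hline hdiff
    (integral_abs_im_div_line _ _ h.lt.le)
  exact ⟨hsign, hmass.trans (by gcongr; exact abs_integral_im_div_line_le _ _ _ _)⟩

lemma exists_integral_abs_im_div_le (h : IsDiniArc γ γ' a b) {ε : ℝ} (hε : 0 < ε) :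
    ∃ δ > 0, ∀ a' b', a' < b' → Icc a' b' ⊆ Icc a b → b' - a' < δ →
      ∀ z, (∀ s ∈ Icc a' b', γ s ≠ z) →
        (∫ s in a'..b', |(γ' s / (γ s - z)).im|) ≤ |∫ s in a'..b', (γ' s / (γ s - z)).im| + ε ∧
        (∫ s in a'..b', |(γ' s / (γ s - z)).im|) ≤ Real.pi + ε := by
  obtain ⟨ω, hω⟩ := h.dini
  obtain ⟨s₁, h1, hmin⟩ := isCompact_Icc.exists_isMinOn (nonempty_Icc.2 h.lt.le) h.cont.norm
  set κ := ‖γ' s₁‖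
  have hκ : 0 < κ := norm_pos_iff.2 (h.nonzero s₁ h1)
  obtain ⟨δ₁, hδ₁, hclose⟩ := Metric.uniformContinuousOn_iff.1
    (isCompact_Icc.uniformContinuousOn_of_continuous h.cont) (κ / 2) (half_pos hκ)
  obtain ⟨δ₂, hδ₂, hint⟩ := mem_nhdsGT_iff_exists_Ioo_subset.1
    (hω.eventually_integral_lt (show 0 < κ / 8 * (ε / 2) by positivity))
  refine ⟨min δ₁ (min δ₂ 1), lt_min hδ₁ (lt_min hδ₂ one_pos), fun a' b' hab hsub hlen z hz => ?_⟩
  obtain ⟨hlen₁, hlen₂, hlen₃⟩ : b' - a' < δ₁ ∧ b' - a' < δ₂ ∧ b' - a' < 1 := by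
    simpa only [lt_min_iff] using hlen
  have hclose' : ∀ s ∈ Icc a' b', ∀ t ∈ Icc a' b', ‖γ' s - γ' t‖ ≤ κ / 2 := fun s hs t ht => by
    rw [← dist_eq_norm]
    exact (hclose s (hsub hs) t (hsub ht) ((Real.dist_le_of_mem_Icc hs ht).trans_lt hlen₁)).le
  have hsmall : 8 / κ * ∫ t in (0 : ℝ)..(b' - a'), ω t / t ≤ ε / 2 := calc
    _ ≤ 8 / κ * (κ / 8 * (ε / 2)) := by
        gcongr
        exact (hint ⟨sub_pos.2 hab, hlen₂⟩).le
    _ = ε / 2 := by field_simp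
  obtain ⟨hsign, hmass⟩ := (h.sub hab hsub).integral_abs_im_div_le (hω.sub hsub) hlen₃.le hz hκ
    (fun s hs => hmin (hsub hs)) hclose' hsmall
  exact ⟨by linarith, by linarith⟩

end IsDiniArc

/-! ### Integration along a curve -/

lemma rel_of_local {R : ℝ → ℝ → Prop} (htrans : ∀ x y z, x < y → y < z → R x y → R y z → R x z)
    {p q : ℝ} (hpq : p < q) (hr : ∀ x ∈ Ico p q, ∀ᶠ y in 𝓝[>] x, R x y)
    (hl : ∀ x ∈ Ioc p q, ∀ᶠ y in 𝓝[<] x, R y x) : R p q := by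
  set S := {x ∈ Ioc p q | R p x}
  have hbdd : BddAbove S := ⟨q, fun x hx => hx.1.2⟩
  obtain ⟨x₁, h1, hx1⟩ := ((hr p (left_mem_Ico.2 hpq)).and (Ioc_mem_nhdsGT hpq)).exists
  have hS : x₁ ∈ S := ⟨hx1, h1⟩
  set c := sSup S
  have hc : c ∈ Ioc p q := ⟨hx1.1.trans_le (le_csSup hbdd hS), csSup_le ⟨_, hS⟩ fun x hx => hx.1.2⟩
  have hcR : R p c := by
    obtain ⟨l, hlc, hleft⟩ := mem_nhdsLT_iff_exists_Ioo_subset.1 (hl c hc)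
    obtain ⟨y, hy, hly⟩ := exists_lt_of_lt_csSup ⟨_, hS⟩ (mem_Iio.1 hlc)
    rcases (le_csSup hbdd hy).lt_or_eq with hyc | hyc
    · exact htrans p y c hy.1.1 hyc hy.2 (hleft ⟨hly, hyc⟩)
    · rw [show c = y from hyc.symm]
      exact hy.2
  rcases hc.2.lt_or_eq with hcq | hcq
  · obtain ⟨y, hRy, hy⟩ := ((hr c ⟨hc.1.le, hcq⟩).and (Ioc_mem_nhdsGT hcq)).exists
    exact absurd (le_csSup hbdd ⟨⟨hc.1.trans hy.1, hy.2⟩, htrans p c y hc.1 hy.1 hcR hRy⟩)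
      hy.1.not_ge
  · rwa [hcq] at hcR

/-- A representation `dE = T dμ` of the line element of the curve `E` on `[p, q]`, with `μ`
concentrated on `(p, q]` and `T` bounded. It exists only if `E` is rectifiable; `μ` need not be
the arc length, nor `T` of modulus one. -/
structure LineElement (E : ℝ → ℂ) (p q : ℝ) where
  μ : Measure ℝ
  T : ℝ → ℂ
  finite : IsFiniteMeasure μ
  measure_compl : μ (Ioc p q)ᶜ = 0
  aestronglyMeasurable : AEStronglyMeasurable T μ
  bounded : ∃ C, ∀ᵐ t ∂μ, ‖T t‖ ≤ C
  setIntegral_Iic : ∀ x ∈ Icc p q, ∫ t in Iic x, T t ∂μ = E x - E p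

namespace LineElement

variable {E : ℝ → ℂ} {p q r : ℝ}

instance (L : LineElement E p q) : IsFiniteMeasure L.μ := L.finite

/-- The integral `∫ f dE`. -/
def integral (L : LineElement E p q) (f : ℝ → ℂ) : ℂ := ∫ t, f t * L.T t ∂L.μ

lemma ae_mem (L : LineElement E p q) : ∀ᵐ t ∂L.μ, t ∈ Ioc p q :=
  mem_ae_iff.2 L.measure_compl

lemma integrable_T (L : LineElement E p q) : Integrable L.T L.μ := by
  obtain ⟨C, hC⟩ := L.bounded
  exact Integrable.of_bound L.aestronglyMeasurable C hC

lemma integrable_mul (L : LineElement E p q) {f : ℝ → ℂ} (hf : Integrable f L.μ) :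
    Integrable (fun t => f t * L.T t) L.μ := by
  obtain ⟨C, hC⟩ := L.bounded
  exact hf.mul_bdd L.aestronglyMeasurable hC

lemma restrict_Icc (L : LineElement E p q) : L.μ.restrict (Icc p q) = L.μ :=
  Measure.restrict_eq_self_of_ae_mem (L.ae_mem.mono fun _ ht => Ioc_subset_Icc_self ht)

lemma integrable_of_continuousOn (L : LineElement E p q) {f : ℝ → ℂ}
    (hf : ContinuousOn f (Icc p q)) : Integrable f L.μ := by
  rw [← L.restrict_Icc]
  exact hf.integrableOn_compact isCompact_Icc

lemma integral_congr (L : LineElement E p q) {f g : ℝ → ℂ} (h : EqOn f g (Icc p q)) :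
    L.integral f = L.integral g :=
  integral_congr_ae (L.ae_mem.mono fun t ht => by
    simp only [h (Ioc_subset_Icc_self ht)])

lemma integral_add (L : LineElement E p q) {f g : ℝ → ℂ} (hf : Integrable f L.μ)
    (hg : Integrable g L.μ) :
    L.integral (fun t => f t + g t) = L.integral f + L.integral g := by
  simp only [integral, add_mul]
  exact MeasureTheory.integral_add (L.integrable_mul hf) (L.integrable_mul hg)

lemma integral_sub (L : LineElement E p q) {f g : ℝ → ℂ} (hf : Integrable f L.μ)
    (hg : Integrable g L.μ) :
    L.integral (fun t => f t - g t) = L.integral f - L.integral g := by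
  simp only [integral, sub_mul]
  exact MeasureTheory.integral_sub (L.integrable_mul hf) (L.integrable_mul hg)

lemma integral_const_mul (L : LineElement E p q) (c : ℂ) (f : ℝ → ℂ) :
    L.integral (fun t => c * f t) = c * L.integral f := by
  simp only [integral, mul_assoc, MeasureTheory.integral_const_mul]

lemma norm_integral_le (L : LineElement E p q) :
    ∃ K, ∀ f M, (∀ t ∈ Icc p q, ‖f t‖ ≤ M) → ‖L.integral f‖ ≤ K * M := by
  obtain ⟨C, hC⟩ := L.bounded
  refine ⟨|C| * L.μ.real univ, fun f M hM => ?_⟩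
  rw [mul_right_comm, mul_comm |C|]
  refine norm_integral_le_of_norm_le_const ?_
  filter_upwards [hC, L.ae_mem] with t ht htp
  have hMt := hM t (Ioc_subset_Icc_self htp)
  rw [norm_mul]
  exact mul_le_mul hMt (ht.trans (le_abs_self C)) (norm_nonneg _) ((norm_nonneg _).trans hMt)

lemma continuousOn_integral (L : LineElement E p q) {X : Type*} [TopologicalSpace X]
    {f : X → ℝ → ℂ} {s : Set X} (hf : ContinuousOn (Function.uncurry f) (s ×ˢ Icc p q)) :
    ContinuousOn (fun x => L.integral (f x)) s := by
  intro x hx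
  obtain ⟨K, hK⟩ := L.norm_integral_le
  have hint : ∀ y ∈ s, Integrable (f y) L.μ := fun y hy => L.integrable_of_continuousOn
    (hf.comp (Continuous.prodMk_right y).continuousOn fun t ht => ⟨hy, ht⟩)
  refine Metric.tendsto_nhds.2 fun ε hε => ?_
  obtain ⟨v, hv, hvε⟩ := isCompact_Icc.mem_uniformity_of_prod hf hx
    (Metric.dist_mem_uniformity (show 0 < ε / (|K| + 1) by positivity))
  filter_upwards [hv, self_mem_nhdsWithin] with y hyv hys
  rw [dist_eq_norm, ← L.integral_sub (hint y hys) (hint x hx)]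
  calc _ ≤ K * (ε / (|K| + 1)) := hK _ _ fun t ht => by
        rw [← dist_eq_norm]
        exact (hvε y hyv t ht).le
    _ < (|K| + 1) * (ε / (|K| + 1)) := by
        gcongr
        exact (le_abs_self K).trans_lt (lt_add_one _)
    _ = ε := mul_div_cancel₀ _ (by positivity)

lemma setIntegral_Iic_of_le (L : LineElement E p q) {x : ℝ} (hx : x ≤ p) :
    ∫ t in Iic x, L.T t ∂L.μ = 0 :=
  setIntegral_measure_zero _ <| measure_mono_null (t := (Ioc p q)ᶜ)
    (fun _ ht ht' => (le_trans ht hx).not_gt ht'.1) L.measure_compl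

lemma setIntegral_Iic_of_ge (L : LineElement E p q) (hpq : p ≤ q) {x : ℝ} (hx : q ≤ x) :
    ∫ t in Iic x, L.T t ∂L.μ = E q - E p := by
  have hall : ∀ y, q ≤ y → ∫ t in Iic y, L.T t ∂L.μ = ∫ t, L.T t ∂L.μ := fun y hy => by
    rw [Measure.restrict_eq_self_of_ae_mem (s := Iic y)
      (L.ae_mem.mono fun t ht => ht.2.trans hy)]
  rw [hall x hx, ← hall q le_rfl, L.setIntegral_Iic q (right_mem_Icc.2 hpq)]

lemma setIntegral_Ioc (L : LineElement E p q) {x y : ℝ} (hpx : p ≤ x) (hxy : x ≤ y) (hyq : y ≤ q) :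
    ∫ t in Ioc x y, L.T t ∂L.μ = E y - E x := by
  have h := intervalIntegral.integral_Iic_sub_Iic (μ := L.μ) (a := x) (b := y)
    L.integrable_T.integrableOn L.integrable_T.integrableOn
  rw [intervalIntegral.integral_of_le hxy, L.setIntegral_Iic x ⟨hpx, hxy.trans hyq⟩,
    L.setIntegral_Iic y ⟨hpx.trans hxy, hyq⟩] at h
  rw [← h, sub_sub_sub_cancel_right]

lemma integral_one (L : LineElement E p q) (hpq : p ≤ q) :
    L.integral (fun _ => 1) = E q - E p := by
  simp only [integral, one_mul]
  rw [← L.setIntegral_Iic_of_ge hpq le_rfl,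
    Measure.restrict_eq_self_of_ae_mem (s := Iic q) (L.ae_mem.mono fun t ht => ht.2)]

section Concat

variable (L₁ : LineElement E p q) (L₂ : LineElement E q r)

/-- The line element on the union of two adjacent intervals. -/
def concat (hpq : p ≤ q) (hqr : q ≤ r) : LineElement E p r :=
  have h1 : (Iic q).piecewise L₁.T L₂.T =ᵐ[L₁.μ] L₁.T :=
    L₁.ae_mem.mono fun t ht => piecewise_eq_of_mem _ _ _ ht.2
  have h2 : (Iic q).piecewise L₁.T L₂.T =ᵐ[L₂.μ] L₂.T :=
    L₂.ae_mem.mono fun t ht => piecewise_eq_of_notMem _ _ _ ht.1.not_ge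
  { μ := L₁.μ + L₂.μ
    T := (Iic q).piecewise L₁.T L₂.T
    finite := inferInstance
    measure_compl := by
      rw [Measure.add_apply, add_eq_zero]
      exact ⟨measure_mono_null (compl_subset_compl.2 (Ioc_subset_Ioc_right hqr)) L₁.measure_compl,
        measure_mono_null (compl_subset_compl.2 (Ioc_subset_Ioc_left hpq)) L₂.measure_compl⟩
    aestronglyMeasurable := (L₁.aestronglyMeasurable.congr h1.symm).add_measure
      (L₂.aestronglyMeasurable.congr h2.symm)
    bounded := by
      obtain ⟨C₁, hC₁⟩ := L₁.bounded
      obtain ⟨C₂, hC₂⟩ := L₂.bounded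
      refine ⟨max C₁ C₂, ae_add_measure_iff.2 ⟨?_, ?_⟩⟩
      · filter_upwards [h1, hC₁] with t ht htC using ht ▸ htC.trans (le_max_left _ _)
      · filter_upwards [h2, hC₂] with t ht htC using ht ▸ htC.trans (le_max_right _ _)
    setIntegral_Iic := fun x hx => by
      rw [Measure.restrict_add, integral_add_measure
        (L₁.integrable_T.congr h1.symm).integrableOn (L₂.integrable_T.congr h2.symm).integrableOn,
        setIntegral_congr_ae measurableSet_Iic (h1.mono fun t ht _ => ht),
        setIntegral_congr_ae measurableSet_Iic (h2.mono fun t ht _ => ht)]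
      rcases le_total x q with hxq | hqx
      · rw [L₁.setIntegral_Iic x ⟨hx.1, hxq⟩, L₂.setIntegral_Iic_of_le hxq, add_zero]
      · rw [L₁.setIntegral_Iic_of_ge hpq hqx, L₂.setIntegral_Iic x ⟨hqx, hx.2⟩]
        ring }

lemma integral_concat (hpq : p ≤ q) (hqr : q ≤ r) {f : ℝ → ℂ} (hf₁ : Integrable f L₁.μ)
    (hf₂ : Integrable f L₂.μ) :
    (L₁.concat L₂ hpq hqr).integral f = L₁.integral f + L₂.integral f := by
  have h1 : (fun t => f t * L₁.T t) =ᵐ[L₁.μ] fun t => f t * (L₁.concat L₂ hpq hqr).T t :=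
    L₁.ae_mem.mono fun t ht => by simp only [concat, piecewise_eq_of_mem _ _ _ (mem_Iic.2 ht.2)]
  have h2 : (fun t => f t * L₂.T t) =ᵐ[L₂.μ] fun t => f t * (L₁.concat L₂ hpq hqr).T t :=
    L₂.ae_mem.mono fun t ht => by
      simp only [concat, piecewise_eq_of_notMem _ _ _ (notMem_Iic.2 ht.1)]
  rw [integral, integral, integral, integral_congr_ae h1, integral_congr_ae h2]
  exact integral_add_measure ((L₁.integrable_mul hf₁).congr h1) ((L₂.integrable_mul hf₂).congr h2)

end Concat

lemma integral_eq_sub_integral_deriv (L : LineElement E p q) (hpq : p ≤ q)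
    (hE : Continuous E) {g g' : ℝ → ℂ} (hg : ∀ t, HasDerivAt g (g' t) t)
    (hg' : Continuous g') :
    L.integral g = g q * E q - g p * E p - ∫ t in p..q, g' t * E t := by
  set K : ℝ → ℝ → ℂ := fun t s => {z : ℝ × ℝ | z.1 ≤ z.2}.indicator
    (fun z => L.T z.1 * g' z.2) (t, s)
  have hK : Integrable (Function.uncurry K) (L.μ.prod (volume.restrict (Ioc p q))) :=
    (L.integrable_T.mul_prod hg'.integrableOn_Ioc).indicator
      (measurableSet_le measurable_fst measurable_snd)
  have hinner_s : ∀ t ∈ Ioc p q, ∫ s in Ioc p q, K t s = (g q - g t) * L.T t := fun t ht => by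
    have hKt : K t = (Ici t).indicator fun s => L.T t * g' s := rfl
    have hinter : Ioc p q ∩ Ici t = Icc t q := by
      ext s
      exact ⟨fun hs => ⟨hs.2, hs.1.2⟩, fun hs => ⟨⟨ht.1.trans_le hs.1, hs.2⟩, hs.1⟩⟩
    rw [hKt, setIntegral_indicator measurableSet_Ici, hinter, integral_Icc_eq_integral_Ioc,
      ← intervalIntegral.integral_of_le ht.2, intervalIntegral.integral_const_mul,
      intervalIntegral.integral_eq_sub_of_hasDerivAt (fun s _ => hg s)
        (hg'.intervalIntegrable t q), mul_comm]
  have hinner_t : ∀ s ∈ Ioc p q, ∫ t, K t s ∂L.μ = g' s * E s - g' s * E p := fun s hs => by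
    have hKs : (fun t => K t s) = (Iic s).indicator fun t => L.T t * g' s := rfl
    rw [hKs, integral_indicator measurableSet_Iic, MeasureTheory.integral_mul_const,
      L.setIntegral_Iic s (Ioc_subset_Icc_self hs), mul_comm, mul_sub]
  have hgE : IntervalIntegrable (fun t => g' t * E t) volume p q :=
    (hg'.mul hE).intervalIntegrable p q
  have hswap := integral_integral_swap hK
  rw [integral_congr_ae (L.ae_mem.mono hinner_s), setIntegral_congr_fun measurableSet_Ioc hinner_t,
    ← intervalIntegral.integral_of_le hpq, intervalIntegral.integral_sub hgE
      ((hg'.mul_const _).intervalIntegrable p q), intervalIntegral.integral_mul_const,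
    intervalIntegral.integral_eq_sub_of_hasDerivAt (fun s _ => hg s)
      (hg'.intervalIntegrable p q)] at hswap
  have hgc : Continuous g := continuous_iff_continuousAt.2 fun t => (hg t).continuousAt
  have hsum := L.integral_add (f := fun t => g q - g t)
    (L.integrable_of_continuousOn (continuous_const.sub hgc).continuousOn)
    (L.integrable_of_continuousOn hgc.continuousOn)
  have hconst := L.integral_const_mul (g q) fun _ => 1
  simp only [sub_add_cancel, mul_one, L.integral_one hpq] at hsum hconst
  rw [hconst] at hsum
  change L.integral (fun t => g q - g t) = _ at hswap
  linear_combination -hsum - hswap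

/-- The mass of `|dE|` on `(x, y]`, an upper bound of the length of `E` there. -/
def length (L : LineElement E p q) (x y : ℝ) : ℝ := ∫ t in Ioc x y, ‖L.T t‖ ∂L.μ

lemma length_add (L : LineElement E p q) {x y z : ℝ} (hxy : x ≤ y) (hyz : y ≤ z) :
    L.length x z = L.length x y + L.length y z := by
  rw [length, ← Ioc_union_Ioc_eq_Ioc hxy hyz, setIntegral_union (Ioc_disjoint_Ioc_of_le le_rfl)
    measurableSet_Ioc L.integrable_T.norm.integrableOn L.integrable_T.norm.integrableOn]
  rfl

lemma norm_sub_setIntegral_le (L : LineElement E p q) {x y ε : ℝ} (hpx : p ≤ x) (hxy : x ≤ y)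
    (hyq : y ≤ q) {f : ℝ → ℂ} (hf : ContinuousOn f (Icc p q)) {c D : ℂ}
    (hD : ‖D - c * (E y - E x)‖ ≤ ε * ‖E y - E x‖) (hfc : ∀ t ∈ Icc x y, ‖f t - c‖ ≤ ε) :
    ‖D - ∫ t in Ioc x y, f t * L.T t ∂L.μ‖ ≤ 2 * ε * L.length x y := by
  have hε : 0 ≤ ε := (norm_nonneg _).trans (hfc x (left_mem_Icc.2 hxy))
  have hchord : ‖E y - E x‖ ≤ L.length x y := by
    rw [← L.setIntegral_Ioc hpx hxy hyq]
    exact MeasureTheory.norm_integral_le_integral_norm _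
  have hfT := L.integrable_mul (L.integrable_of_continuousOn hf)
  have hosc : ‖∫ t in Ioc x y, (f t - c) * L.T t ∂L.μ‖ ≤ ε * L.length x y := by
    rw [length, ← MeasureTheory.integral_const_mul]
    refine MeasureTheory.norm_integral_le_of_norm_le
      (L.integrable_T.norm.const_mul ε).integrableOn ?_
    filter_upwards [ae_restrict_mem measurableSet_Ioc] with t ht
    rw [norm_mul]
    exact mul_le_mul_of_nonneg_right (hfc t (Ioc_subset_Icc_self ht)) (norm_nonneg _)
  have hsplit : ∫ t in Ioc x y, (f t - c) * L.T t ∂L.μ =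
      (∫ t in Ioc x y, f t * L.T t ∂L.μ) - c * (E y - E x) := by
    simp only [sub_mul]
    rw [MeasureTheory.integral_sub hfT.integrableOn (L.integrable_T.const_mul c).integrableOn,
      MeasureTheory.integral_const_mul, L.setIntegral_Ioc hpx hxy hyq]
  rw [hsplit] at hosc
  calc _ ≤ ‖D - c * (E y - E x)‖ + ‖(∫ t in Ioc x y, f t * L.T t ∂L.μ) - c * (E y - E x)‖ := by
        simpa only [sub_sub_sub_cancel_right] using norm_sub_le (D - c * (E y - E x))
          ((∫ t in Ioc x y, f t * L.T t ∂L.μ) - c * (E y - E x))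
    _ ≤ ε * L.length x y + ε * L.length x y := add_le_add (hD.trans (by gcongr)) hosc
    _ = _ := by ring

lemma setIntegral_add_Ioc (L : LineElement E p q) {f : ℝ → ℂ} (hf : ContinuousOn f (Icc p q))
    {x y z : ℝ} (hxy : x ≤ y) (hyz : y ≤ z) :
    ∫ t in Ioc x z, f t * L.T t ∂L.μ =
      (∫ t in Ioc x y, f t * L.T t ∂L.μ) + ∫ t in Ioc y z, f t * L.T t ∂L.μ := by
  have hfT := L.integrable_mul (L.integrable_of_continuousOn hf)
  rw [← Ioc_union_Ioc_eq_Ioc hxy hyz, setIntegral_union (Ioc_disjoint_Ioc_of_le le_rfl)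
    measurableSet_Ioc hfT.integrableOn hfT.integrableOn]

lemma exists_pos_of_hasDerivAt {F : ℂ → ℂ} {F' : ℂ → ℂ} (hE : Continuous E) {t ε : ℝ}
    (hε : 0 < ε) (hF : HasDerivAt F (F' (E t)) (E t)) (hF' : ContinuousAt F' (E t)) :
    ∃ δ > 0, ∀ s, |s - t| < δ →
      ‖F (E s) - F (E t) - F' (E t) * (E s - E t)‖ ≤ ε * ‖E s - E t‖ ∧
        ‖F' (E s) - F' (E t)‖ ≤ ε := by
  have hlittle := ((hasDerivAt_iff_isLittleO.1 hF).comp_tendsto (hE.tendsto t)).bound hε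
  have hcont := (ContinuousAt.comp hF' hE.continuousAt).eventually
    (Metric.closedBall_mem_nhds _ hε)
  obtain ⟨δ, hδ, h⟩ := Metric.eventually_nhds_iff.1 (hlittle.and hcont)
  refine ⟨δ, hδ, fun s hs => ?_⟩
  simpa only [Function.comp_apply, smul_eq_mul, mul_comm (E s - E t), Metric.mem_closedBall,
    dist_eq_norm] using h hs

lemma norm_sub_setIntegral_deriv_comp_le (L : LineElement E p q) (hE : Continuous E) {x y ε : ℝ}
    (hε : 0 < ε) (hpx : p ≤ x) (hxy : x < y) (hyq : y ≤ q) {F F' : ℂ → ℂ}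
    (hF : ∀ t ∈ Icc x y, HasDerivAt F (F' (E t)) (E t))
    (hF' : ∀ t ∈ Icc p q, ContinuousAt F' (E t)) :
    ‖F (E y) - F (E x) - ∫ t in Ioc x y, F' (E t) * L.T t ∂L.μ‖ ≤ 2 * ε * L.length x y := by
  have hf : ContinuousOn (fun t => F' (E t)) (Icc p q) := fun t ht =>
    ((hF' t ht).comp hE.continuousAt).continuousWithinAt
  have hlocal : ∀ t ∈ Icc x y, _ := fun t ht => exists_pos_of_hasDerivAt hE hε (hF t ht)
    (hF' t ⟨hpx.trans ht.1, ht.2.trans hyq⟩)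
  refine rel_of_local (R := fun a b => x ≤ a → b ≤ y → ‖F (E b) - F (E a) -
    ∫ t in Ioc a b, F' (E t) * L.T t ∂L.μ‖ ≤ 2 * ε * L.length a b)
    (fun a b c hab hbc h1 h2 hxa hcy => ?_) hxy (fun t ht => ?_) (fun t ht => ?_) le_rfl le_rfl
  · rw [L.length_add hab.le hbc.le, L.setIntegral_add_Ioc hf hab.le hbc.le, mul_add]
    refine le_trans (le_of_eq ?_) ((norm_add_le _ _).trans
      (add_le_add (h1 hxa (hbc.le.trans hcy)) (h2 (hxa.trans hab.le) hcy)))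
    congr 1
    ring
  · obtain ⟨δ, hδ, h⟩ := hlocal t (Ico_subset_Icc_self ht)
    filter_upwards [Ioo_mem_nhdsGT (show t < t + δ by linarith)] with s hs hxt hsy
    refine L.norm_sub_setIntegral_le (hpx.trans hxt) hs.1.le (hsy.trans hyq) hf
      (h s ?_).1 fun u hu => (h u ?_).2
    · rw [abs_of_pos] <;> linarith [hs.1, hs.2]
    · rw [abs_of_nonneg] <;> linarith [hs.2, hu.1, hu.2]
  · obtain ⟨δ, hδ, h⟩ := hlocal t (Ioc_subset_Icc_self ht)
    filter_upwards [Ioo_mem_nhdsLT (show t - δ < t by linarith)] with s hs hxs hty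
    refine L.norm_sub_setIntegral_le (c := F' (E t)) (hpx.trans hxs) hs.2.le (hty.trans hyq) hf
      ?_ fun u hu => (h u ?_).2
    · have hs' := (h s (by rw [abs_of_neg] <;> linarith [hs.1, hs.2])).1
      rw [norm_sub_rev (E t) (E s)]
      refine le_of_eq_of_le ?_ hs'
      rw [← norm_neg]
      congr 1
      ring
    · rw [abs_of_nonpos] <;> linarith [hs.1, hu.1, hu.2]

lemma setIntegral_deriv_comp (L : LineElement E p q) (hE : Continuous E) {x y : ℝ} (hpx : p ≤ x)
    (hxy : x < y) (hyq : y ≤ q) {F F' : ℂ → ℂ}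
    (hF : ∀ t ∈ Icc x y, HasDerivAt F (F' (E t)) (E t))
    (hF' : ∀ t ∈ Icc p q, ContinuousAt F' (E t)) :
    ∫ t in Ioc x y, F' (E t) * L.T t ∂L.μ = F (E y) - F (E x) := by
  have hlim : Tendsto (fun ε : ℝ => 2 * ε * L.length x y) (𝓝[>] 0) (𝓝 0) := by
    refine tendsto_nhdsWithin_of_tendsto_nhds (Continuous.tendsto' (by fun_prop) _ _ ?_)
    rw [mul_zero, zero_mul]
  refine (sub_eq_zero.1 (norm_le_zero_iff.1 (ge_of_tendsto hlim ?_))).symm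
  exact eventually_mem_nhdsWithin.mono fun ε hε =>
    L.norm_sub_setIntegral_deriv_comp_le hE hε hpx hxy hyq hF hF'

lemma exp_setIntegral_inv_sub_of_dist_lt (L : LineElement E p q) (hE : Continuous E) {z ζ : ℂ}
    (hz : ∀ t ∈ Icc p q, E t ≠ z) {a b : ℝ} (hpa : p ≤ a) (hab : a < b) (hbq : b ≤ q)
    (hball : ∀ t ∈ Icc a b, dist (E t) ζ < ‖ζ - z‖) :
    Complex.exp (∫ t in Ioc a b, (E t - z)⁻¹ * L.T t ∂L.μ) * (E a - z) = E b - z := by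
  have hne : ∀ t ∈ Icc p q, E t - z ≠ 0 := fun t ht => sub_ne_zero.2 (hz t ht)
  have hζ : ζ - z ≠ 0 := norm_pos_iff.1 (dist_nonneg.trans_lt (hball a (left_mem_Icc.2 hab.le)))
  have hslit : ∀ t ∈ Icc a b, (E t - z) / (ζ - z) ∈ Complex.slitPlane := fun t ht => by
    rw [show (E t - z) / (ζ - z) = 1 + (E t - ζ) / (ζ - z) by field_simp; ring]
    refine Complex.mem_slitPlane_of_norm_lt_one ?_
    rw [norm_div, div_lt_one (norm_pos_iff.2 hζ), ← dist_eq_norm]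
    exact hball t ht
  have hab' : ∀ t ∈ Icc a b, t ∈ Icc p q := fun t ht => ⟨hpa.trans ht.1, ht.2.trans hbq⟩
  have hlog := L.setIntegral_deriv_comp hE hpa hab hbq (F' := fun w => (w - z)⁻¹)
    (F := fun w => Complex.log ((w - z) / (ζ - z))) (fun t ht => by
      refine ((((hasDerivAt_id _).sub_const z).div_const _).clog (hslit t ht)).congr_deriv ?_
      have := hne t (hab' t ht)
      simp only [id_eq]
      field_simp) (fun t ht => (continuousAt_id.sub continuousAt_const).inv₀ (hne t ht))
  have ha := left_mem_Icc.2 hab.le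
  have hb := right_mem_Icc.2 hab.le
  rw [hlog, Complex.exp_sub, Complex.exp_log (Complex.slitPlane_ne_zero (hslit b hb)),
    Complex.exp_log (Complex.slitPlane_ne_zero (hslit a ha)), div_div_div_cancel_right₀ hζ,
    div_mul_cancel₀ _ (hne a (hab' a ha))]

lemma exp_integral_inv_sub (L : LineElement E p q) (hpq : p < q) (hE : Continuous E) {z : ℂ}
    (hz : ∀ t ∈ Icc p q, E t ≠ z) :
    Complex.exp (L.integral fun t => (E t - z)⁻¹) = (E q - z) / (E p - z) := by
  have hne : ∀ t ∈ Icc p q, E t - z ≠ 0 := fun t ht => sub_ne_zero.2 (hz t ht)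
  have hcont : ContinuousOn (fun t => (E t - z)⁻¹) (Icc p q) :=
    (hE.continuousOn.sub continuousOn_const).inv₀ hne
  have hnear : ∀ x ∈ Icc p q, ∃ δ > 0, ∀ t, |t - x| < δ → dist (E t) (E x) < ‖E x - z‖ :=
    fun x hx => by
      obtain ⟨δ, hδ, h⟩ := Metric.continuousAt_iff.1 (hE.continuousAt (x := x)) _
        (norm_pos_iff.2 (hne x hx))
      exact ⟨δ, hδ, fun t ht => h ht⟩
  suffices h : p ≤ p → q ≤ q →
      Complex.exp (∫ t in Ioc p q, (E t - z)⁻¹ * L.T t ∂L.μ) * (E p - z) = E q - z by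
    rw [Measure.restrict_eq_self_of_ae_mem L.ae_mem] at h
    exact eq_div_of_mul_eq (hne p (left_mem_Icc.2 hpq.le)) (h le_rfl le_rfl)
  refine rel_of_local (R := fun a b => p ≤ a → b ≤ q →
    Complex.exp (∫ t in Ioc a b, (E t - z)⁻¹ * L.T t ∂L.μ) * (E a - z) = E b - z)
    (fun a b c hab hbc h1 h2 hpa hcq => ?_) hpq (fun x hx => ?_) (fun x hx => ?_)
  · rw [L.setIntegral_add_Ioc hcont hab.le hbc.le, Complex.exp_add, mul_right_comm,
      h1 hpa (hbc.le.trans hcq), mul_comm, h2 (hpa.trans hab.le) hcq]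
  · obtain ⟨δ, hδ, h⟩ := hnear x (Ico_subset_Icc_self hx)
    filter_upwards [Ioo_mem_nhdsGT (show x < x + δ by linarith)] with y hy hpx hyq
    refine L.exp_setIntegral_inv_sub_of_dist_lt hE hz hpx hy.1 hyq fun t ht => h t ?_
    rw [abs_of_nonneg] <;> linarith [hy.2, ht.1, ht.2]
  · obtain ⟨δ, hδ, h⟩ := hnear x (Ioc_subset_Icc_self hx)
    filter_upwards [Ioo_mem_nhdsLT (show x - δ < x by linarith)] with y hy hpy hxq
    refine L.exp_setIntegral_inv_sub_of_dist_lt hE hz hpy hy.2 hxq fun t ht => h t ?_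
    rw [abs_of_nonpos] <;> linarith [hy.1, ht.1, ht.2]

end LineElement

lemma continuousOn_invFunOn {X Y : Type*} [TopologicalSpace X] [TopologicalSpace Y] [T2Space Y]
    [Nonempty X] {f : X → Y} {K : Set X} (hK : IsCompact K) (hf : ContinuousOn f K)
    (hinj : InjOn f K) : ContinuousOn (Function.invFunOn f K) (f '' K) := by
  refine continuousOn_iff_isClosed.2 fun C hC => ⟨f '' (K ∩ C),
    ((hK.inter_right hC).image_of_continuousOn (hf.mono inter_subset_left)).isClosed, ?_⟩
  ext y
  constructor
  · rintro ⟨h1, x, hx, rfl⟩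
    rw [mem_preimage, hinj.leftInvOn_invFunOn hx] at h1
    exact ⟨⟨x, ⟨hx, h1⟩, rfl⟩, x, hx, rfl⟩
  · rintro ⟨⟨x, ⟨hx, h1⟩, rfl⟩, h2⟩
    exact ⟨by rwa [mem_preimage, hinj.leftInvOn_invFunOn hx], h2⟩

lemma exists_frequently_mem_image_inter {X Y ι : Type*} [TopologicalSpace X] [TopologicalSpace Y]
    [T2Space Y] [Nonempty X] {f : X → Y} {K : Set X} (hK : IsCompact K) (hf : ContinuousOn f K)
    (hinj : InjOn f K) {l : Filter ι} {u : ι → Y} {w : Y} (hu : Tendsto u l (𝓝 w))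
    (hfreq : ∃ᶠ y in l, u y ∈ f '' K) :
    ∃ s₀ ∈ K, f s₀ = w ∧ ∀ U ∈ 𝓝 s₀, ∃ᶠ y in l, u y ∈ f '' (K ∩ U) := by
  obtain ⟨s₀, hs₀, h0⟩ : w ∈ f '' K :=
    (hK.image_of_continuousOn hf).isClosed.mem_of_frequently_of_tendsto hfreq hu
  refine ⟨s₀, hs₀, h0, fun U hU => ?_⟩
  have hinv := continuousOn_invFunOn hK hf hinj _ (mem_image_of_mem f hs₀)
  rw [ContinuousWithinAt, hinj.leftInvOn_invFunOn hs₀, h0] at hinv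
  refine (hfreq.and_eventually (hu.eventually (eventually_nhdsWithin_iff.1 (hinv hU)))).mono ?_
  rintro y ⟨⟨s, hs, hsy⟩, hyU⟩
  refine ⟨s, ⟨hs, ?_⟩, hsy⟩
  simpa only [← hsy, mem_preimage, hinj.leftInvOn_invFunOn hs] using hyU ⟨s, hs, hsy⟩

namespace LineElement

variable {E : ℝ → ℂ} {p q : ℝ}

/-- The density with respect to `μ` of the variation of the argument of `E - z`. -/
def kernel (L : LineElement E p q) (z : ℂ) (t : ℝ) : ℝ := ((E t - z)⁻¹ * L.T t).im

/-- The variation of `arg (E - z)` exceeds its increment by at most `ε`, and `π` by at most `ε`,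
uniformly in `z`. -/
def Small (L : LineElement E p q) (ε : ℝ) : Prop := ∀ z, (∀ t ∈ Icc p q, E t ≠ z) →
  (∫ t, |L.kernel z t| ∂L.μ) ≤ |∫ t, L.kernel z t ∂L.μ| + ε ∧
    (∫ t, |L.kernel z t| ∂L.μ) ≤ Real.pi + ε

end LineElement

/-- `τ` is an increasing change of parameter from `[a, b]` to `[p, q]` that turns `E` into a
Dini arc with velocity `V`. -/
structure IsPiece (E V : ℝ → ℂ) (τ : ℝ → ℝ) (a b p q : ℝ) : Prop where
  arc : IsDiniArc (fun s => E (τ s)) V a b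
  mono : StrictMonoOn τ (Icc a b)
  cont : ContinuousOn τ (Icc a b)
  left : τ a = p
  right : τ b = q

namespace IsPiece

variable {E V : ℝ → ℂ} {τ : ℝ → ℝ} {a b p q : ℝ}

lemma image_Icc (P : IsPiece E V τ a b p q) : τ '' Icc a b = Icc p q := by
  rw [← P.left, ← P.right]
  refine Subset.antisymm (image_subset_iff.2 fun s hs => ?_)
    (intermediate_value_Icc P.arc.lt.le P.cont)
  exact ⟨P.mono.monotoneOn (left_mem_Icc.2 P.arc.lt.le) hs hs.1,
    P.mono.monotoneOn hs (right_mem_Icc.2 P.arc.lt.le) hs.2⟩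

lemma mapsTo (P : IsPiece E V τ a b p q) : MapsTo τ (Icc a b) (Icc p q) :=
  mapsTo_iff_image_subset.2 P.image_Icc.subset

lemma surjOn (P : IsPiece E V τ a b p q) : SurjOn τ (Icc a b) (Icc p q) := P.image_Icc.superset

lemma sub (P : IsPiece E V τ a b p q) {a' b' : ℝ} (hab : a' < b') (hsub : Icc a' b' ⊆ Icc a b) :
    IsPiece E V τ a' b' (τ a') (τ b') :=
  ⟨P.arc.sub hab hsub, P.mono.mono hsub, P.cont.mono hsub, rfl, rfl⟩

lemma continuousOn_inv (P : IsPiece E V τ a b p q) :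
    ContinuousOn (Function.invFunOn τ (Icc a b)) (Icc p q) :=
  P.image_Icc ▸ continuousOn_invFunOn isCompact_Icc P.cont P.mono.injOn

lemma inv_apply (P : IsPiece E V τ a b p q) {s : ℝ} (hs : s ∈ Icc a b) :
    Function.invFunOn τ (Icc a b) (τ s) = s := P.mono.injOn.leftInvOn_invFunOn hs

lemma mapsTo_inv (P : IsPiece E V τ a b p q) :
    MapsTo (Function.invFunOn τ (Icc a b)) (Icc p q) (Icc a b) := fun t ht => by
  obtain ⟨s, hs, rfl⟩ := P.surjOn ht
  rwa [P.inv_apply hs]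

lemma continuousOn_curve (P : IsPiece E V τ a b p q) : ContinuousOn E (Icc p q) :=
  (P.arc.continuousOn.comp P.continuousOn_inv P.mapsTo_inv).congr fun t ht => by
    obtain ⟨s, hs, rfl⟩ := P.surjOn ht
    simp only [Function.comp_apply, P.inv_apply hs]

lemma aemeasurable (P : IsPiece E V τ a b p q) :
    AEMeasurable τ (volume.restrict (Ioc a b)) :=
  (P.cont.mono Ioc_subset_Icc_self).aemeasurable measurableSet_Ioc

lemma ae_mem (P : IsPiece E V τ a b p q) :
    ∀ᵐ t ∂Measure.map τ (volume.restrict (Ioc a b)), t ∈ Ioc p q := by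
  refine (ae_map_iff P.aemeasurable measurableSet_Ioc).2 ?_
  filter_upwards [ae_restrict_mem measurableSet_Ioc] with s hs
  exact ⟨P.left ▸ P.mono (left_mem_Icc.2 P.arc.lt.le) (Ioc_subset_Icc_self hs) hs.1,
    (P.mapsTo (Ioc_subset_Icc_self hs)).2⟩

lemma aestronglyMeasurable (P : IsPiece E V τ a b p q) {F : Type*} [NormedAddCommGroup F]
    {g : ℝ → F} (hg : ContinuousOn g (Icc p q)) :
    AEStronglyMeasurable g (Measure.map τ (volume.restrict (Ioc a b))) := by
  rw [← Measure.restrict_eq_self_of_ae_mem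
    (P.ae_mem.mono fun t ht => Ioc_subset_Icc_self ht)]
  exact hg.aestronglyMeasurable_of_isCompact isCompact_Icc measurableSet_Icc

lemma continuousOn_velocity (P : IsPiece E V τ a b p q) :
    ContinuousOn (fun t => V (Function.invFunOn τ (Icc a b) t)) (Icc p q) :=
  P.arc.cont.comp P.continuousOn_inv P.mapsTo_inv

/-- The line element of `E` obtained from the parametrization `E ∘ τ`. -/
def lineElement (P : IsPiece E V τ a b p q) : LineElement E p q where
  μ := Measure.map τ (volume.restrict (Ioc a b))
  T t := V (Function.invFunOn τ (Icc a b) t)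
  finite := inferInstance
  measure_compl := mem_ae_iff.1 P.ae_mem
  aestronglyMeasurable := P.aestronglyMeasurable P.continuousOn_velocity
  bounded := by
    obtain ⟨C, hC⟩ := isCompact_Icc.exists_bound_of_continuousOn P.continuousOn_velocity
    exact ⟨C, P.ae_mem.mono fun t ht => hC t (Ioc_subset_Icc_self ht)⟩
  setIntegral_Iic x hx := by
    obtain ⟨s₀, hs₀, rfl⟩ := P.surjOn hx
    have hind : ∀ s ∈ Ioc a b, (Iic (τ s₀)).indicator
        (fun t => V (Function.invFunOn τ (Icc a b) t)) (τ s) = (Iic s₀).indicator V s :=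
      fun s hs => by
        simp only [indicator_apply, mem_Iic, P.inv_apply (Ioc_subset_Icc_self hs),
          P.mono.le_iff_le (Ioc_subset_Icc_self hs) hs₀]
    have hsub : Icc a s₀ ⊆ Icc a b := Icc_subset_Icc_right hs₀.2
    rw [← integral_indicator measurableSet_Iic, integral_map P.aemeasurable
      ((P.aestronglyMeasurable P.continuousOn_velocity).indicator measurableSet_Iic),
      setIntegral_congr_fun measurableSet_Ioc hind, setIntegral_indicator measurableSet_Iic,
      Ioc_inter_Iic, min_eq_right hs₀.2, ← intervalIntegral.integral_of_le hs₀.1,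
      intervalIntegral.integral_eq_sub_of_hasDerivAt_of_le hs₀.1 (P.arc.continuousOn.mono hsub)
        (fun s hs => (P.arc.deriv s (hsub (Ioo_subset_Icc_self hs))).hasDerivAt
          (Icc_mem_nhds hs.1 (hs.2.trans_le hs₀.2)))
        ((P.arc.cont.mono hsub).intervalIntegrable_of_Icc hs₀.1), P.left]

lemma integral_eq (P : IsPiece E V τ a b p q) {F : Type*} [NormedAddCommGroup F]
    [NormedSpace ℝ F] {g : ℝ → F} (hg : ContinuousOn g (Icc p q)) :
    ∫ t, g t ∂P.lineElement.μ = ∫ s in a..b, g (τ s) := by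
  rw [intervalIntegral.integral_of_le P.arc.lt.le]
  exact integral_map P.aemeasurable (P.aestronglyMeasurable hg)

lemma exists_small (P : IsPiece E V τ a b p q) {ε : ℝ} (hε : 0 < ε) :
    ∃ η > 0, ∀ p' q', p ≤ p' → p' < q' → q' ≤ q → q' - p' < η →
      ∃ L : LineElement E p' q', L.Small ε := by
  obtain ⟨δ, hδ, hsmall⟩ := P.arc.exists_integral_abs_im_div_le hε
  obtain ⟨η, hη, hclose⟩ := Metric.uniformContinuousOn_iff.1
    (isCompact_Icc.uniformContinuousOn_of_continuous P.continuousOn_inv) δ hδ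
  refine ⟨η, hη, fun p' q' hp hpq hq hlen => ?_⟩
  have hp' : p' ∈ Icc p q := ⟨hp, hpq.le.trans hq⟩
  have hq' : q' ∈ Icc p q := ⟨hp.trans hpq.le, hq⟩
  have hdist := hclose q' hq' p' hp' (by rwa [Real.dist_eq, abs_of_pos (sub_pos.2 hpq)])
  obtain ⟨a', ha', rfl⟩ := P.surjOn hp'
  obtain ⟨b', hb', rfl⟩ := P.surjOn hq'
  have hab : a' < b' := (P.mono.lt_iff_lt ha' hb').1 hpq
  have hsub : Icc a' b' ⊆ Icc a b := Icc_subset_Icc ha'.1 hb'.2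
  rw [P.inv_apply ha', P.inv_apply hb', Real.dist_eq, abs_of_pos (sub_pos.2 hab)] at hdist
  have Q := P.sub hab hsub
  refine ⟨Q.lineElement, fun z hz => ?_⟩
  have hkernel : ContinuousOn (Q.lineElement.kernel z) (Icc (τ a') (τ b')) :=
    Complex.continuous_im.comp_continuousOn (((Q.continuousOn_curve.sub continuousOn_const).inv₀
      fun t ht => sub_ne_zero.2 (hz t ht)).mul Q.continuousOn_velocity)
  have hval : EqOn (fun s => Q.lineElement.kernel z (τ s))
      (fun s => (V s / (E (τ s) - z)).im) (uIcc a' b') := fun s hs => by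
    rw [uIcc_of_le hab.le] at hs
    simp only [LineElement.kernel, lineElement, Q.inv_apply hs, inv_mul_eq_div]
  rw [Q.integral_eq hkernel, Q.integral_eq (g := fun t => |Q.lineElement.kernel z t|)
    hkernel.abs, intervalIntegral.integral_congr hval,
    intervalIntegral.integral_congr fun s hs => congrArg abs (hval hs)]
  exact hsmall a' b' hab hsub hdist z fun s hs => hz _ (Q.mapsTo hs)

end IsPiece

lemma IsDiniArc.exists_isPiece {E γ γ' : ℝ → ℂ} {τ : ℝ → ℝ} {a b : ℝ} (h : IsDiniArc γ γ' a b)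
    (hτ : ContinuousOn τ (Icc a b)) (hinj : InjOn τ (Icc a b))
    (hE : EqOn (fun s => E (τ s)) γ (Icc a b)) :
    ∃ V σ a' b', IsPiece E V σ a' b' (min (τ a) (τ b)) (max (τ a) (τ b)) := by
  rcases le_total (τ a) (τ b) with hle | hle
  · exact ⟨γ', τ, a, b, h.congr hE, hτ.strictMonoOn_of_injOn_Icc h.lt.le hle hinj, hτ,
      (min_eq_left hle).symm, (max_eq_right hle).symm⟩
  · have hanti := hτ.strictAntiOn_of_injOn_Icc h.lt.le hle hinj
    have hneg : MapsTo (fun s : ℝ => -s) (Icc (-b) (-a)) (Icc a b) :=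
      fun s hs => neg_mem_Icc_iff.2 hs
    refine ⟨_, fun s => τ (-s), -b, -a, (h.congr hE).reverse,
      fun s hs t ht hst => hanti (hneg ht) (hneg hs) (neg_lt_neg hst),
      hτ.comp continuous_neg.continuousOn hneg, ?_, ?_⟩
    · simp only [neg_neg, min_eq_right hle]
    · simp only [neg_neg, max_eq_left hle]

/-- A continuous parametrization of a Jordan curve by the circle `ℝ / 2πℤ`. -/
structure IsLoop (E : ℝ → ℂ) : Prop where
  cont : Continuous E
  per : Function.Periodic E (2 * Real.pi)
  inj : ∀ s t, E s = E t → ∃ n : ℤ, t - s = n * (2 * Real.pi)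

namespace IsLoop

variable {E : ℝ → ℂ}

lemma injOn_Ico (hE : IsLoop E) (p : ℝ) : InjOn E (Ico p (p + 2 * Real.pi)) :=
  fun s hs t ht hst => by
    obtain ⟨n, hn⟩ := hE.inj s t hst
    have hlt : |(n : ℝ)| < 1 := by
      refine lt_of_mul_lt_mul_right (a := 2 * Real.pi) ?_ Real.two_pi_pos.le
      rw [← abs_of_pos Real.two_pi_pos, ← abs_mul, ← hn, abs_of_pos Real.two_pi_pos, abs_lt]
      constructor <;> linarith [hs.1, hs.2, ht.1, ht.2]
    have hn0 : n = 0 := Int.abs_lt_one_iff.1 (by exact_mod_cast hlt)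
    rw [hn0, Int.cast_zero, zero_mul, sub_eq_zero] at hn
    exact hn.symm

lemma image_Icc_mem_nhdsWithin (hE : IsLoop E) (x : ℝ) :
    E '' Icc (x - 1) (x + 1) ∈ 𝓝[range E] (E x) := by
  have hpi := Real.pi_gt_three
  set far := E '' Icc (x + 1) (x - 1 + 2 * Real.pi)
  have hfar : E x ∉ far := by
    rintro ⟨t, ht, hEt⟩
    have := hE.injOn_Ico x ⟨by linarith [ht.1], by linarith [ht.2]⟩ ⟨le_rfl, by linarith⟩ hEt
    linarith [ht.1]
  filter_upwards [mem_nhdsWithin_of_mem_nhds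
    ((isCompact_Icc.image hE.cont).isClosed.isOpen_compl.mem_nhds hfar), self_mem_nhdsWithin]
  rintro _ hnot ⟨t, rfl⟩
  obtain ⟨t', ht', hE'⟩ := hE.per.exists_mem_Ico Real.two_pi_pos t (x - 1)
  rw [hE'] at hnot ⊢
  refine mem_image_of_mem E ⟨ht'.1, le_of_not_gt fun hc => hnot ?_⟩
  exact mem_image_of_mem E ⟨hc.le, ht'.2.le⟩

lemma exists_lift (hE : IsLoop E) {γ : ℝ → ℂ} {a b s₀ x : ℝ} (hγ : ContinuousOn γ (Icc a b))
    (hsub : γ '' Icc a b ⊆ range E) (hs₀ : s₀ ∈ Icc a b) (h0 : γ s₀ = E x) :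
    ∃ δ > 0, ∃ G : ℂ → ℝ, LeftInvOn G E (Icc (x - 1) (x + 1)) ∧
      ContinuousOn (fun s => G (γ s)) (Icc a b ∩ Metric.ball s₀ δ) ∧
      ∀ s ∈ Icc a b ∩ Metric.ball s₀ δ, E (G (γ s)) = γ s := by
  have hinj : InjOn E (Icc (x - 1) (x + 1)) := (hE.injOn_Ico (x - 1)).mono
    (Icc_subset_Ico_right (by linarith [Real.pi_gt_three]))
  have hG := continuousOn_invFunOn isCompact_Icc hE.cont.continuousOn hinj
  have hlim : Tendsto γ (𝓝[Icc a b] s₀) (𝓝[range E] (E x)) :=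
    tendsto_nhdsWithin_iff.2 ⟨h0 ▸ hγ s₀ hs₀,
      eventually_mem_nhdsWithin.mono fun s hs => hsub (mem_image_of_mem γ hs)⟩
  obtain ⟨δ, hδ, hball⟩ :=
    Metric.mem_nhdsWithin_iff.1 (hlim.eventually (hE.image_Icc_mem_nhdsWithin x))
  rw [inter_comm] at hball
  refine ⟨δ, hδ, _, hinj.leftInvOn_invFunOn, hG.comp (hγ.mono inter_subset_left) hball,
    fun s hs => ?_⟩
  exact Function.invFunOn_eq (hball hs)

lemma exists_isPiece (hE : IsLoop E) {γ γ' : ℝ → ℂ} {a b x : ℝ} {S : Set ℝ}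
    (h : IsDiniArc γ γ' a b) (hγ : InjOn γ (Icc a b)) (hsub : γ '' Icc a b ⊆ range E)
    (hx : x ∉ S) (hfreq : ∃ᶠ y in 𝓝[S] x, E y ∈ γ '' Icc a b) :
    ∃ y ∈ S, ∃ V τ a' b', IsPiece E V τ a' b' (min x y) (max x y) := by
  have hEx : Tendsto E (𝓝[S] x) (𝓝 (E x)) := hE.cont.continuousAt.mono_left nhdsWithin_le_nhds
  obtain ⟨s₀, hs₀, h0, hnear⟩ :=
    exists_frequently_mem_image_inter isCompact_Icc h.continuousOn hγ hEx hfreq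
  obtain ⟨δ, hδ, G, hGE, hGc, hEG⟩ := hE.exists_lift h.continuousOn hsub hs₀ h0
  have hx1 : ∀ᶠ y in 𝓝[S] x, y ∈ Icc (x - 1) (x + 1) :=
    mem_nhdsWithin_of_mem_nhds (Icc_mem_nhds (by linarith) (by linarith))
  obtain ⟨y, ⟨s, ⟨hs, hsδ⟩, hsy⟩, hy1, hyS⟩ :=
    ((hnear _ (Metric.ball_mem_nhds s₀ hδ)).and_eventually
      (hx1.and self_mem_nhdsWithin)).exists
  set τ := fun s => G (γ s)
  have hτ0 : τ s₀ = x := by simp only [τ, h0, hGE (show x ∈ _ from ⟨by linarith, by linarith⟩)]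
  have hτs : τ s = y := by simp only [τ, hsy, hGE hy1]
  have hI : uIcc s₀ s ⊆ Icc a b ∩ Metric.ball s₀ δ := subset_inter (uIcc_subset_Icc hs₀ hs)
    ((convex_ball s₀ δ).ordConnected.uIcc_subset (Metric.mem_ball_self hδ) hsδ)
  have hinj : InjOn τ (uIcc s₀ s) := fun u hu v hv huv => hγ (hI hu).1 (hI hv).1 <| by
    rw [← hEG u (hI hu), ← hEG v (hI hv)]
    exact congrArg E huv
  have hne : s₀ ≠ s := fun hss => hx (by rwa [← hτ0, hss, hτs])
  obtain ⟨V, σ, a', b', hP⟩ :=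
    (h.sub (inf_lt_sup.2 hne) (hI.trans inter_subset_left)).exists_isPiece
    (hGc.mono hI) hinj fun s hs => hEG s (hI hs)
  refine ⟨y, hyS, V, σ, a', b', ?_⟩
  rcases le_total s₀ s with hle | hle
  · rwa [inf_eq_left.2 hle, sup_eq_right.2 hle, hτ0, hτs] at hP
  · rwa [inf_eq_right.2 hle, sup_eq_left.2 hle, hτ0, hτs, min_comm, max_comm] at hP

end IsLoop

/-- A Jordan curve that is a finite union of Dini-smooth arcs, parametrized by `ℝ / 2πℤ`; the
parametrization itself need not be smooth. -/
structure IsDiniLoop (E : ℝ → ℂ) : Prop extends IsLoop E where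
  range_eq : ∃ (N : ℕ) (γ γ' : Fin N → ℝ → ℂ) (a b : Fin N → ℝ),
    (∀ i, IsDiniSmoothArc (γ i) (γ' i) (a i) (b i)) ∧ range E = ⋃ i, γ i '' Icc (a i) (b i)

namespace IsDiniLoop

variable {E : ℝ → ℂ}

lemma exists_isPiece (hE : IsDiniLoop E) {x : ℝ} {S : Set ℝ} [(𝓝[S] x).NeBot] (hx : x ∉ S) :
    ∃ y ∈ S, ∃ V τ a b, IsPiece E V τ a b (min x y) (max x y) := by
  obtain ⟨N, γ, γ', a, b, harc, hrange⟩ := hE.range_eq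
  have hfreq : ∃ i, ∃ᶠ y in 𝓝[S] x, E y ∈ γ i '' Icc (a i) (b i) := by
    by_contra! hc
    obtain ⟨y, hy⟩ := (eventually_all.2 hc).exists
    obtain ⟨i, hi⟩ := mem_iUnion.1 (hrange ▸ mem_range_self (f := E) y)
    exact hy i hi
  obtain ⟨i, hi⟩ := hfreq
  exact hE.toIsLoop.exists_isPiece (harc i).isDiniArc (harc i).inj
    (hrange ▸ subset_iUnion (fun i => γ i '' Icc (a i) (b i)) i) hx hi

lemma eventually_small_right (hE : IsDiniLoop E) (x : ℝ) {ε : ℝ} (hε : 0 < ε) :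
    ∀ᶠ y in 𝓝[>] x, ∃ L : LineElement E x y, L.Small ε := by
  obtain ⟨y, hy, V, τ, a, b, P⟩ := hE.exists_isPiece (x := x) (S := Ioi x) (lt_irrefl x)
  rw [min_eq_left hy.le, max_eq_right hy.le] at P
  obtain ⟨η, hη, hsmall⟩ := P.exists_small hε
  filter_upwards [Ioo_mem_nhdsGT (lt_min hy (show x < x + η by linarith))] with u hu
  have hu2 := lt_min_iff.1 hu.2
  exact hsmall x u le_rfl hu.1 hu2.1.le (by linarith)

lemma eventually_small_left (hE : IsDiniLoop E) (x : ℝ) {ε : ℝ} (hε : 0 < ε) :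
    ∀ᶠ y in 𝓝[<] x, ∃ L : LineElement E y x, L.Small ε := by
  obtain ⟨y, hy, V, τ, a, b, P⟩ := hE.exists_isPiece (x := x) (S := Iio x) (lt_irrefl x)
  rw [min_eq_right hy.le, max_eq_left hy.le] at P
  obtain ⟨η, hη, hsmall⟩ := P.exists_small hε
  filter_upwards [Ioo_mem_nhdsLT (max_lt hy (show x - η < x by linarith))] with u hu
  have hu1 := max_lt_iff.1 hu.1
  exact hsmall u x hu1.1.le hu.2 le_rfl (by linarith)

lemma nonempty_lineElement (hE : IsDiniLoop E) {p q : ℝ} (hpq : p < q) :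
    Nonempty (LineElement E p q) := by
  refine rel_of_local (R := fun p q => Nonempty (LineElement E p q))
    (fun p q r hpq hqr ⟨L₁⟩ ⟨L₂⟩ => ⟨L₁.concat L₂ hpq.le hqr.le⟩) hpq
    (fun x _ => (hE.eventually_small_right x one_pos).mono fun y hy => ?_)
    (fun x _ => (hE.eventually_small_left x one_pos).mono fun y hy => ?_)
  all_goals exact ⟨hy.choose⟩

end IsDiniLoop

/-! ### A Riemann–Lebesgue lemma -/

/-- The character `t ↦ e^{ikt}` of the circle `ℝ / 2πℤ`. -/
def expMulI (k : ℤ) (t : ℝ) : ℂ := Complex.exp (k * t * Complex.I)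

lemma expMulI_one (t : ℝ) : expMulI 1 t = Complex.exp (t * Complex.I) := by
  rw [expMulI, Int.cast_one, one_mul]

lemma expMulI_one_zpow (k : ℤ) (t : ℝ) : expMulI 1 t ^ k = expMulI k t := by
  rw [expMulI_one, ← Complex.exp_int_mul, expMulI, mul_assoc]

lemma expMulI_add (j k : ℤ) (t : ℝ) : expMulI (j + k) t = expMulI j t * expMulI k t := by
  simp only [expMulI, ← Complex.exp_add, Int.cast_add, add_mul]

lemma continuous_expMulI (k : ℤ) : Continuous (expMulI k) := by
  unfold expMulI
  fun_prop

lemma norm_expMulI (k : ℤ) (t : ℝ) : ‖expMulI k t‖ = 1 := by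
  simpa [expMulI] using Complex.norm_exp_ofReal_mul_I (k * t)

lemma conj_expMulI (k : ℤ) (t : ℝ) : conj (expMulI k t) = expMulI (-k) t := by
  simp [expMulI, ← Complex.exp_conj]

lemma hasDerivAt_expMulI (k : ℤ) (t : ℝ) :
    HasDerivAt (expMulI k) (k * Complex.I * expMulI k t) t := by
  have h : HasDerivAt (fun t : ℝ => (k : ℂ) * t * Complex.I) (k * 1 * Complex.I) t :=
    (Complex.ofRealCLM.hasDerivAt.const_mul (k : ℂ)).mul_const _
  exact h.cexp.congr_deriv (by rw [expMulI]; ring)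

lemma fourier_two_pi_coe (k : ℤ) (t : ℝ) :
    fourier k (t : AddCircle (2 * Real.pi)) = expMulI k t := by
  have hπ : (Real.pi : ℂ) ≠ 0 := Complex.ofReal_ne_zero.2 Real.pi_ne_zero
  rw [fourier_coe_apply, expMulI]
  congr 1
  push_cast
  field_simp

lemma exists_span_expMulI_dist_le (g : C(AddCircle (2 * Real.pi), ℂ)) {ε : ℝ} (hε : 0 < ε) :
    ∃ P ∈ Submodule.span ℂ (range expMulI), ∀ t : ℝ, ‖g t - P t‖ ≤ ε := by
  have : Fact (0 < 2 * Real.pi) := ⟨Real.two_pi_pos⟩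
  have hmem : g ∈ (Submodule.span ℂ (range (@fourier (2 * Real.pi)))).topologicalClosure := by
    rw [span_fourier_closure_eq_top]
    trivial
  obtain ⟨h, hh, hgh⟩ := Metric.mem_closure_iff.1 hmem ε hε
  let pull : C(AddCircle (2 * Real.pi), ℂ) →ₗ[ℂ] (ℝ → ℂ) :=
    { toFun := fun g t => g t
      map_add' := fun _ _ => rfl
      map_smul' := fun _ _ => rfl }
  refine ⟨pull h, ?_, fun t => ?_⟩
  · have hpull : pull '' range fourier = range expMulI := by
      rw [← range_comp]
      exact congrArg range (funext fun k => funext fun t => fourier_two_pi_coe k t)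
    rw [← hpull, ← Submodule.map_span]
    exact Submodule.mem_map_of_mem hh
  · rw [← dist_eq_norm]
    exact (ContinuousMap.dist_apply_le_dist _).trans hgh.le

lemma continuous_of_mem_span_expMulI {P : ℝ → ℂ}
    (hP : P ∈ Submodule.span ℂ (range expMulI)) : Continuous P :=
  Submodule.span_induction (p := fun P _ => Continuous P)
    (by rintro _ ⟨k, rfl⟩; exact continuous_expMulI k) continuous_const
    (fun _ _ _ _ => Continuous.add) (fun c _ _ h => h.const_smul c) hP

lemma exists_addCircle_integral_norm_sub_le {μ : Measure ℝ} [IsFiniteMeasure μ] {T p : ℝ}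
    [Fact (0 < T)] (hμ : ∀ᵐ t ∂μ, t ∈ Ioc p (p + T)) {f : ℝ → ℂ} (hf : Integrable f μ) {ε : ℝ}
    (hε : 0 < ε) : ∃ g : C(AddCircle T, ℂ), ∫ t, ‖f t - g t‖ ∂μ ≤ ε := by
  let coe : ℝ → AddCircle T := (↑)
  let s : AddCircle T → ℝ := fun x => AddCircle.measurableEquivIoc _ p x
  have hcoe : Measurable coe := AddCircle.measurable_mk'
  have hs : Measurable s :=
    measurable_subtype_coe.comp (AddCircle.measurableEquivIoc _ p).measurable
  have hsc : s ∘ coe =ᵐ[μ] id := hμ.mono fun t ht =>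
    congrArg Subtype.val ((AddCircle.equivIoc T p).apply_symm_apply ⟨t, ht⟩)
  have hmap : (μ.map coe).map s = μ := by
    rw [Measure.map_map hs hcoe, Measure.map_congr hsc, Measure.map_id]
  have hfs : Integrable (f ∘ s) (μ.map coe) := (hmap.symm ▸ hf).comp_measurable hs
  obtain ⟨g, hg, hgi⟩ := hfs.exists_boundedContinuous_integral_sub_le hε
  refine ⟨g.toContinuousMap, ?_⟩
  have hgm := (hfs.sub hgi).norm.aestronglyMeasurable
  simp only [Pi.sub_apply] at hgm
  rw [integral_map hcoe.aemeasurable hgm] at hg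
  refine (integral_congr_ae (hsc.mono fun t ht => ?_)).trans_le hg
  simp only [Function.comp, id] at ht ⊢
  rw [ht]
  rfl

lemma exists_span_expMulI_integral_norm_sub_le {μ : Measure ℝ} [IsFiniteMeasure μ] {p : ℝ}
    (hμ : ∀ᵐ t ∂μ, t ∈ Ioc p (p + 2 * Real.pi)) {f : ℝ → ℂ} (hf : Integrable f μ) {ε : ℝ}
    (hε : 0 < ε) :
    ∃ P ∈ Submodule.span ℂ (range expMulI), Integrable P μ ∧ ∫ t, ‖f t - P t‖ ∂μ ≤ ε := by
  have : Fact (0 < 2 * Real.pi) := ⟨Real.two_pi_pos⟩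
  obtain ⟨g, hg⟩ := exists_addCircle_integral_norm_sub_le hμ hf (half_pos hε)
  have hε' : 0 < ε / (2 * (μ.real univ + 1)) := by positivity
  obtain ⟨P, hP, hgP⟩ := exists_span_expMulI_dist_le g hε'
  have hPc := continuous_of_mem_span_expMulI hP
  have hgc : Continuous fun t : ℝ => g t := by fun_prop
  have hgi : Integrable (fun t : ℝ => g t) μ :=
    .of_bound hgc.aestronglyMeasurable ‖g‖ (ae_of_all _ fun t => g.norm_coe_le_norm t)
  have hsub : Integrable (fun t : ℝ => g t - P t) μ :=
    .of_bound (hgc.sub hPc).aestronglyMeasurable _ (ae_of_all _ fun t => hgP t)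
  have hPi : Integrable P μ :=
    (hgi.sub hsub).congr (ae_of_all _ fun t => sub_sub_cancel (g t) (P t))
  have hfg : Integrable (fun t => ‖f t - g t‖) μ := (hf.sub hgi).norm
  refine ⟨P, hP, hPi, ?_⟩
  calc ∫ t, ‖f t - P t‖ ∂μ ≤ ∫ t, (‖f t - g t‖ + ε / (2 * (μ.real univ + 1))) ∂μ :=
        integral_mono_of_nonneg (ae_of_all _ fun _ => norm_nonneg _)
          (hfg.add (integrable_const _)) (ae_of_all _ fun t =>
            (norm_sub_le_norm_sub_add_norm_sub _ _ _).trans (add_le_add_right (hgP t) _))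
    _ = ∫ t, ‖f t - g t‖ ∂μ + μ.real univ * (ε / (2 * (μ.real univ + 1))) := by
        rw [integral_add hfg (integrable_const _), integral_const, smul_eq_mul]
    _ ≤ ε / 2 + ε / 2 := by
        gcongr
        have := measureReal_nonneg (μ := μ) (s := univ)
        rw [mul_div_assoc', div_le_div_iff₀ (by positivity) two_pos]
        nlinarith
    _ = ε := add_halves ε

namespace LineElement

variable {E : ℝ → ℂ} {p : ℝ}

lemma norm_integral_le_integral_norm {q : ℝ} (L : LineElement E p q) :
    ∃ C, 0 < C ∧ ∀ f, Integrable f L.μ → ‖L.integral f‖ ≤ C * ∫ t, ‖f t‖ ∂L.μ := by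
  obtain ⟨C, hC⟩ := L.bounded
  refine ⟨|C| + 1, by positivity, fun f hf => ?_⟩
  rw [← MeasureTheory.integral_const_mul]
  refine norm_integral_le_of_norm_le (hf.norm.const_mul _) (hC.mono fun t ht => ?_)
  rw [norm_mul, mul_comm]
  exact mul_le_mul_of_nonneg_right (ht.trans ((le_abs_self C).trans (lt_add_one _).le))
    (norm_nonneg _)

lemma integrable_expMulI_mul {q : ℝ} (L : LineElement E p q) (k : ℤ) {f : ℝ → ℂ}
    (hf : Integrable f L.μ) : Integrable (fun t => expMulI k t * f t) L.μ :=
  hf.bdd_mul (continuous_expMulI k).aestronglyMeasurable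
    (ae_of_all _ fun t => (norm_expMulI k t).le)

lemma tendsto_integral_expMulI_mul_span {q : ℝ} (L : LineElement E p q)
    (h : Tendsto (fun k => L.integral (expMulI k)) atBot (𝓝 0)) {P : ℝ → ℂ}
    (hP : P ∈ Submodule.span ℂ (range expMulI)) :
    Tendsto (fun k => L.integral fun t => expMulI k t * P t) atBot (𝓝 0) := by
  induction hP using Submodule.span_induction with
  | mem _ hx =>
    obtain ⟨j, rfl⟩ := hx
    simp only [← expMulI_add]
    exact h.comp (tendsto_atBot_add_const_right _ j tendsto_id)
  | zero => simp [LineElement.integral]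
  | add P Q hP hQ hPt hQt =>
    have hint {R : ℝ → ℂ} (hR : R ∈ Submodule.span ℂ (range expMulI)) (k : ℤ) :
        Integrable (fun t => expMulI k t * R t) L.μ := L.integrable_of_continuousOn
      ((continuous_expMulI k).mul (continuous_of_mem_span_expMulI hR)).continuousOn
    simpa only [Pi.add_apply, mul_add, L.integral_add (hint hP _) (hint hQ _), add_zero]
      using hPt.add hQt
  | smul c P _ hPt =>
    simpa only [Pi.smul_apply, smul_eq_mul, mul_left_comm _ c, integral_const_mul, mul_zero]
      using hPt.const_mul c

lemma tendsto_integral_expMulI_mul_atBot (L : LineElement E p (p + 2 * Real.pi))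
    (h : Tendsto (fun k => L.integral (expMulI k)) atBot (𝓝 0)) {f : ℝ → ℂ}
    (hf : Integrable f L.μ) :
    Tendsto (fun k => L.integral fun t => expMulI k t * f t) atBot (𝓝 0) := by
  obtain ⟨C, hC, hL⟩ := L.norm_integral_le_integral_norm
  refine Metric.tendsto_nhds.2 fun ε hε => ?_
  obtain ⟨P, hP, hPi, hfP⟩ :=
    exists_span_expMulI_integral_norm_sub_le L.ae_mem hf (ε := ε / (2 * C)) (by positivity)
  filter_upwards [Metric.tendsto_nhds.1 (L.tendsto_integral_expMulI_mul_span h hP) (ε / 2)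
    (half_pos hε)] with k hk
  have hsub : Integrable (fun t => f t - P t) L.μ := hf.sub hPi
  have hsplit : (L.integral fun t => expMulI k t * f t) =
      (L.integral fun t => expMulI k t * (f t - P t)) + L.integral fun t => expMulI k t * P t := by
    rw [← L.integral_add (L.integrable_expMulI_mul k hsub)
      (L.integrable_expMulI_mul k hPi)]
    simp only [← mul_add, sub_add_cancel]
  have hsmall : ‖L.integral fun t => expMulI k t * (f t - P t)‖ ≤ ε / 2 := by
    refine (hL _ (L.integrable_expMulI_mul k hsub)).trans ?_
    simp only [norm_mul, norm_expMulI, one_mul]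
    calc C * ∫ t, ‖f t - P t‖ ∂L.μ ≤ C * (ε / (2 * C)) := by gcongr
      _ = ε / 2 := by field_simp
  rw [dist_zero_right] at hk ⊢
  rw [hsplit]
  linarith [norm_add_le (L.integral fun t => expMulI k t * (f t - P t))
    (L.integral fun t => expMulI k t * P t)]

theorem tendsto_integral_expMulI_mul (L : LineElement E p (p + 2 * Real.pi))
    (h : Tendsto (fun k => L.integral (expMulI k)) atBot (𝓝 0)) {f : ℝ → ℂ}
    (hf : Integrable f L.μ) :
    Tendsto (fun k => L.integral fun t => expMulI k t * f t) cofinite (𝓝 0) := by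
  rw [Int.cofinite_eq]
  refine (L.tendsto_integral_expMulI_mul_atBot h hf).sup ?_
  let g : ℝ → ℂ := fun t => conj (f t) * (conj (L.T t) / L.T t)
  have hg : Integrable g L.μ := by
    refine Integrable.mul_bdd (c := 1) ?_ ?_ (ae_of_all _ fun t => ?_)
    · exact (LinearIsometryEquiv.integrable_comp_iff (Complex.conjLIE)).2 hf
    · exact ((Complex.continuous_conj.comp_aestronglyMeasurable
        L.aestronglyMeasurable).aemeasurable.div
          L.aestronglyMeasurable.aemeasurable).aestronglyMeasurable
    · rw [norm_div, RCLike.norm_conj]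
      exact div_self_le_one _
  have hconj (k : ℤ) : conj (L.integral fun t => expMulI (-k) t * g t) =
      L.integral fun t => expMulI k t * f t := by
    rw [LineElement.integral, ← integral_conj]
    refine integral_congr_ae (ae_of_all _ fun t => ?_)
    have hT : conj (L.T t) / L.T t * L.T t = conj (L.T t) := by
      rcases eq_or_ne (L.T t) 0 with h0 | h0
      · simp [h0]
      · exact div_mul_cancel₀ _ h0
    simp only [g, mul_assoc, hT, map_mul, conj_expMulI, neg_neg, Complex.conj_conj]
  have hlim := ((L.tendsto_integral_expMulI_mul_atBot h hg).comp tendsto_neg_atTop_atBot)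
  simpa only [Function.comp_def, hconj, map_zero] using
    (Complex.continuous_conj.tendsto 0).comp hlim

lemma tendsto_integral_expMulI_mul_of_concat {q : ℝ} (N : LineElement E p q)
    (L : LineElement E q (p + 2 * Real.pi)) (hpq : p ≤ q) (hqp : q ≤ p + 2 * Real.pi)
    (h : Tendsto (fun k => (N.concat L hpq hqp).integral (expMulI k)) atBot (𝓝 0)) {f : ℝ → ℂ}
    (hf : Integrable f L.μ) :
    Tendsto (fun k => L.integral fun t => expMulI k t * f t) cofinite (𝓝 0) := by
  have hN : (Ioi q).indicator f =ᵐ[N.μ] 0 :=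
    N.ae_mem.mono fun t ht => indicator_of_notMem (notMem_Ioi.2 ht.2) f
  have hL : (Ioi q).indicator f =ᵐ[L.μ] f :=
    L.ae_mem.mono fun t ht => indicator_of_mem (mem_Ioi.2 ht.1) f
  have hNi : Integrable ((Ioi q).indicator f) N.μ := (integrable_congr hN).2 (integrable_zero ..)
  have hLi : Integrable ((Ioi q).indicator f) L.μ := hf.congr hL.symm
  refine (tendsto_integral_expMulI_mul _ h (hNi.add_measure hLi)).congr fun k => ?_
  rw [integral_concat _ _ _ _ (N.integrable_expMulI_mul k hNi) (L.integrable_expMulI_mul k hLi)]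
  have hN0 : N.integral (fun t => expMulI k t * (Ioi q).indicator f t) = 0 :=
    integral_eq_zero_of_ae (hN.mono fun t ht => by simp [ht])
  rw [hN0, zero_add]
  exact integral_congr_ae (hL.mono fun t ht => by simp only [ht])

end LineElement

/-! ### The exterior conformal map -/

lemma isPreconnected_setOf_lt_norm {E : Type*} [NormedAddCommGroup E] [NormedSpace ℝ E]
    (hE : 1 < Module.rank ℝ E) {r : ℝ} (hr : 0 ≤ r) : IsPreconnected {x : E | r < ‖x‖} := by
  have himage : {x : E | r < ‖x‖} =
      (fun q : ℝ × E => q.1 • q.2) '' (Ioi r ×ˢ Metric.sphere (0 : E) 1) := by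
    ext x
    simp only [mem_ofPred_eq, mem_image, mem_prod, mem_Ioi, mem_sphere_zero_iff_norm, Prod.exists]
    constructor
    · intro hx
      have hx0 : ‖x‖ ≠ 0 := (hr.trans_lt hx).ne'
      exact ⟨‖x‖, ‖x‖⁻¹ • x, ⟨hx, by rw [norm_smul, norm_inv, norm_norm, inv_mul_cancel₀ hx0]⟩,
        smul_inv_smul₀ hx0 x⟩
    · rintro ⟨t, u, ⟨ht, hu⟩, rfl⟩
      rwa [norm_smul, hu, mul_one, Real.norm_of_nonneg (hr.trans ht.le)]
  rw [himage]
  exact (isPreconnected_Ioi.prod (isPreconnected_sphere hE 0 1)).image _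
    (continuous_fst.smul continuous_snd).continuousOn

lemma isOpen_setOf_lt_norm (r : ℝ) : IsOpen {w : ℂ | r < ‖w‖} :=
  isOpen_lt continuous_const continuous_norm

lemma eventually_lt_norm (r : ℝ) : ∀ᶠ w : ℂ in Bornology.cobounded ℂ, r < ‖w‖ :=
  tendsto_norm_cobounded_atTop.eventually_gt_atTop r

lemma ne_zero_of_one_le_norm {w : ℂ} (hw : 1 ≤ ‖w‖) : w ≠ 0 :=
  norm_pos_iff.1 (zero_lt_one.trans_le hw)

lemma IsJordanCurve.isCompact {Γ : Set ℂ} (h : IsJordanCurve Γ) : IsCompact Γ := by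
  obtain ⟨f, hf, hper, -, rfl⟩ := h
  rw [← hper.image_Icc Real.two_pi_pos 0]
  exact isCompact_Icc.image hf

lemma isOpen_exteriorDomain {Γ : Set ℂ} (h : IsClosed Γ) : IsOpen (exteriorDomain Γ) := by
  rw [isOpen_iff_mem_nhds]
  rintro z ⟨hz, hb⟩
  filter_upwards [(h.isOpen_compl.connectedComponentIn (x := z)).mem_nhds
    (mem_connectedComponentIn hz)] with y hy
  refine ⟨connectedComponentIn_subset _ _ hy, ?_⟩
  rwa [← connectedComponentIn_eq hy]

lemma exteriorDomain_mem_cobounded {Γ : Set ℂ} (h : Bornology.IsBounded Γ) :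
    exteriorDomain Γ ∈ Bornology.cobounded ℂ := by
  obtain ⟨R, hR, hΓ⟩ := h.exists_pos_norm_le
  filter_upwards [eventually_lt_norm R] with z hz
  have hsub : {w : ℂ | R < ‖w‖} ⊆ Γᶜ := fun w hw hwΓ => (hΓ w hwΓ).not_gt hw
  refine ⟨hsub hz, fun hb => ?_⟩
  have hconn : IsPreconnected {w : ℂ | R < ‖w‖} := isPreconnected_setOf_lt_norm (by simp) hR.le
  obtain ⟨M, hM⟩ := (hb.subset (hconn.subset_connectedComponentIn hz hsub)).exists_norm_le
  obtain ⟨w, hw⟩ := (eventually_lt_norm (max R M)).exists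
  exact (hM w ((le_max_left R M).trans_lt hw)).not_gt ((le_max_right R M).trans_lt hw)

section

variable {Γ : Set ℂ} {φ ψ : ℂ → ℂ} {c : ℝ}

lemma IsExteriorParam.one_lt_norm_and_apply_eq (hφ : IsExteriorMap Γ φ c)
    (hψ : IsExteriorParam Γ φ ψ) {z : ℂ} (hz : z ∈ exteriorDomain Γ) :
    1 < ‖φ z‖ ∧ ψ (φ z) = z := by
  have h1 : 1 < ‖φ z‖ := hφ.bij.mapsTo hz
  obtain ⟨h2, h3⟩ := hψ.inv _ h1
  exact ⟨h1, hφ.bij.injOn h2 hz h3⟩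

lemma eventually_deriv_ne_zero_of_injOn {f : ℂ → ℂ} {U : Set ℂ} {z : ℂ} (hU : IsOpen U)
    (hf : DifferentiableOn ℂ f U) (hinj : InjOn f U) (hz : z ∈ U) :
    ∀ᶠ y in 𝓝[≠] z, deriv f y ≠ 0 := by
  have hana : AnalyticAt ℂ (deriv f) z := (hf.analyticAt (hU.mem_nhds hz)).deriv
  refine hana.eventually_eq_zero_or_eventually_ne_zero.resolve_left fun hzero => ?_
  obtain ⟨r, hr, hball⟩ := Metric.eventually_nhds_iff_ball.1 (hzero.and (hU.mem_nhds hz))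
  have hy : z + (r / 2 : ℝ) ∈ Metric.ball z r := by
    rw [Metric.mem_ball, dist_self_add_left, Complex.norm_real, Real.norm_eq_abs,
      abs_of_pos (half_pos hr)]
    exact half_lt_self hr
  have hconst : f (z + (r / 2 : ℝ)) = f z :=
    Metric.isOpen_ball.is_const_of_deriv_eq_zero (convex_ball z r).isPreconnected
      (hf.mono fun y hy => (hball y hy).2) (fun y hy => (hball y hy).1) hy (Metric.mem_ball_self hr)
  have := hinj (hball _ hy).2 hz hconst
  rw [add_eq_left, Complex.ofReal_eq_zero] at this
  exact (half_pos hr).ne' this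

lemma IsExteriorParam.differentiableOn (hΓ : IsClosed Γ) (hφ : IsExteriorMap Γ φ c)
    (hψ : IsExteriorParam Γ φ ψ) : DifferentiableOn ℂ ψ {w : ℂ | 1 < ‖w‖} := by
  have hΩ := isOpen_exteriorDomain hΓ
  have hcont : ∀ w : ℂ, 1 < ‖w‖ → ContinuousAt ψ w := fun w hw =>
    hψ.cont.continuousAt (mem_of_superset ((isOpen_setOf_lt_norm 1).mem_nhds hw)
      fun y (hy : 1 < ‖y‖) => hy.le)
  have hregular : ∀ w : ℂ, 1 < ‖w‖ → deriv φ (ψ w) ≠ 0 → DifferentiableAt ℂ ψ w := by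
    intro w hw hd
    have hderiv : HasDerivAt φ (deriv φ (ψ w)) (ψ w) :=
      (hφ.diff.differentiableAt (hΩ.mem_nhds (hψ.inv w hw).1)).hasDerivAt
    exact (hderiv.of_local_left_inverse (hcont w hw) hd (by
      filter_upwards [(isOpen_setOf_lt_norm 1).mem_nhds hw] with y hy
      exact (hψ.inv y hy).2)).differentiableAt
  intro w hw
  have hpunctured : Tendsto ψ (𝓝[≠] w) (𝓝[≠] (ψ w)) := by
    refine tendsto_nhdsWithin_iff.2 ⟨(hcont w hw).mono_left nhdsWithin_le_nhds, ?_⟩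
    filter_upwards [self_mem_nhdsWithin,
      nhdsWithin_le_nhds ((isOpen_setOf_lt_norm 1).mem_nhds hw)] with y hyw hy hψy
    exact hyw (hψ.inj (le_of_lt hy : 1 ≤ ‖y‖) (le_of_lt hw : 1 ≤ ‖w‖) hψy)
  refine (Complex.analyticAt_of_differentiable_on_punctured_nhds_of_continuousAt ?_
    (hcont w hw)).differentiableAt.differentiableWithinAt
  filter_upwards [hpunctured.eventually (eventually_deriv_ne_zero_of_injOn hΩ hφ.diff
    hφ.bij.injOn (hψ.inv w hw).1), nhdsWithin_le_nhds ((isOpen_setOf_lt_norm 1).mem_nhds hw)]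
    with y hd hy
  exact hregular y hy hd

lemma IsExteriorMap.tendsto_div_cobounded (hΓ : Bornology.IsBounded Γ)
    (hφ : IsExteriorMap Γ φ c) :
    Tendsto (fun z => φ z / z) (Bornology.cobounded ℂ) (𝓝 (c : ℂ)⁻¹) := by
  have := hφ.tendsto
  rwa [inf_eq_left.2 (le_principal_iff.2 (exteriorDomain_mem_cobounded hΓ))] at this

lemma tendsto_cobounded_of_tendsto_div {f : ℂ → ℂ} {ℓ : ℂ} (hℓ : ℓ ≠ 0)
    (hf : Tendsto (fun z => f z / z) (Bornology.cobounded ℂ) (𝓝 ℓ)) :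
    Tendsto f (Bornology.cobounded ℂ) (Bornology.cobounded ℂ) := by
  rw [← tendsto_norm_atTop_iff_cobounded]
  refine (hf.norm.pos_mul_atTop (norm_pos_iff.2 hℓ) tendsto_norm_cobounded_atTop).congr' ?_
  filter_upwards [Bornology.eventually_ne_cobounded 0] with z hz
  rw [← norm_mul, div_mul_cancel₀ _ hz]

lemma IsExteriorParam.tendsto_cobounded (hΓ : Bornology.IsBounded Γ) (hφ : IsExteriorMap Γ φ c)
    (hψ : IsExteriorParam Γ φ ψ) :
    Tendsto ψ (Bornology.cobounded ℂ) (Bornology.cobounded ℂ) := by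
  have hφ_lim : Tendsto φ (Bornology.cobounded ℂ) (Bornology.cobounded ℂ) :=
    tendsto_cobounded_of_tendsto_div (inv_ne_zero (Complex.ofReal_ne_zero.2 hφ.cpos.ne'))
      (hφ.tendsto_div_cobounded hΓ)
  obtain ⟨R₀, hR₀⟩ : ∃ R₀ : ℝ, ∀ z : ℂ, R₀ < ‖z‖ → z ∈ exteriorDomain Γ := by
    obtain ⟨R₀, -, h⟩ := (Metric.hasBasis_cobounded_compl_closedBall (0 : ℂ)).eventually_iff.1
      (exteriorDomain_mem_cobounded hΓ)
    exact ⟨R₀, fun z hz => h (by simpa using hz)⟩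
  rw [← tendsto_norm_atTop_iff_cobounded, tendsto_atTop]
  intro R
  set R' := max R (R₀ + 1)
  have hR' : R₀ < R' := (lt_add_one R₀).trans_le (le_max_right _ _)
  have hsphere : Metric.sphere (0 : ℂ) R' ⊆ exteriorDomain Γ := fun z hz =>
    hR₀ z (by rwa [mem_sphere_zero_iff_norm.1 hz])
  obtain ⟨M, hM⟩ := (isCompact_sphere (0 : ℂ) R').exists_bound_of_continuousOn
    (hφ.diff.continuousOn.mono hsphere)
  set V := {w : ℂ | max M 1 < ‖w‖}
  have hV : ∀ w ∈ V, M < ‖w‖ ∧ 1 < ‖w‖ := fun w (hw : max M 1 < ‖w‖) => max_lt_iff.1 hw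
  have hψV : IsPreconnected ((fun w => ‖ψ w‖) '' V) :=
    (isPreconnected_setOf_lt_norm (by simp) (le_max_of_le_right zero_le_one)).image _
      (hψ.cont.mono fun w hw => (hV w hw).2.le).norm
  have hmiss : R' ∉ (fun w => ‖ψ w‖) '' V := by
    rintro ⟨w, hw, hψw⟩
    have := hM (ψ w) (mem_sphere_zero_iff_norm.2 hψw)
    rw [(hψ.inv w (hV w hw).2).2] at this
    exact this.not_gt (hV w hw).1
  obtain ⟨z, hzφ, hz⟩ := ((hφ_lim.eventually (eventually_lt_norm (max M 1))).and
    (eventually_lt_norm R')).exists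
  have hψz := (hψ.one_lt_norm_and_apply_eq hφ (hR₀ z (hR'.trans hz))).2
  filter_upwards [eventually_lt_norm (max M 1)] with w hw
  by_contra! hlt
  refine hmiss (hψV.ordConnected.out (mem_image_of_mem _ hw) (mem_image_of_mem _ hzφ)
    ⟨hlt.le.trans (le_max_left _ _), ?_⟩)
  rw [hψz]
  exact hz.le

end

lemma tendsto_deriv_of_tendsto_div {f : ℂ → ℂ} {ℓ : ℂ}
    (hf : ∀ᶠ w in Bornology.cobounded ℂ, DifferentiableAt ℂ f w)
    (hlim : Tendsto (fun w => f w / w) (Bornology.cobounded ℂ) (𝓝 ℓ)) :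
    Tendsto (deriv f) (Bornology.cobounded ℂ) (𝓝 ℓ) := by
  set h : ℂ → ℂ := Function.update (fun v => f v⁻¹ * v) 0 ℓ
  have h_zero : h 0 = ℓ := Function.update_self ..
  have h_of_ne : ∀ v ≠ 0, h v = f v⁻¹ * v := fun v hv => Function.update_of_ne hv ..
  have han : AnalyticAt ℂ h 0 := by
    refine Complex.analyticAt_of_differentiable_on_punctured_nhds_of_continuousAt ?_ ?_
    · filter_upwards [tendsto_inv₀_nhdsNE_zero hf, self_mem_nhdsWithin] with v hv (hv0 : v ≠ 0)
      refine DifferentiableAt.congr_of_eventuallyEq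
        ((DifferentiableAt.comp v hv (differentiableAt_inv hv0)).mul differentiableAt_id) ?_
      filter_upwards [isOpen_ne.mem_nhds hv0] with u hu using h_of_ne u hu
    · rw [continuousAt_iff_punctured_nhds, h_zero]
      refine (hlim.comp tendsto_inv₀_nhdsNE_zero).congr' ?_
      filter_upwards [self_mem_nhdsWithin] with v hv
      rw [h_of_ne v hv, Function.comp_apply, div_inv_eq_mul]
  have hinv : Tendsto (fun w : ℂ => w⁻¹) (Bornology.cobounded ℂ) (𝓝 0) := tendsto_inv₀_cobounded
  have hlim' : Tendsto (fun w : ℂ => h w⁻¹ - deriv h w⁻¹ * w⁻¹) (Bornology.cobounded ℂ)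
      (𝓝 (h 0 - deriv h 0 * 0)) :=
    (han.continuousAt.tendsto.comp hinv).sub ((han.deriv.continuousAt.tendsto.comp hinv).mul hinv)
  rw [mul_zero, sub_zero, h_zero] at hlim'
  refine hlim'.congr' ?_
  filter_upwards [hinv.eventually han.eventually_analyticAt,
    Bornology.eventually_ne_cobounded 0] with w hw hw0
  have hd : HasDerivAt (fun u => u * h u⁻¹) (1 * h w⁻¹ + w * (deriv h w⁻¹ * -(w ^ 2)⁻¹)) w :=
    (hasDerivAt_id w).mul (hw.differentiableAt.hasDerivAt.comp w (hasDerivAt_inv hw0))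
  have hfd : HasDerivAt f (1 * h w⁻¹ + w * (deriv h w⁻¹ * -(w ^ 2)⁻¹)) w := by
    refine hd.congr_of_eventuallyEq ?_
    filter_upwards [isOpen_ne.mem_nhds hw0] with u (hu : u ≠ 0)
    rw [h_of_ne _ (inv_ne_zero hu), inv_inv, mul_left_comm, mul_inv_cancel₀ hu, mul_one]
  rw [hfd.deriv]
  field_simp
  ring

lemma circleIntegral_eq_of_tendsto {f : ℂ → ℂ} {ℓ : ℂ} {r : ℝ} (hr : 0 < r)
    (hf : ∀ w, r ≤ ‖w‖ → DifferentiableAt ℂ f w)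
    (hlim : Tendsto (fun w => w * f w) (Bornology.cobounded ℂ) (𝓝 ℓ)) :
    ∮ w in C(0, r), f w = 2 * Real.pi * Complex.I * ℓ := by
  have hconst : ∀ᶠ R in atTop, ∮ w in C(0, R), f w = ∮ w in C(0, r), f w := by
    filter_upwards [eventually_ge_atTop r] with R hR
    refine Complex.circleIntegral_eq_of_differentiable_on_annulus_off_countable hr hR
      countable_empty (fun w hw => (hf w ?_).continuousAt.continuousWithinAt)
      fun w hw => hf w ?_
    · simpa using hw.2
    · exact le_of_lt (by simpa using hw.1.2)
  have hcircle (θ : ℝ) : Tendsto (fun R : ℝ => circleMap 0 R θ) atTop (Bornology.cobounded ℂ) := by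
    rw [← tendsto_norm_atTop_iff_cobounded]
    simpa using tendsto_abs_atTop_atTop
  obtain ⟨R₀, hR₀⟩ : ∃ R₀ : ℝ, ∀ w : ℂ, R₀ < ‖w‖ → ‖w * f w‖ ≤ ‖ℓ‖ + 1 := by
    obtain ⟨R₀, -, h⟩ := (Metric.hasBasis_cobounded_compl_closedBall (0 : ℂ)).eventually_iff.1
      (hlim.norm.eventually_le_const (lt_add_one _))
    exact ⟨R₀, fun w hw => h (by simpa using hw)⟩
  have hlarge : Tendsto (fun R : ℝ => ∮ w in C(0, R), f w) atTop
      (𝓝 (∫ _ in (0 : ℝ)..2 * Real.pi, Complex.I * ℓ)) := by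
    refine intervalIntegral.tendsto_integral_filter_of_dominated_convergence (fun _ => ‖ℓ‖ + 1)
      ?_ ?_ intervalIntegrable_const (ae_of_all _ fun θ _ => ?_)
    · filter_upwards [eventually_ge_atTop r] with R hR
      refine Continuous.aestronglyMeasurable ?_
      have hfR : Continuous fun θ => f (circleMap 0 R θ) := continuous_iff_continuousAt.2 fun θ =>
        ContinuousAt.comp (hf _ (by simpa using hR.trans (le_abs_self R))).continuousAt
          (continuous_circleMap 0 R).continuousAt
      simp only [deriv_circleMap]
      exact ((continuous_circleMap 0 R).mul continuous_const).smul hfR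
    · filter_upwards [eventually_gt_atTop R₀] with R hR
      refine ae_of_all _ fun θ _ => ?_
      rw [deriv_circleMap, smul_eq_mul, mul_right_comm, norm_mul, Complex.norm_I, mul_one]
      exact hR₀ _ (by simpa using hR.trans_le (le_abs_self R))
    · simp only [deriv_circleMap, smul_eq_mul]
      exact ((hlim.comp (hcircle θ)).const_mul Complex.I).congr fun R => by
        rw [Function.comp_apply]; ring
  have := tendsto_nhds_unique (tendsto_const_nhds.congr' (hconst.mono fun _ => Eq.symm)) hlarge
  rw [this, intervalIntegral.integral_const, sub_zero, Complex.real_smul]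
  push_cast
  ring

/-- The boundary curve `t ↦ ψ(e^{it})`. -/
def bdry (ψ : ℂ → ℂ) (t : ℝ) : ℂ := ψ (expMulI 1 t)

lemma expMulI_periodic (k : ℤ) : Function.Periodic (expMulI k) (2 * Real.pi) := fun t => by
  unfold expMulI
  rw [← Complex.exp_periodic.int_mul k (k * t * Complex.I)]
  push_cast
  ring_nf

lemma periodic_bdry (ψ : ℂ → ℂ) : Function.Periodic (bdry ψ) (2 * Real.pi) := fun t => by
  rw [bdry, expMulI_periodic, bdry]

lemma circleMap_zero_one (t : ℝ) : circleMap 0 1 t = expMulI 1 t := by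
  rw [circleMap, expMulI_one, zero_add, Complex.ofReal_one, one_mul]

/-- `ψ` maps `{|w| > 1}` conformally onto a neighbourhood of `∞` fixing `∞`, and extends
injectively and continuously to the unit circle. -/
structure IsExtMap (ψ : ℂ → ℂ) : Prop where
  cont : ContinuousOn ψ {w : ℂ | 1 ≤ ‖w‖}
  inj : InjOn ψ {w : ℂ | 1 ≤ ‖w‖}
  diff : DifferentiableOn ℂ ψ {w : ℂ | 1 < ‖w‖}
  pole : ∃ c : ℂ, c ≠ 0 ∧ Tendsto (fun w => ψ w / w) (Bornology.cobounded ℂ) (𝓝 c)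

lemma IsExteriorParam.isExtMap {Γ : Set ℂ} {φ ψ : ℂ → ℂ} {c : ℝ} (hΓ : IsCompact Γ)
    (hφ : IsExteriorMap Γ φ c) (hψ : IsExteriorParam Γ φ ψ) : IsExtMap ψ where
  cont := hψ.cont
  inj := hψ.inj
  diff := hψ.differentiableOn hΓ.isClosed hφ
  pole := by
    have hc : (c : ℂ) ≠ 0 := Complex.ofReal_ne_zero.2 hφ.cpos.ne'
    refine ⟨c, hc, ?_⟩
    have h := ((hφ.tendsto_div_cobounded hΓ.isBounded).comp
      (hψ.tendsto_cobounded hΓ.isBounded hφ)).inv₀ (inv_ne_zero hc)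
    rw [inv_inv] at h
    refine h.congr' ?_
    filter_upwards [eventually_lt_norm 1] with w hw
    simp only [Function.comp_apply, (hψ.inv w hw).2, inv_div]

namespace IsExtMap

variable {ψ : ℂ → ℂ}

lemma differentiableAt (hψ : IsExtMap ψ) {w : ℂ} (hw : 1 < ‖w‖) : DifferentiableAt ℂ ψ w :=
  hψ.diff.differentiableAt ((isOpen_setOf_lt_norm 1).mem_nhds hw)

lemma differentiableAt_deriv (hψ : IsExtMap ψ) {w : ℂ} (hw : 1 < ‖w‖) :
    DifferentiableAt ℂ (deriv ψ) w :=
  (hψ.diff.deriv (isOpen_setOf_lt_norm 1)).differentiableAt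
    ((isOpen_setOf_lt_norm 1).mem_nhds hw)

lemma tendsto_cobounded (hψ : IsExtMap ψ) :
    Tendsto ψ (Bornology.cobounded ℂ) (Bornology.cobounded ℂ) := by
  obtain ⟨c, hc, hlim⟩ := hψ.pole
  exact tendsto_cobounded_of_tendsto_div hc hlim

lemma continuous_bdry (hψ : IsExtMap ψ) : Continuous (bdry ψ) :=
  hψ.cont.comp_continuous (continuous_expMulI 1) fun t => (norm_expMulI 1 t).ge

lemma integral_bdry_eq_circleIntegral (hψ : IsExtMap ψ) {p r : ℝ}
    (L : LineElement (bdry ψ) p (p + 2 * Real.pi)) {g : ℂ → ℂ} (hr : r < 1)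
    (hg : DifferentiableOn ℂ g {w | r < ‖w‖}) :
    L.integral (fun t => g (expMulI 1 t)) = -∮ w in C(0, 1), deriv g w * ψ w := by
  have hU := isOpen_setOf_lt_norm r
  have hmem (t : ℝ) : r < ‖expMulI 1 t‖ := by rwa [norm_expMulI]
  have hderiv (t : ℝ) : HasDerivAt (fun t => g (expMulI 1 t))
      (deriv g (expMulI 1 t) * (expMulI 1 t * Complex.I)) t := by
    have h := (hg.differentiableAt (hU.mem_nhds (hmem t))).hasDerivAt
    exact (h.comp t (hasDerivAt_expMulI 1 t)).congr_deriv (by push_cast; ring)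
  have hcont : Continuous fun t => deriv g (expMulI 1 t) * (expMulI 1 t * Complex.I) :=
    ((hg.deriv hU).continuousOn.comp_continuous (continuous_expMulI 1) hmem).mul
      ((continuous_expMulI 1).mul continuous_const)
  have hper : Function.Periodic
      (fun t => deriv g (expMulI 1 t) * (expMulI 1 t * Complex.I) * bdry ψ t) (2 * Real.pi) :=
    fun t => by simp only [expMulI_periodic 1 t, periodic_bdry ψ t]
  rw [L.integral_eq_sub_integral_deriv (by linarith [Real.pi_pos]) hψ.continuous_bdry hderiv hcont,
    expMulI_periodic, periodic_bdry, sub_self, zero_sub, hper.intervalIntegral_add_eq p 0, zero_add,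
    circleIntegral]
  congr 1
  refine intervalIntegral.integral_congr fun t _ => ?_
  simp only [deriv_circleMap, circleMap_zero_one, smul_eq_mul, bdry]
  ring

lemma integral_bdry_of_differentiableOn (hψ : IsExtMap ψ) {p r : ℝ}
    (L : LineElement (bdry ψ) p (p + 2 * Real.pi)) {g : ℂ → ℂ} {c m : ℂ} (hr : r < 1)
    (hg : DifferentiableOn ℂ g {w | r < ‖w‖})
    (hc : Tendsto (fun w => ψ w / w) (Bornology.cobounded ℂ) (𝓝 c))
    (hlim : Tendsto (fun w => w * g w) (Bornology.cobounded ℂ) (𝓝 m)) :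
    L.integral (fun t => g (expMulI 1 t)) = 2 * Real.pi * Complex.I * (m * c) := by
  have hU := isOpen_setOf_lt_norm r
  have hgd {w : ℂ} (hw : 1 ≤ ‖w‖) : DifferentiableAt ℂ g w :=
    hg.differentiableAt (hU.mem_nhds (hr.trans_le hw))
  have hg'd {w : ℂ} (hw : 1 ≤ ‖w‖) : DifferentiableAt ℂ (deriv g) w :=
    (hg.deriv hU).differentiableAt (hU.mem_nhds (hr.trans_le hw))
  have hdeform : ∮ w in C(0, 2), deriv g w * ψ w = ∮ w in C(0, 1), deriv g w * ψ w := by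
    refine Complex.circleIntegral_eq_of_differentiable_on_annulus_off_countable one_pos one_le_two
      countable_empty (fun w hw => ?_) fun w hw => ?_
    · have hw1 : 1 ≤ ‖w‖ := by simpa using hw.2
      exact (hg'd hw1).continuousAt.continuousWithinAt.mul ((hψ.cont w hw1).mono fun u hu => by
        simpa using hu.2)
    · have hw1 : 1 < ‖w‖ := by simpa using hw.1.2
      exact (hg'd hw1.le).mul (hψ.differentiableAt hw1)
  have hsphere {w : ℂ} (hw : w ∈ Metric.sphere (0 : ℂ) 2) : 1 < ‖w‖ := by
    rw [mem_sphere_zero_iff_norm.1 hw]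
    exact one_lt_two
  have hparts : ∮ w in C(0, 2), (deriv g w * ψ w + g w * deriv ψ w) = 0 :=
    circleIntegral.integral_eq_zero_of_hasDerivWithinAt (f := fun w => g w * ψ w) two_pos.le
      fun w hw => ((hgd (hsphere hw).le).hasDerivAt.mul
        (hψ.differentiableAt (hsphere hw)).hasDerivAt).hasDerivWithinAt
  rw [circleIntegral.integral_add] at hparts
  · rw [hψ.integral_bdry_eq_circleIntegral L hr hg, ← hdeform, neg_eq_of_add_eq_zero_right hparts]
    refine circleIntegral_eq_of_tendsto two_pos (fun w hw => ?_) ?_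
    · have hw1 : 1 < ‖w‖ := one_lt_two.trans_le hw
      exact (hgd hw1.le).mul (hψ.differentiableAt_deriv hw1)
    · have hψ' := tendsto_deriv_of_tendsto_div
        ((eventually_lt_norm 1).mono fun w hw => hψ.differentiableAt hw) hc
      simpa only [mul_assoc] using hlim.mul hψ'
  all_goals
    refine ContinuousOn.circleIntegrable two_pos.le fun w hw => ContinuousAt.continuousWithinAt ?_
    have hw1 := hsphere hw
  · exact (hg'd hw1.le).continuousAt.mul (hψ.differentiableAt hw1).continuousAt
  · exact (hgd hw1.le).continuousAt.mul (hψ.differentiableAt_deriv hw1).continuousAt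

theorem integral_bdry (hψ : IsExtMap ψ) {p : ℝ}
    (L : LineElement (bdry ψ) p (p + 2 * Real.pi)) {g : ℂ → ℂ} {c m : ℂ}
    (hgc : ContinuousOn g {w | 1 ≤ ‖w‖}) (hgd : DifferentiableOn ℂ g {w | 1 < ‖w‖})
    (hc : Tendsto (fun w => ψ w / w) (Bornology.cobounded ℂ) (𝓝 c))
    (hlim : Tendsto (fun w => w * g w) (Bornology.cobounded ℂ) (𝓝 m)) :
    L.integral (fun t => g (expMulI 1 t)) = 2 * Real.pi * Complex.I * (m * c) := by
  have hscaled (ρ : ℝ) (hρ : 1 < ρ) : L.integral (fun t => g (ρ * expMulI 1 t)) =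
      2 * Real.pi * Complex.I * ((ρ : ℂ)⁻¹ * m * c) := by
    have hρ0 : 0 < ρ := one_pos.trans hρ
    have hnorm (w : ℂ) : ‖ρ * w‖ = ρ * ‖w‖ := by
      rw [norm_mul, Complex.norm_real, Real.norm_of_nonneg hρ0.le]
    refine hψ.integral_bdry_of_differentiableOn L (g := fun w => g (ρ * w))
      (inv_lt_one_of_one_lt₀ hρ) ?_ hc ?_
    · refine hgd.comp (differentiable_id.const_mul (ρ : ℂ)).differentiableOn fun w hw => ?_
      change 1 < ‖ρ * w‖
      rwa [hnorm, ← inv_lt_iff_one_lt_mul₀' hρ0]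
    · have hcob : Tendsto (fun w : ℂ => ρ * w) (Bornology.cobounded ℂ) (Bornology.cobounded ℂ) := by
        rw [← tendsto_norm_atTop_iff_cobounded]
        simp only [hnorm]
        exact tendsto_norm_cobounded_atTop.const_mul_atTop hρ0
      refine ((hlim.comp hcob).const_mul (ρ : ℂ)⁻¹).congr fun w => ?_
      rw [Function.comp_apply, mul_assoc, inv_mul_cancel_left₀ (Complex.ofReal_ne_zero.2 hρ0.ne')]
  have hcont : ContinuousOn (fun ρ : ℝ => L.integral (fun t => g (ρ * expMulI 1 t))) (Ici 1) := by
    refine L.continuousOn_integral (hgc.comp (Continuous.continuousOn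
      ((Complex.continuous_ofReal.comp continuous_fst).mul
        ((continuous_expMulI 1).comp continuous_snd))) fun q hq => ?_)
    change 1 ≤ ‖(q.1 : ℂ) * expMulI 1 q.2‖
    rw [norm_mul, norm_expMulI, mul_one, Complex.norm_real]
    exact le_trans hq.1 (le_abs_self _)
  have hleft : Tendsto (fun ρ : ℝ => L.integral (fun t => g (ρ * expMulI 1 t))) (𝓝[>] 1)
      (𝓝 (L.integral fun t => g (expMulI 1 t))) := by
    simpa using (hcont 1 self_mem_Ici).mono_left (nhdsWithin_mono _ Ioi_subset_Ici_self)
  have hright : Tendsto (fun ρ : ℝ => 2 * Real.pi * Complex.I * ((ρ : ℂ)⁻¹ * m * c)) (𝓝[>] 1)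
      (𝓝 (2 * Real.pi * Complex.I * (((1 : ℝ) : ℂ)⁻¹ * m * c))) := by
    have h : ContinuousAt (fun ρ : ℝ => (ρ : ℂ)⁻¹) 1 :=
      Complex.continuous_ofReal.continuousAt.inv₀ (by simp)
    exact ((h.tendsto.mono_left nhdsWithin_le_nhds).mul_const m |>.mul_const c).const_mul _
  rw [Complex.ofReal_one, inv_one, one_mul] at hright
  exact tendsto_nhds_unique (hleft.congr' (by
    filter_upwards [self_mem_nhdsWithin] with ρ hρ using hscaled ρ hρ)) hright

end IsExtMap

lemma LineElement.integral_deriv_comp {E : ℝ → ℂ} {p q : ℝ} (L : LineElement E p q) (hpq : p < q)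
    (hE : Continuous E) {F F' : ℂ → ℂ} (hF : ∀ z, HasDerivAt F (F' z) z) (hF' : Continuous F') :
    L.integral (fun t => F' (E t)) = F (E q) - F (E p) := by
  rw [← L.setIntegral_deriv_comp hE le_rfl hpq le_rfl (fun t _ => hF (E t))
    fun t _ => hF'.continuousAt, LineElement.integral, Measure.restrict_eq_self_of_ae_mem L.ae_mem]

lemma tendsto_zpow_neg_cobounded {k : ℤ} (hk : k < 0) :
    Tendsto (fun w : ℂ => w ^ k) (Bornology.cobounded ℂ) (𝓝 0) := by
  lift -k to ℕ using by omega with n hn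
  have h : Tendsto (fun w : ℂ => w⁻¹ ^ n) (Bornology.cobounded ℂ) (𝓝 (0 ^ n)) :=
    tendsto_inv₀_cobounded.pow n
  rw [zero_pow (by omega)] at h
  exact h.congr fun w => by rw [inv_pow, ← zpow_natCast, hn, zpow_neg, inv_inv]

/-- The complement of the closed exterior `ψ({|w| ≥ 1})`: the bounded component of the complement
of the boundary curve. -/
def innerDomain (ψ : ℂ → ℂ) : Set ℂ := {z | ∀ w : ℂ, 1 ≤ ‖w‖ → ψ w ≠ z}

lemma compl_innerDomain (ψ : ℂ → ℂ) : (innerDomain ψ)ᶜ = ψ '' {w : ℂ | 1 ≤ ‖w‖} := by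
  ext z
  simp [innerDomain]

lemma ne_of_mem_innerDomain {ψ : ℂ → ℂ} {z : ℂ} (hz : z ∈ innerDomain ψ) (t : ℝ) :
    bdry ψ t ≠ z :=
  hz _ (norm_expMulI 1 t).ge

lemma bdry_ne_of_one_lt {ψ : ℂ → ℂ} (hinj : InjOn ψ {w : ℂ | 1 ≤ ‖w‖}) {w : ℂ} (hw : 1 < ‖w‖)
    (t : ℝ) : bdry ψ t ≠ ψ w := fun h => by
  have := hinj (norm_expMulI 1 t).ge (show 1 ≤ ‖w‖ from hw.le) h
  rw [← this, norm_expMulI] at hw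
  exact hw.false

namespace IsExtMap

variable {ψ : ℂ → ℂ} {p : ℝ} {z : ℂ}

lemma integral_mul_inv_sub (hψ : IsExtMap ψ) (L : LineElement (bdry ψ) p (p + 2 * Real.pi))
    (hz : z ∈ innerDomain ψ) {f : ℂ → ℂ} {a : ℂ} (hfc : ContinuousOn f {w | 1 ≤ ‖w‖})
    (hfd : DifferentiableOn ℂ f {w | 1 < ‖w‖}) (hf : Tendsto f (Bornology.cobounded ℂ) (𝓝 a)) :
    L.integral (fun t => f (expMulI 1 t) * (bdry ψ t - z)⁻¹) = 2 * Real.pi * Complex.I * a := by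
  obtain ⟨c, hc, hpole⟩ := hψ.pole
  have hker : Tendsto (fun w => w * (ψ w - z)⁻¹) (Bornology.cobounded ℂ) (𝓝 c⁻¹) := by
    have h : Tendsto (fun w => ψ w / w - z * w⁻¹) (Bornology.cobounded ℂ) (𝓝 (c - z * 0)) :=
      hpole.sub (tendsto_inv₀_cobounded.const_mul z)
    rw [mul_zero, sub_zero] at h
    exact (h.inv₀ hc).congr fun w => by rw [← div_eq_mul_inv, ← sub_div, inv_div, div_eq_mul_inv]
  have h := hψ.integral_bdry L (g := fun w => f w * (ψ w - z)⁻¹)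
    (hfc.mul ((hψ.cont.sub continuousOn_const).inv₀ fun w hw => sub_ne_zero.2 (hz w hw)))
    (hfd.mul ((hψ.diff.sub_const z).inv fun w hw => sub_ne_zero.2 (hz w (le_of_lt hw)))) hpole
    ((hf.mul hker).congr fun w => mul_left_comm _ _ _)
  rwa [inv_mul_cancel_right₀ hc] at h

lemma integral_inv_sub (hψ : IsExtMap ψ) (L : LineElement (bdry ψ) p (p + 2 * Real.pi))
    (hz : z ∈ innerDomain ψ) :
    L.integral (fun t => (bdry ψ t - z)⁻¹) = 2 * Real.pi * Complex.I := by
  simpa using hψ.integral_mul_inv_sub L hz (f := fun _ => 1) continuousOn_const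
    (differentiableOn_const 1) tendsto_const_nhds

lemma continuousOn_zpow (k : ℤ) : ContinuousOn (fun w : ℂ => w ^ k) {w | 1 ≤ ‖w‖} :=
  fun w hw => (continuousAt_zpow₀ w k (Or.inl (ne_zero_of_one_le_norm hw))).continuousWithinAt

lemma differentiableOn_zpow (k : ℤ) : DifferentiableOn ℂ (fun w : ℂ => w ^ k) {w | 1 < ‖w‖} :=
  fun _ hw => (differentiableAt_zpow.2
    (Or.inl (ne_zero_of_one_le_norm (le_of_lt hw)))).differentiableWithinAt

lemma integral_expMulI_neg_mul_inv_sub (hψ : IsExtMap ψ)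
    (L : LineElement (bdry ψ) p (p + 2 * Real.pi)) (hz : z ∈ innerDomain ψ) {k : ℤ} (hk : k < 0) :
    L.integral (fun t => expMulI k t * (bdry ψ t - z)⁻¹) = 0 := by
  simpa only [expMulI_one_zpow, mul_zero] using hψ.integral_mul_inv_sub L hz
    (continuousOn_zpow k) (differentiableOn_zpow k) (tendsto_zpow_neg_cobounded hk)

lemma tendsto_integral_expMulI (hψ : IsExtMap ψ) (L : LineElement (bdry ψ) p (p + 2 * Real.pi)) :
    Tendsto (fun k => L.integral (expMulI k)) atBot (𝓝 0) := by
  obtain ⟨c, -, hpole⟩ := hψ.pole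
  refine tendsto_const_nhds.congr' ?_
  filter_upwards [eventually_lt_atBot (-1)] with k hk
  have hlim : Tendsto (fun w : ℂ => w * w ^ k) (Bornology.cobounded ℂ) (𝓝 0) := by
    refine (tendsto_zpow_neg_cobounded (k := k + 1) (by omega)).congr' ?_
    filter_upwards [Bornology.eventually_ne_cobounded 0] with w hw
    rw [zpow_add_one₀ hw, mul_comm]
  simpa only [expMulI_one_zpow, zero_mul, mul_zero] using
    (hψ.integral_bdry L (continuousOn_zpow k) (differentiableOn_zpow k) hpole hlim).symm

lemma integral_polynomial_comp (hψ : IsExtMap ψ) (L : LineElement (bdry ψ) p (p + 2 * Real.pi))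
    (Q : Polynomial ℂ) : L.integral (fun t => Q.eval (bdry ψ t)) = 0 := by
  obtain ⟨P, hP⟩ := Q.differentiable.isExactOn_univ
  rw [L.integral_deriv_comp (by linarith [Real.pi_pos]) hψ.continuous_bdry
    (fun z => hP z (mem_univ z)) Q.continuous, periodic_bdry, sub_self]

theorem integral_expMulI_mul_inv_sub_eq_faber (hψ : IsExtMap ψ)
    (L : LineElement (bdry ψ) p (p + 2 * Real.pi)) (hz : z ∈ innerDomain ψ) {n : ℕ}
    {F : Polynomial ℂ}
    (hF : Tendsto (fun w => w ^ n - F.eval (ψ w)) (Bornology.cobounded ℂ) (𝓝 0)) :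
    L.integral (fun t => expMulI n t * (bdry ψ t - z)⁻¹) = 2 * Real.pi * Complex.I * F.eval z := by
  have hE := hψ.continuous_bdry
  have hne : ∀ t, bdry ψ t - z ≠ 0 := fun t => sub_ne_zero.2 (ne_of_mem_innerDomain hz t)
  have hinv : Continuous fun t => (bdry ψ t - z)⁻¹ := (hE.sub continuous_const).inv₀ hne
  obtain ⟨Q, hQ⟩ : ∃ Q : Polynomial ℂ, ∀ y, F.eval y = F.eval z + (y - z) * Q.eval y := by
    obtain ⟨Q, hQ⟩ := Polynomial.X_sub_C_dvd_sub_C_eval (p := F) (a := z)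
    refine ⟨Q, fun y => ?_⟩
    have := congrArg (Polynomial.eval y) hQ
    simp only [Polynomial.eval_sub, Polynomial.eval_mul, Polynomial.eval_X,
      Polynomial.eval_C] at this
    rw [← this, add_sub_cancel]
  have hremainder : L.integral
      (fun t => (expMulI 1 t ^ n - F.eval (bdry ψ t)) * (bdry ψ t - z)⁻¹) = 0 :=
    (hψ.integral_mul_inv_sub L hz (f := fun w => w ^ n - F.eval (ψ w))
      ((continuousOn_pow n).sub (F.continuous.comp_continuousOn hψ.cont))
      ((differentiable_pow n).differentiableOn.sub (F.differentiable.comp_differentiableOn hψ.diff))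
      hF).trans (mul_zero _)
  have hsplit : (fun t => expMulI n t * (bdry ψ t - z)⁻¹) = fun t =>
      (expMulI 1 t ^ n - F.eval (bdry ψ t)) * (bdry ψ t - z)⁻¹ +
        (F.eval z * (bdry ψ t - z)⁻¹ + Q.eval (bdry ψ t)) := by
    ext t
    rw [← expMulI_one_zpow, zpow_natCast, sub_mul, hQ (bdry ψ t), add_mul,
      mul_comm (bdry ψ t - z), mul_inv_cancel_right₀ (hne t), sub_add_cancel]
  have hQc : Continuous fun t => Q.eval (bdry ψ t) := Q.continuous.comp hE
  have hFc : Continuous fun t => F.eval (bdry ψ t) := F.continuous.comp hE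
  have hzinv : Continuous fun t => F.eval z * (bdry ψ t - z)⁻¹ := continuous_const.mul hinv
  rw [hsplit, L.integral_add, L.integral_add, hremainder, L.integral_const_mul,
    hψ.integral_inv_sub L hz, hψ.integral_polynomial_comp L Q]
  · ring
  · exact L.integrable_of_continuousOn hzinv.continuousOn
  · exact L.integrable_of_continuousOn hQc.continuousOn
  · exact L.integrable_of_continuousOn
      ((((continuous_expMulI 1).pow n).sub hFc).mul hinv).continuousOn
  · exact L.integrable_of_continuousOn (hzinv.add hQc).continuousOn

lemma integral_inv_sub_of_one_lt (hψ : IsExtMap ψ) (L : LineElement (bdry ψ) p (p + 2 * Real.pi))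
    {w : ℂ} (hw : 1 < ‖w‖) : L.integral (fun t => (bdry ψ t - ψ w)⁻¹) = 0 := by
  have hE := hψ.continuous_bdry
  have hne {u : ℂ} (hu : 1 < ‖u‖) (t : ℝ) := bdry_ne_of_one_lt hψ.inj hu t
  set f : ℂ → ℂ := fun u => L.integral fun t => (bdry ψ t - ψ u)⁻¹
  have hf : ContinuousOn f {u | 1 < ‖u‖} := by
    refine L.continuousOn_integral (ContinuousOn.inv₀ ((hE.comp continuous_snd).continuousOn.sub
      (hψ.diff.continuousOn.comp continuous_fst.continuousOn fun q hq => hq.1)) fun q hq => ?_)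
    exact sub_ne_zero.2 (hne hq.1 q.2)
  have hexp : ∀ u, 1 < ‖u‖ → Complex.exp (f u) = 1 := fun u hu => by
    rw [L.exp_integral_inv_sub (by linarith [Real.pi_pos]) hE fun t _ => hne hu t, periodic_bdry,
      div_self (sub_ne_zero.2 (hne hu p))]
  have hconst : ∀ᶠ u in Bornology.cobounded ℂ, f u = f w := by
    filter_upwards [eventually_lt_norm 1] with u hu
    exact Complex.isCoveringMap_exp.constOn_of_comp
      (isPreconnected_setOf_lt_norm (by simp) zero_le_one) hf
      (fun a ha b hb => Subtype.ext ((hexp a ha).trans (hexp b hb).symm)) hu hw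
  have hzero : Tendsto f (Bornology.cobounded ℂ) (𝓝 0) := by
    obtain ⟨K, hK⟩ := L.norm_integral_le
    obtain ⟨B, hB⟩ := isCompact_Icc.exists_bound_of_continuousOn (s := Icc p (p + 2 * Real.pi))
      hE.continuousOn
    have hnorm : Tendsto (fun u => ‖ψ u‖ - B) (Bornology.cobounded ℂ) atTop :=
      tendsto_atTop_add_const_right _ _ (tendsto_norm_cobounded_atTop.comp hψ.tendsto_cobounded)
    refine squeeze_zero_norm' ?_ (by simpa using hnorm.inv_tendsto_atTop.const_mul K)
    filter_upwards [hnorm.eventually_gt_atTop 0] with u hu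
    refine hK _ _ fun t ht => ?_
    rw [norm_inv]
    refine inv_anti₀ hu ?_
    linarith [hB t ht, norm_sub_norm_le (ψ u) (bdry ψ t), norm_sub_rev (ψ u) (bdry ψ t)]
  exact tendsto_nhds_unique (tendsto_const_nhds.congr' (hconst.mono fun _ => Eq.symm)) hzero

end IsExtMap

lemma apply_two_pi_ne_of_norm_exp_sub_lt {ℓ : ℝ → ℂ} {ρ : ℝ}
    (hℓ : ContinuousOn ℓ (Icc 0 (2 * Real.pi)))
    (hlt : ∀ t ∈ Icc 0 (2 * Real.pi), ‖Complex.exp (ℓ t) - ρ * expMulI 1 t‖ < ρ) :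
    ℓ (2 * Real.pi) ≠ ℓ 0 := fun hper => by
  have h0 : (0 : ℝ) ∈ Icc 0 (2 * Real.pi) := ⟨le_rfl, Real.two_pi_pos.le⟩
  have h2π : 2 * Real.pi ∈ Icc 0 (2 * Real.pi) := ⟨Real.two_pi_pos.le, le_rfl⟩
  have hρ : 0 < ρ := (norm_nonneg _).trans_lt (hlt 0 h0)
  set u : ℝ → ℂ := fun t => Complex.exp (ℓ t) / (ρ * expMulI 1 t)
  have hden (t : ℝ) : (ρ : ℂ) * expMulI 1 t ≠ 0 := by
    rw [← norm_pos_iff, norm_mul, norm_expMulI, mul_one, Complex.norm_real]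
    exact norm_pos_iff.2 hρ.ne'
  have hu : ContinuousOn u (Icc 0 (2 * Real.pi)) :=
    hℓ.cexp.div (continuous_const.mul (continuous_expMulI 1)).continuousOn fun t _ => hden t
  have hslit : ∀ t ∈ Icc 0 (2 * Real.pi), u t ∈ Complex.slitPlane := fun t ht => by
    refine Complex.ball_one_subset_slitPlane (mem_ball_iff_norm.2 ?_)
    rw [div_sub_one (hden t), norm_div, norm_mul, norm_expMulI, mul_one, Complex.norm_real,
      Real.norm_of_nonneg hρ.le, div_lt_one hρ]
    exact hlt t ht
  have hexp : ∀ t ∈ Icc 0 (2 * Real.pi),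
      Complex.exp (ℓ t - Complex.log (u t) - t * Complex.I) = ρ := fun t ht => by
    rw [Complex.exp_sub, Complex.exp_sub, Complex.exp_log (Complex.slitPlane_ne_zero (hslit t ht)),
      div_div_cancel₀ (Complex.exp_ne_zero _), ← expMulI_one,
      mul_div_cancel_right₀ _ (norm_ne_zero_iff.1 (by rw [norm_expMulI]; exact one_ne_zero))]
  have hconst := Complex.isCoveringMap_exp.constOn_of_comp isPreconnected_Icc
    ((hℓ.sub (hu.clog hslit)).sub
      (Complex.continuous_ofReal.mul continuous_const).continuousOn)
    (fun a ha b hb => Subtype.ext ((hexp a ha).trans (hexp b hb).symm)) h2π h0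
  have hu_per : u (2 * Real.pi) = u 0 := by
    simp only [u, hper, (expMulI_periodic 1).eq]
  simp [hper, hu_per, Real.pi_ne_zero] at hconst

namespace IsExtMap

variable {ψ : ℂ → ℂ}

lemma continuousOn_invFunOn (hψ : IsExtMap ψ) :
    ContinuousOn (Function.invFunOn ψ {w | 1 ≤ ‖w‖}) (ψ '' {w | 1 ≤ ‖w‖}) := by
  rintro _ ⟨w₀, hw₀, rfl⟩
  obtain ⟨R, hR⟩ : ∃ R : ℝ, ∀ w, R < ‖w‖ → ‖ψ w₀‖ + 1 < ‖ψ w‖ := by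
    obtain ⟨R, -, h⟩ := (Metric.hasBasis_cobounded_compl_closedBall (0 : ℂ)).eventually_iff.1
      (hψ.tendsto_cobounded.eventually (eventually_lt_norm (‖ψ w₀‖ + 1)))
    exact ⟨R, fun w hw => h (by simpa using hw)⟩
  set K : Set ℂ := Metric.closedBall 0 R ∩ {w | 1 ≤ ‖w‖}
  have hK : IsCompact K :=
    (isCompact_closedBall 0 R).inter_right (isClosed_le continuous_const continuous_norm)
  have hKA : K ⊆ {w | 1 ≤ ‖w‖} := inter_subset_right
  have hmem : ∀ w, 1 ≤ ‖w‖ → ‖ψ w‖ < ‖ψ w₀‖ + 1 → w ∈ K := fun w hw hlt =>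
    ⟨mem_closedBall_zero_iff.2 (not_lt.1 fun h => (hR w h).not_gt hlt), hw⟩
  have hEq : EqOn (Function.invFunOn ψ {w | 1 ≤ ‖w‖}) (Function.invFunOn ψ K) (ψ '' K) := by
    rintro _ ⟨w, hw, rfl⟩
    rw [hψ.inj.leftInvOn_invFunOn (hKA hw), (hψ.inj.mono hKA).leftInvOn_invFunOn hw]
  have hw₀K := mem_image_of_mem ψ (hmem w₀ hw₀ (lt_add_one _))
  have hcont :=
    (_root_.continuousOn_invFunOn hK (hψ.cont.mono hKA) (hψ.inj.mono hKA)).congr hEq _ hw₀K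
  refine hcont.mono_of_mem_nhdsWithin ?_
  filter_upwards [self_mem_nhdsWithin, nhdsWithin_le_nhds
    (continuous_norm.continuousAt.eventually_lt_const (lt_add_one ‖ψ w₀‖))]
  rintro _ ⟨w, hw, rfl⟩ hlt
  exact mem_image_of_mem ψ (hmem w hw hlt)

lemma exists_log_sub (hψ : IsExtMap ψ) {w₀ : ℂ} (hw₀ : ‖w₀‖ = 1) :
    ∃ ℓ : ℂ → ℂ, ContinuousOn ℓ {v | 0 < v.re} ∧
      ∀ v, 0 < v.re → Complex.exp (ℓ v) = ψ (w₀ * Complex.exp v) - ψ w₀ := by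
  have hnorm (v : ℂ) : ‖w₀ * Complex.exp v‖ = Real.exp v.re := by
    rw [norm_mul, hw₀, one_mul, Complex.norm_exp]
  have hlt {v : ℂ} (hv : 0 < v.re) : 1 < ‖w₀ * Complex.exp v‖ := by
    rwa [hnorm, Real.one_lt_exp_iff]
  refine Complex.exists_continuousOn_eqOn_exp_comp ?_
    (isOpen_lt continuous_const Complex.continuous_re)
    ((hψ.cont.comp (by fun_prop) fun v hv => (hlt hv).le).sub continuousOn_const) ?_
  · have := (convex_halfSpace_re_gt 0).contractibleSpace ⟨1, by simp⟩
    exact SimplyConnectedSpace.ofContractible {v : ℂ | 0 < v.re}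
  · rintro ⟨v, hv, h⟩
    have := hψ.inj (hlt hv).le hw₀.ge (sub_eq_zero.1 h)
    exact (hlt hv).ne' (by rw [this, hw₀])

lemma exists_local_log (hψ : IsExtMap ψ) {w₀ : ℂ} (hw₀ : ‖w₀‖ = 1)
    (h : ψ '' {w | 1 ≤ ‖w‖} ∈ 𝓝 (ψ w₀)) :
    ∃ r > 0, ∃ f : ℂ → ℂ, ContinuousOn f (Metric.ball (ψ w₀) r) ∧
      ∀ z ∈ Metric.ball (ψ w₀) r, 0 ≤ (f z).re ∧ ψ (w₀ * Complex.exp (f z)) = z := by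
  set φ := Function.invFunOn ψ {w | 1 ≤ ‖w‖}
  have hw₀0 : w₀ ≠ 0 := ne_zero_of_one_le_norm hw₀.ge
  have hφ : ContinuousAt φ (ψ w₀) := hψ.continuousOn_invFunOn.continuousAt h
  have hφw₀ : φ (ψ w₀) / w₀ = 1 := by
    rw [show φ (ψ w₀) = w₀ from hψ.inj.leftInvOn_invFunOn hw₀.ge, div_self hw₀0]
  have hslit : ∀ᶠ z in 𝓝 (ψ w₀), φ z / w₀ ∈ Complex.slitPlane := (hφ.div_const w₀).eventually_mem
    (Complex.isOpen_slitPlane.mem_nhds (hφw₀.symm ▸ Complex.one_mem_slitPlane :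
      φ (ψ w₀) / w₀ ∈ _))
  obtain ⟨r, hr, hball⟩ := Metric.eventually_nhds_iff_ball.1 ((eventually_mem_set.2 h).and hslit)
  refine ⟨r, hr, fun z => Complex.log (φ z / w₀), ?_, fun z hz => ?_⟩
  · exact ((hψ.continuousOn_invFunOn.mono fun z hz => (hball z hz).1).div_const w₀).clog
      fun z hz => (hball z hz).2
  · obtain ⟨hzA, hzs⟩ := hball z hz
    constructor
    · rw [Complex.log_re, norm_div, hw₀, div_one]
      exact Real.log_nonneg (Function.invFunOn_mem hzA)
    · rw [Complex.exp_log (Complex.slitPlane_ne_zero hzs), mul_div_cancel₀ _ hw₀0]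
      exact Function.invFunOn_eq hzA

/-- Otherwise `log ∘ ψ⁻¹` would be defined on a disc around `ψ w₀`; pushing a small circle
slightly outwards in the `w`-plane would then give a closed curve winding around `ψ w₀` on which
`log (z - ψ w₀)` has a single-valued branch. -/
theorem mem_closure_innerDomain (hψ : IsExtMap ψ) {w₀ : ℂ} (hw₀ : ‖w₀‖ = 1) :
    ψ w₀ ∈ closure (innerDomain ψ) := by
  by_contra hcl
  have himage : ψ '' {w | 1 ≤ ‖w‖} ∈ 𝓝 (ψ w₀) := by
    rwa [closure_eq_compl_interior_compl, mem_compl_iff, not_not, compl_innerDomain,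
      mem_interior_iff_mem_nhds] at hcl
  obtain ⟨r, hr, f, hf, hfψ⟩ := hψ.exists_local_log hw₀ himage
  obtain ⟨ℓ, hℓ, hexp⟩ := hψ.exists_log_sub hw₀
  obtain ⟨ρ, hρ, hρr⟩ := exists_between hr
  set γ : ℝ → ℂ := fun t => ψ w₀ + ρ * expMulI 1 t
  have hγ : Continuous γ := continuous_const.add (continuous_const.mul (continuous_expMulI 1))
  have hγr (t : ℝ) : γ t ∈ Metric.ball (ψ w₀) r := by
    rwa [mem_ball_iff_norm, add_sub_cancel_left, norm_mul, norm_expMulI, mul_one,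
      Complex.norm_real, Real.norm_of_nonneg hρ.le]
  have hfγ : Continuous fun t => f (γ t) := hf.comp_continuous hγ hγr
  set G : ℝ × ℝ → ℂ := fun x => ψ (w₀ * Complex.exp (f (γ x.2) + |x.1|))
  have hG : Continuous G := by
    refine hψ.cont.comp_continuous ?_ fun x => ?_
    · exact continuous_const.mul ((hfγ.comp continuous_snd).add
        (Complex.continuous_ofReal.comp continuous_fst.abs)).cexp
    · change 1 ≤ ‖_‖
      rw [norm_mul, hw₀, one_mul, Complex.norm_exp, Real.one_le_exp_iff, Complex.add_re,
        Complex.ofReal_re]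
      exact add_nonneg (hfψ _ (hγr _)).1 (abs_nonneg _)
  have hclose : ∀ᶠ s in 𝓝 0, ∀ t ∈ Icc 0 (2 * Real.pi), ‖G (s, t) - γ t‖ < ρ := by
    refine isCompact_Icc.eventually_forall_of_forall_eventually fun t _ => ?_
    refine (hG.sub (hγ.comp continuous_snd)).norm.continuousAt.eventually_lt_const ?_
    simpa [G, (hfψ _ (hγr t)).2] using hρ
  obtain ⟨s, hs, hs0⟩ :=
    ((hclose.filter_mono (nhdsWithin_le_nhds (s := Ioi 0))).and self_mem_nhdsWithin).exists
  have hre (t : ℝ) : 0 < (f (γ t) + s).re := by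
    rw [Complex.add_re, Complex.ofReal_re]
    exact add_pos_of_nonneg_of_pos (hfψ _ (hγr t)).1 hs0
  refine apply_two_pi_ne_of_norm_exp_sub_lt (ℓ := fun t => ℓ (f (γ t) + s)) (ρ := ρ)
    (hℓ.comp_continuous (hfγ.add continuous_const) hre).continuousOn (fun t ht => ?_) ?_
  · rw [hexp _ (hre t), sub_sub]
    simpa only [G, abs_of_pos (show 0 < s from hs0)] using hs t ht
  · simp only [γ, (expMulI_periodic 1).eq]

end IsExtMap

/-! ### The Faber polynomials near a boundary point -/

namespace LineElement

variable {E : ℝ → ℂ} {p q : ℝ} {z : ℂ}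

lemma im_integral_inv_sub (L : LineElement E p q) (hE : ContinuousOn E (Icc p q))
    (hz : ∀ t ∈ Icc p q, E t ≠ z) :
    (L.integral fun t => (E t - z)⁻¹).im = ∫ t, L.kernel z t ∂L.μ :=
  (Complex.imCLM.integral_comp_comm (L.integrable_mul (L.integrable_of_continuousOn
    ((hE.sub continuousOn_const).inv₀ fun t ht => sub_ne_zero.2 (hz t ht))))).symm

lemma norm_integral_expMulI_sub_conj_le (L : LineElement E p q) (hE : ContinuousOn E (Icc p q))
    (hz : ∀ t ∈ Icc p q, E t ≠ z) (k : ℤ) :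
    ‖L.integral (fun t => expMulI k t * (E t - z)⁻¹) -
      conj (L.integral fun t => expMulI (-k) t * (E t - z)⁻¹)‖ ≤ 2 * ∫ t, |L.kernel z t| ∂L.μ := by
  have hinv : Integrable (fun t => (E t - z)⁻¹) L.μ := L.integrable_of_continuousOn
    ((hE.sub continuousOn_const).inv₀ fun t ht => sub_ne_zero.2 (hz t ht))
  have hint (j : ℤ) : Integrable (fun t => expMulI j t * (E t - z)⁻¹ * L.T t) L.μ :=
    L.integrable_mul (L.integrable_expMulI_mul j hinv)
  have hker : Integrable (L.kernel z) L.μ := (L.integrable_mul hinv).im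
  have hconj : Integrable (fun t => conj (expMulI (-k) t * (E t - z)⁻¹ * L.T t)) L.μ :=
    Complex.conjLIE.integrable_comp_iff.2 (hint (-k))
  rw [integral, integral, ← integral_conj, ← MeasureTheory.integral_sub (hint k) hconj,
    ← MeasureTheory.integral_const_mul]
  refine norm_integral_le_of_norm_le (hker.abs.const_mul 2) (ae_of_all _ fun t => le_of_eq ?_)
  rw [mul_assoc, mul_assoc, map_mul, conj_expMulI, neg_neg, ← mul_sub, Complex.sub_conj,
    norm_mul, norm_expMulI, one_mul, norm_mul, Complex.norm_I, mul_one, Complex.norm_real,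
    Real.norm_eq_abs, abs_mul, abs_two, kernel]

lemma eventually_norm_integral_mul_sub_le (L : LineElement E p q) (hE : ContinuousOn E (Icc p q))
    {z₀ : ℂ} (hz₀ : ∀ t ∈ Icc p q, E t ≠ z₀) {ε : ℝ} (hε : 0 < ε) : ∀ᶠ z in 𝓝 z₀,
      ∀ g, ContinuousOn g (Icc p q) → (∀ t ∈ Icc p q, ‖g t‖ ≤ 1) →
        ‖L.integral (fun t => g t * (E t - z)⁻¹) - L.integral (fun t => g t * (E t - z₀)⁻¹)‖ ≤
          ε := by
  obtain ⟨K, hK⟩ := L.norm_integral_le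
  have hne : ∀ᶠ z in 𝓝 z₀, ∀ t ∈ Icc p q, E t ≠ z := by
    have := (isCompact_Icc.image_of_continuousOn hE).isClosed.isOpen_compl.mem_nhds
      (show z₀ ∈ (E '' Icc p q)ᶜ by rintro ⟨t, ht, h⟩; exact hz₀ t ht h)
    filter_upwards [this] with z hz t ht h using hz ⟨t, ht, h⟩
  have hcont : ContinuousOn (Function.uncurry fun z t => (E t - z)⁻¹)
      ({z | ∀ t ∈ Icc p q, E t ≠ z} ×ˢ Icc p q) :=
    ((hE.comp continuousOn_snd fun x hx => hx.2).sub continuousOn_fst).inv₀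
      fun x hx => sub_ne_zero.2 (hx.1 x.2 hx.2)
  obtain ⟨v, hv, hvε⟩ := isCompact_Icc.mem_uniformity_of_prod hcont (mem_ofPred.2 hz₀)
    (Metric.dist_mem_uniformity (show 0 < ε / (|K| + 1) by positivity))
  rw [nhdsWithin_eq_nhds.2 hne] at hv
  filter_upwards [hv, hne] with z hzv hz g hg hg1
  have hint {z : ℂ} (hz : ∀ t ∈ Icc p q, E t ≠ z) :
      Integrable (fun t => g t * (E t - z)⁻¹) L.μ := L.integrable_of_continuousOn
    (hg.mul ((hE.sub continuousOn_const).inv₀ fun t ht => sub_ne_zero.2 (hz t ht)))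
  rw [← L.integral_sub (hint hz) (hint hz₀)]
  calc _ ≤ K * (ε / (|K| + 1)) := hK _ _ fun t ht => by
        rw [← mul_sub, norm_mul, ← dist_eq_norm, ← one_mul (ε / _)]
        exact mul_le_mul (hg1 t ht) (hvε z hzv t ht).le dist_nonneg zero_le_one
    _ ≤ (|K| + 1) * (ε / (|K| + 1)) := by
        gcongr
        exact (le_abs_self K).trans (lt_add_one _).le
    _ = ε := mul_div_cancel₀ _ (by positivity)

end LineElement

namespace IsExtMap

variable {ψ : ℂ → ℂ}

lemma isLoop (hψ : IsExtMap ψ) : IsLoop (bdry ψ) where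
  cont := hψ.continuous_bdry
  per := periodic_bdry ψ
  inj s t hst := by
    have h := hψ.inj (norm_expMulI 1 s).ge (norm_expMulI 1 t).ge hst
    rw [expMulI_one, expMulI_one, eq_comm, Complex.exp_eq_exp_iff_exists_int] at h
    obtain ⟨n, hn⟩ := h
    refine ⟨n, ?_⟩
    have him : t = s + n * (2 * Real.pi) := by simpa using congrArg Complex.im hn
    linarith

lemma bdry_mem_closure_image (hψ : IsExtMap ψ) (θ : ℝ) :
    bdry ψ θ ∈ closure (ψ '' {w | 1 < ‖w‖}) := by
  have hmem : expMulI 1 θ ∈ closure {w : ℂ | 1 < ‖w‖} := by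
    have hclosure : closure (Metric.closedBall (0 : ℂ) 1)ᶜ = (Metric.ball 0 1)ᶜ := by
      rw [closure_compl, interior_closedBall _ one_ne_zero]
    have : {w : ℂ | 1 < ‖w‖} = (Metric.closedBall (0 : ℂ) 1)ᶜ := by ext; simp
    rw [this, hclosure]
    simp [norm_expMulI]
  have hcont := hψ.cont _ (norm_expMulI 1 θ).ge
  exact (hcont.mono fun w (hw : 1 < ‖w‖) => hw.le).mem_closure_image hmem

end IsExtMap

/-- The boundary curve cut into a short arc ending at the point of parameter `θ`, a short arc
starting there, and the remaining arc, with line elements on all three. -/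
structure LocalSplit (ψ : ℂ → ℂ) (θ η ε : ℝ) where
  pos : 0 < η
  lt_pi : η < Real.pi
  left : LineElement (bdry ψ) (θ - η) θ
  right : LineElement (bdry ψ) θ (θ + η)
  far : LineElement (bdry ψ) (θ + η) (θ - η + 2 * Real.pi)
  small_left : left.Small ε
  small_right : right.Small ε

namespace LocalSplit

variable {ψ : ℂ → ℂ} {θ η ε : ℝ} (S : LocalSplit ψ θ η ε)

include S in
lemma left_le : θ - η ≤ θ := sub_le_self θ S.pos.le

include S in
lemma le_right : θ ≤ θ + η := le_add_of_nonneg_right S.pos.le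

include S in
lemma far_lt : θ + η < θ - η + 2 * Real.pi := by linarith [S.lt_pi]

/-- The line element of the whole curve, from the parameter `θ - η` on. -/
def loop : LineElement (bdry ψ) (θ - η) (θ - η + 2 * Real.pi) :=
  (S.left.concat S.right S.left_le S.le_right).concat S.far (S.left_le.trans S.le_right)
    S.far_lt.le

/-- The angle under which the two short arcs are seen from `z`. -/
def nearAngle (z : ℂ) : ℝ :=
  (∫ t, S.left.kernel z t ∂S.left.μ) + ∫ t, S.right.kernel z t ∂S.right.μ

/-- The exterior angle at the point of parameter `θ`, up to multiples of `2π`. -/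
def angle : ℝ := 2 * Real.pi - (S.far.integral fun t => (bdry ψ t - bdry ψ θ)⁻¹).im

lemma loop_integral {f : ℝ → ℂ} (hf : Continuous f) :
    S.loop.integral f = S.left.integral f + S.right.integral f + S.far.integral f := by
  have hint {p q : ℝ} (L : LineElement (bdry ψ) p q) : Integrable f L.μ :=
    L.integrable_of_continuousOn hf.continuousOn
  have hnear : Integrable f (S.left.concat S.right S.left_le S.le_right).μ := hint _
  rw [loop, LineElement.integral_concat _ _ _ _ hnear (hint _),
    LineElement.integral_concat _ _ _ _ (hint _) (hint _)]

section

variable {z : ℂ} (hz : ∀ t, bdry ψ t ≠ z)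

include hz

lemma abs_nearAngle_le : |S.nearAngle z| ≤ 2 * Real.pi + 2 * ε := by
  have hl := abs_integral_le_integral_abs.trans (S.small_left z fun t _ => hz t).2
  have hr := abs_integral_le_integral_abs.trans (S.small_right z fun t _ => hz t).2
  exact (abs_add_le _ _).trans (by linarith)

lemma integral_abs_kernel_le {a : ℝ} (ha : |S.nearAngle z - a| ≤ ε) :
    (∫ t, |S.left.kernel z t| ∂S.left.μ) + (∫ t, |S.right.kernel z t| ∂S.right.μ) ≤
      Real.pi + |a - Real.pi| + 5 * ε := by
  obtain ⟨hl, hlπ⟩ := S.small_left z fun t _ => hz t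
  obtain ⟨hr, hrπ⟩ := S.small_right z fun t _ => hz t
  have hl' := abs_integral_le_integral_abs.trans hlπ
  have hr' := abs_integral_le_integral_abs.trans hrπ
  rw [nearAngle, abs_le] at ha
  have h₁ := le_abs_self (a - Real.pi)
  have h₂ := neg_abs_le (a - Real.pi)
  rcases abs_cases (∫ t, S.left.kernel z t ∂S.left.μ) with ⟨e₁, -⟩ | ⟨e₁, -⟩ <;>
    rcases abs_cases (∫ t, S.right.kernel z t ∂S.right.μ) with ⟨e₂, -⟩ | ⟨e₂, -⟩ <;>
      rw [e₁] at hl hl' <;> rw [e₂] at hr hr' <;> linarith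

end

variable (hψ : IsExtMap ψ)

include S hψ in
lemma ne_of_mem_far {t : ℝ} (ht : t ∈ Icc (θ + η) (θ - η + 2 * Real.pi)) :
    bdry ψ t ≠ bdry ψ θ := fun h => by
  have hinj := hψ.isLoop.injOn_Ico θ ⟨by linarith [S.pos, ht.1], by linarith [S.pos, ht.2]⟩
    ⟨le_rfl, by linarith [Real.pi_pos]⟩ h
  linarith [S.pos, ht.1]

include hψ

lemma eventually_norm_far_sub_le (hε : 0 < ε) : ∀ᶠ z in 𝓝 (bdry ψ θ), ∀ g, Continuous g →
    (∀ t, ‖g t‖ ≤ 1) → ‖S.far.integral (fun t => g t * (bdry ψ t - z)⁻¹) -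
      S.far.integral (fun t => g t * (bdry ψ t - bdry ψ θ)⁻¹)‖ ≤ ε :=
  (S.far.eventually_norm_integral_mul_sub_le hψ.continuous_bdry.continuousOn
    (fun _ => S.ne_of_mem_far hψ) hε).mono
    fun _ hz g hg hg1 => hz g hg.continuousOn fun t _ => hg1 t

lemma eventually_abs_nearAngle_sub_le (hε : 0 < ε) : ∀ᶠ z in 𝓝 (bdry ψ θ),
    (∀ t, bdry ψ t ≠ z) → |S.nearAngle z -
      (S.angle - 2 * Real.pi + (S.loop.integral fun t => (bdry ψ t - z)⁻¹).im)| ≤ ε := by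
  have hE := hψ.continuous_bdry
  filter_upwards [S.eventually_norm_far_sub_le hψ hε] with z hfar hz
  have hinv : Continuous fun t => (bdry ψ t - z)⁻¹ :=
    (hE.sub continuous_const).inv₀ fun t => sub_ne_zero.2 (hz t)
  have h := hfar (fun _ => 1) continuous_const fun _ => norm_one.le
  simp only [one_mul] at h
  refine le_trans (le_of_eq ?_) ((Complex.abs_im_le_norm _).trans h)
  rw [S.loop_integral hinv, Complex.add_im, Complex.add_im,
    S.left.im_integral_inv_sub hE.continuousOn fun t _ => hz t,
    S.right.im_integral_inv_sub hE.continuousOn fun t _ => hz t, nearAngle, angle, abs_sub_comm,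
    Complex.sub_im]
  congr 1
  ring

lemma eventually_abs_nearAngle_sub_angle_le (hε : 0 < ε) : ∀ᶠ z in 𝓝 (bdry ψ θ),
    z ∈ innerDomain ψ → |S.nearAngle z - S.angle| ≤ ε := by
  filter_upwards [S.eventually_abs_nearAngle_sub_le hψ hε] with z hz hin
  simpa [hψ.integral_inv_sub S.loop hin] using hz (ne_of_mem_innerDomain hin)

lemma angle_le (hε : 0 < ε) : S.angle ≤ 2 * Real.pi + 3 * ε := by
  obtain ⟨z, hz, hin⟩ := mem_closure_iff_nhds.1 (hψ.mem_closure_innerDomain (norm_expMulI 1 θ)) _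
    (S.eventually_abs_nearAngle_sub_angle_le hψ hε)
  have h₁ := abs_le.1 (hz hin)
  have h₂ := abs_le.1 (S.abs_nearAngle_le (ne_of_mem_innerDomain hin))
  linarith

lemma neg_le_angle (hε : 0 < ε) : -(3 * ε) ≤ S.angle := by
  obtain ⟨_, hz, w, hw, rfl⟩ := mem_closure_iff_nhds.1 (hψ.bdry_mem_closure_image θ) _
    (S.eventually_abs_nearAngle_sub_le hψ hε)
  have hne := bdry_ne_of_one_lt hψ.inj hw
  have h₁ := hz hne
  rw [hψ.integral_inv_sub_of_one_lt S.loop hw, Complex.zero_im] at h₁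
  have h₂ := abs_le.1 (S.abs_nearAngle_le hne)
  linarith [abs_le.1 h₁]

lemma eventually_norm_far_le (hε : 0 < ε) :
    ∀ᶠ x : ℤ × ℂ in cofinite ×ˢ 𝓝 (bdry ψ θ),
      ‖S.far.integral fun t => expMulI x.1 t * (bdry ψ t - x.2)⁻¹‖ ≤ 2 * ε := by
  have hint : Integrable (fun t => (bdry ψ t - bdry ψ θ)⁻¹) S.far.μ :=
    S.far.integrable_of_continuousOn ((hψ.continuous_bdry.sub continuous_const).continuousOn.inv₀
      fun t ht => sub_ne_zero.2 (S.ne_of_mem_far hψ ht))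
  have hRL : Tendsto (fun k => S.far.integral fun t => expMulI k t * (bdry ψ t - bdry ψ θ)⁻¹)
      cofinite (𝓝 0) := LineElement.tendsto_integral_expMulI_mul_of_concat
    (S.left.concat S.right S.left_le S.le_right) S.far _ _ (hψ.tendsto_integral_expMulI S.loop) hint
  have hsmall := hRL.norm.eventually_le_const (norm_zero.trans_lt hε)
  filter_upwards [hsmall.prod_mk (S.eventually_norm_far_sub_le hψ hε)] with ⟨k, z⟩ ⟨hk, hz⟩
  have h := hz (expMulI k) (continuous_expMulI k) fun t => (norm_expMulI k t).le
  linarith [norm_le_norm_add_norm_sub' (S.far.integral fun t => expMulI k t * (bdry ψ t - z)⁻¹)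
    (S.far.integral fun t => expMulI k t * (bdry ψ t - bdry ψ θ)⁻¹)]

lemma norm_faber_le {z : ℂ} (hz : z ∈ innerDomain ψ) {n : ℕ} (hn : 0 < n) {F : Polynomial ℂ}
    (hF : Tendsto (fun w => w ^ n - F.eval (ψ w)) (Bornology.cobounded ℂ) (𝓝 0)) :
    2 * Real.pi * ‖F.eval z‖ ≤
      2 * (∫ t, |S.left.kernel z t| ∂S.left.μ) + 2 * (∫ t, |S.right.kernel z t| ∂S.right.μ) +
        ‖S.far.integral fun t => expMulI n t * (bdry ψ t - z)⁻¹‖ +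
        ‖S.far.integral fun t => expMulI (-n) t * (bdry ψ t - z)⁻¹‖ := by
  have hE := hψ.continuous_bdry
  have hne := ne_of_mem_innerDomain hz
  let I {p q : ℝ} (L : LineElement (bdry ψ) p q) (k : ℤ) : ℂ :=
    L.integral fun t => expMulI k t * (bdry ψ t - z)⁻¹
  have hsum (k : ℤ) : I S.loop k = I S.left k + I S.right k + I S.far k :=
    S.loop_integral ((continuous_expMulI k).mul
      ((hE.sub continuous_const).inv₀ fun t => sub_ne_zero.2 (hne t)))
  have hpos : I S.loop n = 2 * Real.pi * Complex.I * F.eval z :=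
    hψ.integral_expMulI_mul_inv_sub_eq_faber S.loop hz hF
  have hneg : conj (I S.loop (-n)) = 0 := by
    rw [show I S.loop (-n) = 0 from hψ.integral_expMulI_neg_mul_inv_sub S.loop hz (by omega),
      map_zero]
  have hnear {p q : ℝ} (L : LineElement (bdry ψ) p q) :=
    L.norm_integral_expMulI_sub_conj_le hE.continuousOn (fun t _ => hne t) n
  calc 2 * Real.pi * ‖F.eval z‖ = ‖I S.loop n - conj (I S.loop (-n))‖ := by
        rw [hneg, sub_zero, hpos]
        simp [abs_of_pos Real.pi_pos]
    _ = ‖(I S.left n - conj (I S.left (-n))) + (I S.right n - conj (I S.right (-n))) +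
          (I S.far n - conj (I S.far (-n)))‖ := by
        rw [hsum, hsum, map_add, map_add]
        congr 1
        ring
    _ ≤ _ + _ + (‖I S.far n‖ + ‖conj (I S.far (-n))‖) :=
        norm_add₃_le.trans (add_le_add (add_le_add (hnear S.left) (hnear S.right))
          (norm_sub_le _ _))
    _ = _ := by rw [RCLike.norm_conj, ← add_assoc]

lemma eventually_norm_faber_le (hε : 0 < ε) {F : ℕ → Polynomial ℂ}
    (hF : ∀ n, Tendsto (fun w => w ^ n - (F n).eval (ψ w)) (Bornology.cobounded ℂ) (𝓝 0)) :
    ∀ᶠ x : ℕ × ℂ in atTop ×ˢ 𝓝 (bdry ψ θ), x.2 ∈ innerDomain ψ →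
      Real.pi * ‖(F x.1).eval x.2‖ ≤ Real.pi + |S.angle - Real.pi| + 7 * ε := by
  have hfar := S.eventually_norm_far_le hψ hε
  have hcast : Tendsto (fun n : ℕ => (n : ℤ)) atTop cofinite :=
    Nat.cofinite_eq_atTop ▸ Nat.cast_injective.tendsto_cofinite
  filter_upwards [(hcast.prodMap tendsto_id).eventually hfar,
    ((neg_injective.tendsto_cofinite.comp hcast).prodMap tendsto_id).eventually hfar,
    (eventually_gt_atTop 0).prod_mk (S.eventually_abs_nearAngle_sub_angle_le hψ hε)]
    with ⟨n, z⟩ hpos hneg ⟨hn, hangle⟩ hz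
  have hnear := S.integral_abs_kernel_le (ne_of_mem_innerDomain hz) (hangle hz)
  have hle := S.norm_faber_le hψ hz hn (hF n)
  simp only [Prod.map, id, Function.comp_apply] at hpos hneg
  linarith

end LocalSplit

lemma tendsto_const_add_nhdsGT_zero (θ : ℝ) : Tendsto (θ + ·) (𝓝[>] 0) (𝓝[>] θ) := by
  rw [← add_zero θ, ← map_add_left_nhdsGT, add_zero]
  exact tendsto_map

lemma tendsto_const_sub_nhdsGT_zero (θ : ℝ) : Tendsto (θ - ·) (𝓝[>] 0) (𝓝[<] θ) :=
  tendsto_nhdsWithin_iff.2 ⟨tendsto_nhdsWithin_of_tendsto_nhds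
    (Continuous.tendsto' (by fun_prop) _ _ (sub_zero θ)),
    eventually_mem_nhdsWithin.mono fun _ => sub_lt_self θ⟩

/-- The direction of the secant of the boundary curve from the point of parameter `θ` to the point
of parameter `t`. -/
def secantDir (ψ : ℂ → ℂ) (θ t : ℝ) : ℂ := (bdry ψ t - bdry ψ θ) / ‖bdry ψ t - bdry ψ θ‖

lemma IsSecantArg.secantDir_eq {ψ : ℂ → ℂ} {θ α : ℝ} {v : ℝ → ℝ} (hv : IsSecantArg ψ θ α v)
    {t : ℝ} (ht : t ∈ Icc α (α + 2 * Real.pi)) (htθ : t ≠ θ) :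
    secantDir ψ θ t = Complex.exp (v t * Complex.I) := by
  have h := hv.branch t ht htθ
  simp only [mul_comm Complex.I, ← expMulI_one] at h ⊢
  exact h.symm

lemma HasExteriorAngleAt.eventually_secantDir {ψ : ℂ → ℂ} {θ lam : ℝ}
    (h : HasExteriorAngleAt ψ θ lam) {δ : ℝ} (hδ : 0 < δ) :
    ∀ᶠ η in 𝓝[>] (0 : ℝ), ∃ x : ℝ, |x - lam * Real.pi| ≤ δ ∧
      secantDir ψ θ (θ + η) / secantDir ψ θ (θ - η) = Complex.exp (x * Complex.I) := by
  obtain ⟨α, v, hv, hleft⟩ := h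
  have hjump : Tendsto (fun η => v (θ + η) - v (θ - η)) (𝓝[>] 0) (𝓝 (lam * Real.pi)) := by
    simpa using (hv.rightCont.tendsto.comp ((tendsto_const_add_nhdsGT_zero θ).mono_right
      (nhdsWithin_mono θ Ioi_subset_Ici_self))).sub
        (hleft.comp (tendsto_const_sub_nhdsGT_zero θ))
  have hroom : 0 < min (θ - α) (α + 2 * Real.pi - θ) :=
    lt_min (sub_pos.2 hv.hα) (sub_pos.2 hv.hθ)
  filter_upwards [hjump.eventually (Metric.closedBall_mem_nhds _ hδ), Ioo_mem_nhdsGT hroom]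
    with η hclose hη
  obtain ⟨hηα, hηβ⟩ := lt_min_iff.1 hη.2
  refine ⟨v (θ + η) - v (θ - η), hclose, ?_⟩
  rw [hv.secantDir_eq ⟨by linarith [hη.1], by linarith⟩ (by linarith [hη.1]),
    hv.secantDir_eq ⟨by linarith, by linarith [hη.1]⟩ (by linarith [hη.1]), ← Complex.exp_sub,
    ← sub_mul, Complex.ofReal_sub]

lemma exp_im_mul_I (z : ℂ) :
    Complex.exp (z.im * Complex.I) = Complex.exp z / ‖Complex.exp z‖ := by
  rw [Complex.norm_exp, Complex.ofReal_exp, ← Complex.exp_sub,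
    eq_sub_of_add_eq' (Complex.re_add_im z)]

lemma abs_sub_pi_le {x y ε : ℝ} (hxy : Complex.exp (x * Complex.I) = Complex.exp (y * Complex.I))
    (hε : 0 ≤ ε) (hx₀ : -ε ≤ x) (hx₁ : x ≤ 2 * Real.pi + ε) :
    |x - Real.pi| ≤ |y - Real.pi| + 2 * ε := by
  obtain ⟨m, hm⟩ := Complex.exp_eq_exp_iff_exists_int.1 hxy
  have hm : x = y + m * (2 * Real.pi) := by simpa using congrArg Complex.im hm
  have hpi := Real.pi_pos
  have hy₁ := le_abs_self (y - Real.pi)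
  have hy₂ := neg_abs_le (y - Real.pi)
  rw [abs_le]
  rcases lt_trichotomy m 0 with h | rfl | h
  · have : (m : ℝ) ≤ -1 := by exact_mod_cast Int.le_sub_one_of_lt h
    have : 2 * Real.pi - ε ≤ y := by nlinarith
    constructor <;> linarith
  · simp only [Int.cast_zero, zero_mul, add_zero] at hm
    constructor <;> linarith
  · have : (1 : ℝ) ≤ m := by exact_mod_cast h
    have : y ≤ ε := by nlinarith
    constructor <;> linarith

lemma IsDiniLoop.eventually_nonempty_localSplit {ψ : ℂ → ℂ} (hE : IsDiniLoop (bdry ψ)) (θ : ℝ)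
    {ε : ℝ} (hε : 0 < ε) : ∀ᶠ η in 𝓝[>] (0 : ℝ), Nonempty (LocalSplit ψ θ η ε) := by
  have hleft := (tendsto_const_sub_nhdsGT_zero θ).eventually (hE.eventually_small_left θ hε)
  have hright := (tendsto_const_add_nhdsGT_zero θ).eventually (hE.eventually_small_right θ hε)
  filter_upwards [hleft, hright, Ioo_mem_nhdsGT Real.pi_pos] with η ⟨L, hL⟩ ⟨R, hR⟩ hη
  obtain ⟨K⟩ := hE.nonempty_lineElement
    (show θ + η < θ - η + 2 * Real.pi by linarith [hη.2])
  exact ⟨⟨hη.1, hη.2, L, R, K, hL, hR⟩⟩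

lemma LocalSplit.exp_angle_mul_I {ψ : ℂ → ℂ} {θ η ε : ℝ} (S : LocalSplit ψ θ η ε)
    (hψ : IsExtMap ψ) :
    Complex.exp (S.angle * Complex.I) = secantDir ψ θ (θ + η) / secantDir ψ θ (θ - η) := by
  have hfar := S.far.exp_integral_inv_sub S.far_lt hψ.continuous_bdry
    fun _ => S.ne_of_mem_far hψ
  have hexp := exp_im_mul_I (S.far.integral fun t => (bdry ψ t - bdry ψ θ)⁻¹)
  rw [hfar, norm_div, Complex.ofReal_div, div_div_div_comm, periodic_bdry ψ (θ - η)] at hexp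
  rw [angle, Complex.ofReal_sub, sub_mul, Complex.exp_sub, hexp]
  simp [secantDir, Complex.exp_two_pi_mul_I]

section Faber

variable {ψ : ℂ → ℂ}

lemma HasExteriorAngleAt.exists_localSplit (hψ : IsExtMap ψ) (hE : IsDiniLoop (bdry ψ))
    {θ lam ε : ℝ} (hang : HasExteriorAngleAt ψ θ lam) (hε : 0 < ε) :
    ∃ η, ∃ S : LocalSplit ψ θ η ε,
      |S.angle - Real.pi| ≤ |lam * Real.pi - Real.pi| + 7 * ε := by
  obtain ⟨η, ⟨S⟩, x, hx, hsec⟩ :=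
    ((hE.eventually_nonempty_localSplit θ hε).and (hang.eventually_secantDir hε)).exists
  have hangle := abs_sub_pi_le ((S.exp_angle_mul_I hψ).trans hsec) (by positivity : 0 ≤ 3 * ε)
    (S.neg_le_angle hψ hε) (S.angle_le hψ hε)
  have htri := abs_sub_le x (lam * Real.pi) Real.pi
  exact ⟨η, S, by linarith⟩

variable {F : ℕ → Polynomial ℂ}
  (hF : ∀ n, Tendsto (fun w => w ^ n - (F n).eval (ψ w)) (Bornology.cobounded ℂ) (𝓝 0))

include hF

lemma HasExteriorAngleAt.eventually_norm_faber_le_of_mem_innerDomain (hψ : IsExtMap ψ)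
    (hE : IsDiniLoop (bdry ψ)) {θ lam ε : ℝ} (hang : HasExteriorAngleAt ψ θ lam) (hε : 0 < ε) :
    ∀ᶠ x : ℕ × ℂ in atTop ×ˢ 𝓝 (bdry ψ θ), x.2 ∈ innerDomain ψ →
      ‖(F x.1).eval x.2‖ ≤ max lam (2 - lam) + ε := by
  have hδ : 0 < ε / 14 := by positivity
  obtain ⟨η, S, hS⟩ := hang.exists_localSplit hψ hE hδ
  filter_upwards [S.eventually_norm_faber_le hψ hδ hF] with x hx hin
  have hle := hx hin
  have hlam : |lam * Real.pi - Real.pi| = (max lam (2 - lam) - 1) * Real.pi := by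
    rw [← sub_one_mul, abs_mul, abs_of_pos Real.pi_pos, ← max_sub_sub_right]
    rw [show 2 - lam - 1 = -(lam - 1) by ring, ← abs_eq_max_neg]
  refine le_of_mul_le_mul_left ?_ Real.pi_pos
  nlinarith [Real.pi_gt_three]

lemma HasExteriorAngleAt.eventually_norm_faber_le_of_mem_range (hψ : IsExtMap ψ)
    (hE : IsDiniLoop (bdry ψ)) {θ lam ε : ℝ} (hang : HasExteriorAngleAt ψ θ lam) (hε : 0 < ε) :
    ∀ᶠ x : ℕ × ℂ in atTop ×ˢ 𝓝 (bdry ψ θ), x.2 ∈ range (bdry ψ) →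
      ‖(F x.1).eval x.2‖ ≤ max lam (2 - lam) + ε := by
  obtain ⟨pn, hpn, pz, hpz, hle⟩ := eventually_prod_iff.1
    (hang.eventually_norm_faber_le_of_mem_innerDomain hF hψ hE hε)
  filter_upwards [hpn.prod_mk (eventually_eventually_nhds.2 hpz)]
  rintro ⟨n, _⟩ ⟨hn, hz⟩ ⟨t, rfl⟩
  have hclosed : IsClosed {z | ‖(F n).eval z‖ ≤ max lam (2 - lam) + ε} :=
    isClosed_le (F n).continuous.norm continuous_const
  have hfreq := mem_closure_iff_frequently.1 (hψ.mem_closure_innerDomain (norm_expMulI 1 t))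
  exact hclosed.closure_subset (mem_closure_iff_frequently.2
    ((hfreq.and_eventually hz).mono fun z hz => hle hn hz.2 hz.1))

lemma IsDiniLoop.eventually_supNorm_faber_le (hψ : IsExtMap ψ) (hE : IsDiniLoop (bdry ψ)) {M ε : ℝ}
    (hang : ∀ t, ∃ θ lam, bdry ψ θ = bdry ψ t ∧ HasExteriorAngleAt ψ θ lam ∧
      max lam (2 - lam) ≤ M) (hε : 0 < ε) :
    ∀ᶠ n in atTop, supNorm (range (bdry ψ)) (fun z => (F n).eval z) ≤ M + ε := by
  have hcompact : IsCompact (range (bdry ψ)) := by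
    rw [← hE.per.image_Icc Real.two_pi_pos 0]
    exact isCompact_Icc.image hE.cont
  have hlocal : ∀ z ∈ range (bdry ψ), ∀ᶠ x : ℕ × ℂ in atTop ×ˢ 𝓝 z,
      x.2 ∈ range (bdry ψ) → ‖(F x.1).eval x.2‖ ≤ M + ε := by
    rintro _ ⟨t, rfl⟩
    obtain ⟨θ, lam, hθ, hlam, hle⟩ := hang t
    rw [← hθ]
    exact (hlam.eventually_norm_faber_le_of_mem_range hF hψ hE hε).mono fun x hx hxr =>
      (hx hxr).trans (by gcongr)
  have hglobal := prod_mono_right _ principal_le_nhdsSet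
    (hcompact.mem_prod_nhdsSet_of_forall hlocal)
  filter_upwards [eventually_prod_principal_iff.1 hglobal] with n hn
  exact csSup_le ((range_nonempty _).image _) (forall_mem_image.2 fun z hz => hn z hz hz)

end Faber

lemma IsFaberPoly.tendsto_cobounded {Γ : Set ℂ} {φ ψ : ℂ → ℂ} {c : ℝ} {n : ℕ} {F : Polynomial ℂ}
    (hF : IsFaberPoly Γ φ n F) (hΓ : Bornology.IsBounded Γ) (hφ : IsExteriorMap Γ φ c)
    (hψ : IsExteriorParam Γ φ ψ) :
    Tendsto (fun w => w ^ n - F.eval (ψ w)) (Bornology.cobounded ℂ) (𝓝 0) := by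
  rw [IsFaberPoly, inf_eq_left.2 (le_principal_iff.2 (exteriorDomain_mem_cobounded hΓ))] at hF
  refine (hF.comp (hψ.tendsto_cobounded hΓ hφ)).congr' ?_
  filter_upwards [eventually_lt_norm 1] with w hw
  simp only [Function.comp_apply, (hψ.inv w hw).2]

lemma IsExteriorParam.range_bdry {Γ : Set ℂ} {φ ψ : ℂ → ℂ} (hψ : IsExteriorParam Γ φ ψ) :
    range (bdry ψ) = Γ := by
  refine Subset.antisymm (range_subset_iff.2 fun t => hψ.boundary _ (norm_expMulI 1 t)) ?_
  intro z hz
  obtain ⟨w, hw, rfl⟩ := hψ.boundary_surj z hz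
  have harg := Complex.norm_mul_exp_arg_mul_I w
  rw [hw, Complex.ofReal_one, one_mul, ← expMulI_one] at harg
  exact ⟨w.arg, congrArg ψ harg⟩

lemma exists_hasExteriorAngleAt_le_iSup {ψ : ℂ → ℂ} {l : ℕ} (hl : 0 < l) {θk : Fin l → ℝ}
    {lam : Fin l → ℝ} (hangle : ∀ k, HasExteriorAngleAt ψ (θk k) (lam k))
    (hflat : ∀ θ : ℝ, θ ∉ cornerSet θk → HasExteriorAngleAt ψ θ 1) (t : ℝ) :
    ∃ θ ν, bdry ψ θ = bdry ψ t ∧ HasExteriorAngleAt ψ θ ν ∧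
      max ν (2 - ν) ≤ ⨆ k, max (lam k) (2 - lam k) := by
  have hle (k : Fin l) : max (lam k) (2 - lam k) ≤ ⨆ k, max (lam k) (2 - lam k) :=
    le_ciSup (finite_range fun k => max (lam k) (2 - lam k)).bddAbove k
  by_cases ht : t ∈ cornerSet θk
  · obtain ⟨k, j, rfl⟩ := ht
    exact ⟨θk k, lam k, ((periodic_bdry ψ).int_mul j (θk k)).symm, hangle k, hle k⟩
  · refine ⟨t, 1, rfl, hflat t ht, le_trans ?_ (hle ⟨0, hl⟩)⟩
    have h₁ := le_max_left (lam ⟨0, hl⟩) (2 - lam ⟨0, hl⟩)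
    have h₂ := le_max_right (lam ⟨0, hl⟩) (2 - lam ⟨0, hl⟩)
    exact max_le (by linarith) (by linarith)

/-- If `Γ` is a piecewise Dini-smooth Jordan curve with `l ≥ 1` corners
`z_k = ψ(e^{iθ_k})` of exterior angles `λ_k π` (and exterior angle `π` at every other point),
and `Λ_k = max {λ_k, 2 − λ_k}`, then `limsup_{n→∞} ‖F_n‖_Γ ≤ max_k Λ_k`, where `F_n` is the
`n`-th Faber polynomial of `Γ`. -/
theorem faber_limsup_le_maxAngle
    (Γ : Set ℂ) (φ ψ : ℂ → ℂ) (c : ℝ) (l : ℕ) (hl : 0 < l)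
    (θk : Fin l → ℝ) (zk : Fin l → ℂ) (lam : Fin l → ℝ) (F : ℕ → Polynomial ℂ)
    (hΓ : IsPiecewiseDiniSmoothJordanCurve Γ)
    (hφ : IsExteriorMap Γ φ c)
    (hψ : IsExteriorParam Γ φ ψ)
    (hθ : ∀ k, θk k ∈ Set.Ico (0 : ℝ) (2 * Real.pi))
    (hθinj : Function.Injective θk)
    (hzk : ∀ k, zk k = ψ (Complex.exp (Complex.I * (θk k : ℂ))))
    (hlam : ∀ k, lam k ∈ Set.Icc (0 : ℝ) 2)
    (hangle : ∀ k, HasExteriorAngleAt ψ (θk k) (lam k))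
    (hflat : ∀ θ : ℝ, θ ∉ cornerSet θk → HasExteriorAngleAt ψ θ 1)
    (hF : ∀ n : ℕ, IsFaberPoly Γ φ n (F n)) :
    Filter.limsup (fun n : ℕ => supNorm Γ (fun z => (F n).eval z)) Filter.atTop
      ≤ ⨆ k : Fin l, max (lam k) (2 - lam k) := by
  have hmap := hψ.isExtMap hΓ.1.isCompact hφ
  have hdini : IsDiniLoop (bdry ψ) := ⟨hmap.isLoop, hψ.range_bdry ▸ hΓ.2⟩
  have hfaber (n : ℕ) := (hF n).tendsto_cobounded hΓ.1.isCompact.isBounded hφ hψ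
  refine le_of_forall_pos_le_add fun ε hε => limsup_le_of_le ?_ ?_
  · exact isCoboundedUnder_le_of_le atTop fun n =>
      Real.sSup_nonneg (forall_mem_image.2 fun z _ => norm_nonneg _)
  · have hbound := hdini.eventually_supNorm_faber_le hfaber hmap
      (exists_hasExteriorAngleAt_le_iSup hl hangle hflat) hε
    rwa [hψ.range_bdry] at hbound

end
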